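/- Every proper gradient map f : ℝ² → ℝ² with Brouwer degree deg f = 1 is proper gradient homotopic to the identity map id_{ℝ²} or to the minus identity map −id_{ℝ²}; in particular, the set of proper gradient homotopy classes of proper gradient maps of degree 1 on ℝ² has at most two elements. -/

import Mathlib

open Set Metric Filter

noncomputable section

/-- Euclidean space `ℝⁿ`. -/
abbrev Euc (n : ℕ) := EuclideanSpace ℝ (Fin n)

/-- A map `f : ℝⁿ → ℝⁿ` is gradient if it is the gradient of a `C¹` function `φ : ℝⁿ → ℝ`. -/
def IsGradient {n : ℕ} (f : Euc n → Euc n) : Prop :=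
  ∃ φ : Euc n → ℝ, ContDiff ℝ 1 φ ∧ ∀ x, gradient φ x = f x

/-- A map is proper if preimages of compact sets are compact (our maps are continuous anyway). -/
def IsProper {n : ℕ} (f : Euc n → Euc n) : Prop :=
  ∀ K : Set (Euc n), IsCompact K → IsCompact (f ⁻¹' K)

/-- `h : [0,1] × ℝⁿ → ℝⁿ` is a gradient homotopy: it is continuous, each `h t` is a
gradient map, and the zero set `h⁻¹(0)` (within `[0,1] × ℝⁿ`) is compact. -/
def IsGradientHomotopy {n : ℕ} (h : ℝ → Euc n → Euc n) : Prop :=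
  ContinuousOn (fun p : ℝ × Euc n => h p.1 p.2) (Icc 0 1 ×ˢ univ) ∧
  (∀ t ∈ Icc (0:ℝ) 1, IsGradient (h t)) ∧
  IsCompact {p : ℝ × Euc n | p.1 ∈ Icc (0:ℝ) 1 ∧ h p.1 p.2 = 0}

/-- Two maps are gradient homotopic if some gradient homotopy connects them. -/
def GradientHomotopic {n : ℕ} (f g : Euc n → Euc n) : Prop :=
  ∃ h : ℝ → Euc n → Euc n, IsGradientHomotopy h ∧ h 0 = f ∧ h 1 = g

/-- `h : [0,1] × ℝⁿ → ℝⁿ` is a proper gradient homotopy: it is continuous, each `h t` is a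
gradient map, and `h` is proper as a map on `[0,1] × ℝⁿ`. -/
def IsProperGradientHomotopy {n : ℕ} (h : ℝ → Euc n → Euc n) : Prop :=
  ContinuousOn (fun p : ℝ × Euc n => h p.1 p.2) (Icc 0 1 ×ˢ univ) ∧
  (∀ t ∈ Icc (0:ℝ) 1, IsGradient (h t)) ∧
  (∀ K : Set (Euc n), IsCompact K →
    IsCompact {p : ℝ × Euc n | p.1 ∈ Icc (0:ℝ) 1 ∧ h p.1 p.2 ∈ K})

/-- Two maps are proper gradient homotopic if some proper gradient homotopy connects them. -/
def ProperGradientHomotopic {n : ℕ} (f g : Euc n → Euc n) : Prop :=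
  ∃ h : ℝ → Euc n → Euc n, IsProperGradientHomotopy h ∧ h 0 = f ∧ h 1 = g
/-- A Brouwer degree theory on `ℝⁿ`: an integer-valued function `deg f Ω`, defined for
continuous maps nonvanishing on `∂Ω`, satisfying the classical axioms of normalization,
additivity and homotopy invariance, which determine it uniquely. -/
structure DegreeTheory (n : ℕ) where
  deg : (Euc n → Euc n) → Set (Euc n) → ℤ
  normalized : ∀ Ω : Set (Euc n), IsOpen Ω → Bornology.IsBounded Ω → (0 : Euc n) ∈ Ω →
    deg id Ω = 1
  additive : ∀ (f : Euc n → Euc n) (Ω Ω₁ Ω₂ : Set (Euc n)),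
    IsOpen Ω → Bornology.IsBounded Ω → IsOpen Ω₁ → IsOpen Ω₂ →
    Ω₁ ⊆ Ω → Ω₂ ⊆ Ω → Disjoint Ω₁ Ω₂ →
    ContinuousOn f (closure Ω) →
    (∀ x ∈ closure Ω \ (Ω₁ ∪ Ω₂), f x ≠ 0) →
    deg f Ω = deg f Ω₁ + deg f Ω₂
  homotopyInv : ∀ (h : ℝ → Euc n → Euc n) (Ω : Set (Euc n)),
    IsOpen Ω → Bornology.IsBounded Ω →
    ContinuousOn (fun p : ℝ × Euc n => h p.1 p.2) (Icc 0 1 ×ˢ closure Ω) →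
    (∀ t ∈ Icc (0:ℝ) 1, ∀ x ∈ frontier Ω, h t x ≠ 0) →
    deg (h 0) Ω = deg (h 1) Ω

/-- `f` has Brouwer degree `k`: `deg f` computed on any ball containing `f⁻¹(0)` equals `k`. -/
def HasDeg {n : ℕ} (D : DegreeTheory n) (f : Euc n → Euc n) (k : ℤ) : Prop :=
  ∀ R : ℝ, 0 < R → f ⁻¹' {0} ⊆ ball 0 R → D.deg f (ball 0 R) = k

open scoped NNReal Topology

/-!
Identify `ℝ²` with `ℂ` and suppose first that `f = ∇φ` is `C¹`. Put `r = √(1 + |x|²)` and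
`u = G (r + φ) + G (r - φ) - 2 G r` for a convex function `G` that vanishes up to a large argument
and then grows fast enough to make `u` subharmonic. The metric `e ^ (2 u) |dx|²` is then
nonpositively curved and flat near `0`, so its exponential map at `0` is a homeomorphism of `ℂ`, and
the distance `ρ` to `0` has a continuous radial field `V = ∇(ρ² / 2)`. Since the metric grows with
`|φ|`, geodesics from `0` avoid large values of `|φ|`: far out, `f` is never nearly antiparallel to
`V` where `φ ≥ 0` and never nearly parallel to `V` where `φ ≤ 0`. Degree one then forces `φ` to have
a constant sign near infinity, so a straight line joins `f` to `V` or to `-V`, and `V (t x) / t`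
joins `V` to the identity. A merely continuous `f` is at bounded distance from a `C¹` gradient map.
-/

section ODE

variable {X : Type*} [NormedAddCommGroup X] [NormedSpace ℝ X]

lemma gronwallBound_le_mul_exp {δ K ε t : ℝ} (hδ : 0 ≤ δ) (hK : 1 ≤ K) (hε : 0 ≤ ε) (ht : t ≤ 1) :
    gronwallBound δ K ε t ≤ (δ + ε) * Real.exp K := by
  have hdiv : ε / K ≤ ε := div_le_self hε hK
  calc gronwallBound δ K ε t ≤ gronwallBound δ K ε 1 :=
        gronwallBound_mono hδ hε (zero_le_one.trans hK) ht
    _ = δ * Real.exp K + ε / K * (Real.exp K - 1) := by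
        simp only [gronwallBound_of_K_ne_0 (zero_lt_one.trans_le hK).ne', mul_one]
    _ ≤ δ * Real.exp K + ε * Real.exp K := by
        exact add_le_add le_rfl (mul_le_mul hdiv (sub_le_self _ zero_le_one)
          (sub_nonneg.2 (Real.one_le_exp (zero_le_one.trans hK))) hε)
    _ = (δ + ε) * Real.exp K := by ring

lemma dist_le_mul_exp_of_approx_trajectories {v : ℝ → X → X} {K : ℝ≥0} (hK : 1 ≤ K)
    (hv : ∀ t, LipschitzWith K (v t)) {f g f' g' : ℝ → X} {δ εf εg : ℝ}
    (hf : ∀ t ∈ Icc (0 : ℝ) 1, HasDerivAt f (f' t) t)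
    (hfv : ∀ t ∈ Icc (0 : ℝ) 1, dist (f' t) (v t (f t)) ≤ εf)
    (hg : ∀ t ∈ Icc (0 : ℝ) 1, HasDerivAt g (g' t) t)
    (hgv : ∀ t ∈ Icc (0 : ℝ) 1, dist (g' t) (v t (g t)) ≤ εg) (h0 : dist (f 0) (g 0) ≤ δ)
    {t : ℝ} (ht : t ∈ Icc (0 : ℝ) 1) :
    dist (f t) (g t) ≤ (δ + (εf + εg)) * Real.exp K := by
  have hε : 0 ≤ εf + εg := by
    have h0 : (0 : ℝ) ∈ Icc (0 : ℝ) 1 := left_mem_Icc.2 zero_le_one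
    exact add_nonneg (dist_nonneg.trans (hfv 0 h0)) (dist_nonneg.trans (hgv 0 h0))
  refine (dist_le_of_approx_trajectories_ODE hv
    (fun s hs ↦ (hf s hs).continuousAt.continuousWithinAt)
    (fun s hs ↦ (hf s (Ico_subset_Icc_self hs)).hasDerivWithinAt)
    (fun s hs ↦ hfv s (Ico_subset_Icc_self hs))
    (fun s hs ↦ (hg s hs).continuousAt.continuousWithinAt)
    (fun s hs ↦ (hg s (Ico_subset_Icc_self hs)).hasDerivWithinAt)
    (fun s hs ↦ hgv s (Ico_subset_Icc_self hs)) h0 t ht).trans ?_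
  exact gronwallBound_le_mul_exp (dist_nonneg.trans h0) (by exact_mod_cast hK) hε
    (by linarith [ht.2])

lemma exists_forall_mem_Icc_hasDerivAt_of_bounded [CompleteSpace X] {v : ℝ → X → X} {K L : ℝ≥0}
    (hK : ∀ t, LipschitzWith K (v t)) (hc : ∀ x, Continuous fun t ↦ v t x)
    (hL : ∀ t x, ‖v t x‖ ≤ L) (x₀ : X) :
    ∃ y : ℝ → X, y 0 = x₀ ∧ ∀ t ∈ Icc (0 : ℝ) 1, HasDerivAt y (v t (y t)) t := by
  have h0 : (0 : ℝ) ∈ Icc (-1 : ℝ) 2 := by constructor <;> norm_num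
  have hp : IsPicardLindelof v (tmin := -1) (tmax := 2) ⟨0, h0⟩ x₀ (L * 2) 0 L K :=
    { lipschitzOnWith := fun t _ ↦ (hK t).lipschitzOnWith
      continuousOn := fun x _ ↦ (hc x).continuousOn
      norm_le := fun t _ x _ ↦ hL t x
      mul_max_le := by
        have hmax : max ((2 : ℝ) - 0) (0 - (-1)) = 2 := by norm_num
        rw [hmax, NNReal.coe_mul, NNReal.coe_ofNat, NNReal.coe_zero, sub_zero] }
  obtain ⟨y, hy0, hy⟩ := hp.exists_eq_forall_mem_Icc_hasDerivWithinAt₀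
  refine ⟨y, hy0, fun t ht ↦ ?_⟩
  exact (hy t ⟨by linarith [ht.1], by linarith [ht.2]⟩).hasDerivAt
    (Icc_mem_nhds (by linarith [ht.1]) (by linarith [ht.2]))

lemma lipschitzWith_comp_of_norm_le {A : X →L[ℝ] X} {C K : ℝ≥0} (hA : ‖A‖ ≤ C)
    {w : (X →L[ℝ] X) → X →L[ℝ] X} (hw : LipschitzWith K w) :
    LipschitzWith (C * K) fun N ↦ A ∘L w N := by
  refine LipschitzWith.of_dist_le_mul fun N N' ↦ ?_
  have hdist := hw.dist_le_mul N N'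
  rw [dist_eq_norm] at hdist
  rw [dist_eq_norm, ← ContinuousLinearMap.comp_sub, NNReal.coe_mul, mul_assoc]
  exact (ContinuousLinearMap.opNorm_comp_le _ _).trans
    (mul_le_mul hA hdist (norm_nonneg _) C.2)

lemma norm_le_exp_of_norm_deriv_le {y y' : ℝ → X} {C : ℝ} (hC : 0 ≤ C) (h0 : ‖y 0‖ ≤ 1)
    (hy : ∀ t ∈ Icc (0 : ℝ) 1, HasDerivAt y (y' t) t)
    (hbound : ∀ t ∈ Icc (0 : ℝ) 1, ‖y' t‖ ≤ C * ‖y t‖) {t : ℝ} (ht : t ∈ Icc (0 : ℝ) 1) :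
    ‖y t‖ ≤ Real.exp C := by
  have hgronwall := norm_le_gronwallBound_of_norm_deriv_right_le (ε := 0)
    (fun s hs ↦ (hy s hs).continuousAt.continuousWithinAt)
    (fun s hs ↦ (hy s (Ico_subset_Icc_self hs)).hasDerivWithinAt) h0
    (fun s hs ↦ by simpa only [add_zero] using hbound s (Ico_subset_Icc_self hs)) t ht
  rw [gronwallBound_ε0, one_mul, sub_zero] at hgronwall
  exact hgronwall.trans (Real.exp_le_exp.2 (mul_le_of_le_one_right hC ht.2))

/-- The linear field is truncated outside a ball which its solutions cannot leave. -/
lemma exists_forall_mem_Icc_hasDerivAt_comp [FiniteDimensional ℝ X] {A : ℝ → X →L[ℝ] X}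
    (hA : Continuous A) {C : ℝ≥0} (hC : ∀ t, ‖A t‖ ≤ C) :
    ∃ L : ℝ → X →L[ℝ] X, L 0 = ContinuousLinearMap.id ℝ X ∧
      ∀ t ∈ Icc (0 : ℝ) 1, HasDerivAt L (A t ∘L L t) t := by
  let χ : ContDiffBump (0 : X →L[ℝ] X) :=
    ⟨Real.exp C, Real.exp C + 1, Real.exp_pos _, lt_add_one _⟩
  let w : (X →L[ℝ] X) → X →L[ℝ] X := fun N ↦ χ N • N
  have hwc : ContDiff ℝ 1 w := χ.contDiff.smul contDiff_id
  have hws : HasCompactSupport w := χ.hasCompactSupport.smul_right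
  obtain ⟨K, hK⟩ := hwc.lipschitzWith_of_hasCompactSupport hws one_ne_zero
  obtain ⟨B, hB⟩ := hws.exists_bound_of_continuous hwc.continuous
  have hw_le (N : X →L[ℝ] X) : ‖w N‖ ≤ ‖N‖ := by
    rw [norm_smul, Real.norm_eq_abs, abs_of_nonneg χ.nonneg]
    exact mul_le_of_le_one_left (norm_nonneg _) χ.le_one
  have hcomp_le (t : ℝ) {N : X →L[ℝ] X} {b : ℝ} (hN : ‖w N‖ ≤ b) : ‖A t ∘L w N‖ ≤ C * b :=
    (ContinuousLinearMap.opNorm_comp_le _ _).trans (mul_le_mul (hC t) hN (norm_nonneg _) C.2)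
  obtain ⟨L, hL0, hL⟩ := exists_forall_mem_Icc_hasDerivAt_of_bounded
    (v := fun t N ↦ A t ∘L w N) (L := C * B.toNNReal)
    (fun t ↦ lipschitzWith_comp_of_norm_le (hC t) hK) (fun N ↦ hA.clm_comp continuous_const)
    (fun t N ↦ hcomp_le t ((hB N).trans (Real.le_coe_toNNReal B))) (ContinuousLinearMap.id ℝ X)
  refine ⟨L, hL0, fun t ht ↦ ?_⟩
  have hbound : ‖L t‖ ≤ Real.exp C := norm_le_exp_of_norm_deriv_le C.2
    (hL0 ▸ ContinuousLinearMap.norm_id_le) hL (fun s _ ↦ hcomp_le s (hw_le _)) ht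
  have hχ : χ (L t) = 1 := χ.one_of_mem_closedBall (by simpa [χ] using hbound)
  simpa only [w, hχ, one_smul] using hL t ht

/-- `Φ a` is the trajectory of the vector field `F` starting at `a`, for times in `[0, 1]`, and
`L a` solves the linearization of the equation along it, starting at the identity. -/
structure IsLinearizedFlow (F : X → X) (Φ : X → ℝ → X) (L : X → ℝ → X →L[ℝ] X) : Prop where
  flow_zero : ∀ a, Φ a 0 = a
  hasDerivAt_flow : ∀ a, ∀ t ∈ Icc (0 : ℝ) 1, HasDerivAt (Φ a) (F (Φ a t)) t
  tangent_zero : ∀ a, L a 0 = ContinuousLinearMap.id ℝ X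
  hasDerivAt_tangent :
    ∀ a, ∀ t ∈ Icc (0 : ℝ) 1, HasDerivAt (L a) (fderiv ℝ F (Φ a t) ∘L L a t) t

lemma exists_isLinearizedFlow [FiniteDimensional ℝ X] {F : X → X} (hF : ContDiff ℝ 1 F)
    (hs : HasCompactSupport F) : ∃ Φ L, IsLinearizedFlow F Φ L := by
  obtain ⟨K, hK⟩ := hF.lipschitzWith_of_hasCompactSupport hs one_ne_zero
  obtain ⟨B, hB⟩ := hs.exists_bound_of_continuous hF.continuous
  choose Φ hΦ0 hΦ using exists_forall_mem_Icc_hasDerivAt_of_bounded (v := fun _ ↦ F)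
    (L := B.toNNReal) (fun _ ↦ hK) (fun _ ↦ continuous_const)
    (fun _ x ↦ (hB x).trans (Real.le_coe_toNNReal B))
  have hΦc (a : X) : Continuous fun t ↦ Φ a (projIcc (0 : ℝ) 1 zero_le_one t) :=
    (continuousOn_iff_continuous_domRestrict.1
      fun t ht ↦ (hΦ a t ht).continuousAt.continuousWithinAt).comp continuous_projIcc
  choose L hL0 hL using fun a ↦ exists_forall_mem_Icc_hasDerivAt_comp
    ((hF.continuous_fderiv one_ne_zero).comp (hΦc a))
    (fun _ ↦ norm_fderiv_le_of_lipschitz ℝ hK)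
  refine ⟨Φ, L, hΦ0, hΦ, hL0, fun a t ht ↦ ?_⟩
  simpa only [Function.comp_apply, projIcc_of_mem zero_le_one ht] using hL a t ht

lemma exists_norm_sub_sub_fderiv_le {F : X → X} (hF : Differentiable ℝ F)
    (hu : UniformContinuous (fderiv ℝ F)) {ε : ℝ} (hε : 0 < ε) :
    ∃ δ > 0, ∀ a b, ‖b - a‖ ≤ δ → ‖F b - F a - fderiv ℝ F a (b - a)‖ ≤ ε * ‖b - a‖ := by
  obtain ⟨δ, hδ, h⟩ := Metric.uniformContinuous_iff.1 hu ε hε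
  refine ⟨δ / 2, half_pos hδ, fun a b hab ↦ ?_⟩
  refine (convex_closedBall a (δ / 2)).norm_image_sub_le_of_norm_hasFDerivWithin_le'
    (fun x _ ↦ (hF x).hasFDerivAt.hasFDerivWithinAt) (fun x hx ↦ ?_)
    (mem_closedBall_self (half_pos hδ).le) (mem_closedBall_iff_norm.2 hab)
  rw [← dist_eq_norm]
  exact (h ((mem_closedBall.1 hx).trans_lt (half_lt_self hδ))).le

namespace IsLinearizedFlow

variable {F : X → X} {Φ : X → ℝ → X} {L : X → ℝ → X →L[ℝ] X} {K : ℝ≥0}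

lemma norm_tangent_le (h : IsLinearizedFlow F Φ L) (hK : LipschitzWith K F) (a : X) {t : ℝ}
    (ht : t ∈ Icc (0 : ℝ) 1) : ‖L a t‖ ≤ Real.exp K :=
  norm_le_exp_of_norm_deriv_le K.2 (h.tangent_zero a ▸ ContinuousLinearMap.norm_id_le)
    (h.hasDerivAt_tangent a) (fun _ _ ↦ (ContinuousLinearMap.opNorm_comp_le _ _).trans
      (mul_le_mul_of_nonneg_right (norm_fderiv_le_of_lipschitz ℝ hK) (norm_nonneg _))) ht

lemma dist_flow_le (h : IsLinearizedFlow F Φ L) (hK1 : 1 ≤ K) (hK : LipschitzWith K F) (a b : X)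
    {t : ℝ} (ht : t ∈ Icc (0 : ℝ) 1) : dist (Φ a t) (Φ b t) ≤ Real.exp K * dist a b := by
  have hdist := dist_le_mul_exp_of_approx_trajectories (v := fun _ ↦ F) hK1 (fun _ ↦ hK)
    (h.hasDerivAt_flow a) (fun _ _ ↦ (dist_self _).le) (h.hasDerivAt_flow b)
    (fun _ _ ↦ (dist_self _).le) (δ := dist a b) (by rw [h.flow_zero, h.flow_zero]) ht
  linarith

/-- The affine approximation `Φ a t + L a t (b - a)` is an approximate trajectory. -/
lemma hasFDerivAt_flow (h : IsLinearizedFlow F Φ L) (hK1 : 1 ≤ K) (hK : LipschitzWith K F)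
    (hF : Differentiable ℝ F) (hu : UniformContinuous (fderiv ℝ F)) (a : X) {t : ℝ}
    (ht : t ∈ Icc (0 : ℝ) 1) : HasFDerivAt (fun b ↦ Φ b t) (L a t) a := by
  rw [hasFDerivAt_iff_isLittleO, Asymptotics.isLittleO_iff]
  intro c hc
  set M := Real.exp K with hM
  have hM0 : 0 < M := Real.exp_pos _
  obtain ⟨δ, hδ, happrox⟩ := exists_norm_sub_sub_fderiv_le hF hu (ε := c / (M * M)) (by positivity)
  filter_upwards [Metric.ball_mem_nhds a (div_pos hδ hM0)] with b hb
  have hb' : M * ‖b - a‖ ≤ δ := by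
    rw [mem_ball, dist_eq_norm, lt_div_iff₀ hM0] at hb
    linarith
  have hL (s : ℝ) (hs : s ∈ Icc (0 : ℝ) 1) : ‖L a s (b - a)‖ ≤ M * ‖b - a‖ :=
    (L a s).le_of_opNorm_le (h.norm_tangent_le hK a hs) _
  have hderiv (s : ℝ) (hs : s ∈ Icc (0 : ℝ) 1) : HasDerivAt (fun s ↦ Φ a s + L a s (b - a))
      (F (Φ a s) + fderiv ℝ F (Φ a s) (L a s (b - a))) s :=
    (h.hasDerivAt_flow a s hs).add
      (((h.hasDerivAt_tangent a s hs).clm_apply (hasDerivAt_const s (b - a))).congr_deriv (by simp))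
  have hfield (s : ℝ) (hs : s ∈ Icc (0 : ℝ) 1) :
      dist (F (Φ a s) + fderiv ℝ F (Φ a s) (L a s (b - a))) (F (Φ a s + L a s (b - a)))
        ≤ c / (M * M) * (M * ‖b - a‖) := by
    have h2 := happrox (Φ a s) (Φ a s + L a s (b - a))
      (by rw [add_sub_cancel_left]; exact (hL s hs).trans hb')
    rw [add_sub_cancel_left, sub_sub] at h2
    rw [dist_comm, dist_eq_norm]
    exact h2.trans (by gcongr; exact hL s hs)
  have hdist := dist_le_mul_exp_of_approx_trajectories (v := fun _ ↦ F) hK1 (fun _ ↦ hK)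
    (h.hasDerivAt_flow b) (fun _ _ ↦ (dist_self _).le) hderiv hfield (δ := 0)
    (by simp [h.flow_zero, h.tangent_zero]) ht
  rw [dist_eq_norm, ← hM] at hdist
  calc ‖Φ b t - Φ a t - L a t (b - a)‖ ≤ (0 + (0 + c / (M * M) * (M * ‖b - a‖))) * M := by
        rwa [sub_sub]
    _ = c * ‖b - a‖ := by field_simp; ring

lemma continuous_tangent (h : IsLinearizedFlow F Φ L) (hK1 : 1 ≤ K) (hK : LipschitzWith K F)
    (hu : UniformContinuous (fderiv ℝ F)) {t : ℝ} (ht : t ∈ Icc (0 : ℝ) 1) :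
    Continuous fun a ↦ L a t := by
  refine Metric.continuous_iff'.2 fun a c hc ↦ ?_
  set M := Real.exp K
  have hM0 : 0 < M := Real.exp_pos _
  obtain ⟨δ, hδ, hfderiv⟩ := Metric.uniformContinuous_iff.1 hu (c / (2 * M * M)) (by positivity)
  filter_upwards [Metric.ball_mem_nhds a (div_pos hδ hM0)] with b hb
  rw [mem_ball, lt_div_iff₀ hM0] at hb
  have hflow (s : ℝ) (hs : s ∈ Icc (0 : ℝ) 1) : dist (Φ b s) (Φ a s) < δ :=
    (h.dist_flow_le hK1 hK b a hs).trans_lt (by linarith)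
  have hfield (s : ℝ) (hs : s ∈ Icc (0 : ℝ) 1) :
      dist (fderiv ℝ F (Φ b s) ∘L L b s) (fderiv ℝ F (Φ a s) ∘L L b s)
        ≤ c / (2 * M * M) * M := by
    rw [dist_eq_norm, ← ContinuousLinearMap.sub_comp]
    refine (ContinuousLinearMap.opNorm_comp_le _ _).trans ?_
    rw [← dist_eq_norm]
    exact mul_le_mul (hfderiv (hflow s hs)).le (h.norm_tangent_le hK b hs) (norm_nonneg _)
      (by positivity)
  have hdist := dist_le_mul_exp_of_approx_trajectories
    (v := fun s N ↦ fderiv ℝ F (Φ a s) ∘L N) hK1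
    (fun s ↦ by
      simpa only [mul_one, id] using
        lipschitzWith_comp_of_norm_le (norm_fderiv_le_of_lipschitz ℝ hK) LipschitzWith.id)
    (h.hasDerivAt_tangent b) hfield (h.hasDerivAt_tangent a) (fun _ _ ↦ (dist_self _).le)
    (δ := 0) (by simp [h.tangent_zero]) ht
  calc dist (L b t) (L a t) ≤ (0 + (c / (2 * M * M) * M + 0)) * M := hdist
    _ = c / 2 := by field_simp; ring
    _ < c := half_lt_self hc

lemma hasStrictFDerivAt_flow (h : IsLinearizedFlow F Φ L) (hF : ContDiff ℝ 1 F)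
    (hs : HasCompactSupport F) (a : X) {t : ℝ} (ht : t ∈ Icc (0 : ℝ) 1) :
    HasStrictFDerivAt (fun b ↦ Φ b t) (L a t) a := by
  obtain ⟨K, hK⟩ := hF.lipschitzWith_of_hasCompactSupport hs one_ne_zero
  have hK1 : LipschitzWith (max K 1) F := hK.weaken (le_max_left _ _)
  have hu : UniformContinuous (fderiv ℝ F) :=
    (hF.continuous_fderiv one_ne_zero).uniformContinuous_of_tendsto_cocompact
      (hs.fderiv (𝕜 := ℝ)).is_zero_at_infty
  exact hasStrictFDerivAt_of_hasFDerivAt_of_continuousAt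
    (Eventually.of_forall fun b ↦
      h.hasFDerivAt_flow (le_max_right K 1) hK1 (hF.differentiable one_ne_zero) hu b ht)
    (h.continuous_tangent (le_max_right K 1) hK1 hu ht).continuousAt

end IsLinearizedFlow

end ODE

section AprioriBound

variable {X : Type*} [NormedAddCommGroup X] [NormedSpace ℝ X]

/-- The trajectories over `[0, 1]` of the vector field `F`, slowed down by any factor with values
in `[0, 1]`, are bounded in terms of their starting point. The factor allows for the truncation of
`F` to a compactly supported field. -/
def HasAprioriBound (F : X → X) : Prop :=
  ∀ m : ℝ, ∃ N > 0, ∀ (Y : ℝ → X) (c : ℝ → ℝ), (∀ t, c t ∈ Icc (0 : ℝ) 1) → ‖Y 0‖ ≤ m →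
    (∀ t ∈ Icc (0 : ℝ) 1, HasDerivAt Y (c t • F (Y t)) t) → ∀ t ∈ Icc (0 : ℝ) 1, ‖Y t‖ < N

namespace HasAprioriBound

variable [FiniteDimensional ℝ X] {F : X → X}

lemma eqOn_of_hasDerivAt (h : HasAprioriBound F) (hF : ContDiff ℝ 1 F) {Y Z : ℝ → X}
    (hY : ∀ t ∈ Icc (0 : ℝ) 1, HasDerivAt Y (F (Y t)) t)
    (hZ : ∀ t ∈ Icc (0 : ℝ) 1, HasDerivAt Z (F (Z t)) t) (h0 : Y 0 = Z 0) :
    EqOn Y Z (Icc 0 1) := by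
  obtain ⟨N, -, hN⟩ := h ‖Y 0‖
  have hone : ∀ t : ℝ, (fun _ ↦ (1 : ℝ)) t ∈ Icc (0 : ℝ) 1 := fun _ ↦ ⟨zero_le_one, le_rfl⟩
  have hYN := hN Y _ hone le_rfl (by simpa only [one_smul] using hY)
  have hZN := hN Z _ hone (h0 ▸ le_rfl) (by simpa only [one_smul] using hZ)
  obtain ⟨K, hK⟩ := (hF.contDiffOn (s := closedBall 0 N)).exists_lipschitzOnWith one_ne_zero
    (convex_closedBall _ _) (isCompact_closedBall _ _)
  exact ODE_solution_unique_of_mem_Icc_right (v := fun _ ↦ F) (s := fun _ ↦ closedBall 0 N)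
    (fun _ _ ↦ hK) (fun t ht ↦ (hY t ht).continuousAt.continuousWithinAt)
    (fun t ht ↦ (hY t (Ico_subset_Icc_self ht)).hasDerivWithinAt)
    (fun t ht ↦ mem_closedBall_zero_iff.2 (hYN t (Ico_subset_Icc_self ht)).le)
    (fun t ht ↦ (hZ t ht).continuousAt.continuousWithinAt)
    (fun t ht ↦ (hZ t (Ico_subset_Icc_self ht)).hasDerivWithinAt)
    (fun t ht ↦ mem_closedBall_zero_iff.2 (hZN t (Ico_subset_Icc_self ht)).le) h0

lemma exists_flow_of_norm_le (h : HasAprioriBound F) (hF : ContDiff ℝ 1 F) (m : ℝ) :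
    ∃ (Φ : X → ℝ → X) (L : X → ℝ → X →L[ℝ] X), (∀ a, Φ a 0 = a) ∧
      (∀ a, L a 0 = ContinuousLinearMap.id ℝ X) ∧ ∀ a, ‖a‖ ≤ m → ∀ t ∈ Icc (0 : ℝ) 1,
        HasDerivAt (Φ a) (F (Φ a t)) t ∧ HasDerivAt (L a) (fderiv ℝ F (Φ a t) ∘L L a t) t ∧
        HasStrictFDerivAt (fun b ↦ Φ b t) (L a t) a := by
  obtain ⟨N, hN, hbound⟩ := h m
  let χ : ContDiffBump (0 : X) := ⟨N, N + 1, hN, lt_add_one N⟩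
  have hχF : ContDiff ℝ 1 fun y ↦ χ y • F y := χ.contDiff.smul hF
  have hsupp : HasCompactSupport fun y ↦ χ y • F y := χ.hasCompactSupport.smul_right
  have hχ {y : X} (hy : ‖y‖ < N) : χ y • F y = F y := by
    rw [χ.one_of_mem_closedBall (mem_closedBall_zero_iff.2 hy.le), one_smul]
  obtain ⟨Φ, L, hflow⟩ := exists_isLinearizedFlow hχF hsupp
  refine ⟨Φ, L, hflow.flow_zero, hflow.tangent_zero, fun a ha t ht ↦ ?_⟩
  have hlt : ‖Φ a t‖ < N := hbound (Φ a) (fun t ↦ χ (Φ a t)) (fun _ ↦ ⟨χ.nonneg, χ.le_one⟩)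
    ((hflow.flow_zero a).symm ▸ ha) (hflow.hasDerivAt_flow a) t ht
  have hfderiv : fderiv ℝ (fun y ↦ χ y • F y) (Φ a t) = fderiv ℝ F (Φ a t) := by
    refine EventuallyEq.fderiv_eq ?_
    filter_upwards [continuous_norm.continuousAt.eventually_lt_const hlt] with y hy using hχ hy
  exact ⟨hχ hlt ▸ hflow.hasDerivAt_flow a t ht, hfderiv ▸ hflow.hasDerivAt_tangent a t ht,
    hflow.hasStrictFDerivAt_flow hχF hsupp a ht⟩

theorem exists_isLinearizedFlow (h : HasAprioriBound F) (hF : ContDiff ℝ 1 F) :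
    ∃ Φ L, IsLinearizedFlow F Φ L ∧
      ∀ a, ∀ t ∈ Icc (0 : ℝ) 1, HasStrictFDerivAt (fun b ↦ Φ b t) (L a t) a := by
  choose Φ L hΦ0 hL0 hflow using h.exists_flow_of_norm_le hF
  have hself (a : X) : ‖a‖ ≤ ‖a‖ + 1 := (lt_add_one _).le
  refine ⟨fun a ↦ Φ (‖a‖ + 1) a, fun a ↦ L (‖a‖ + 1) a,
    ⟨fun a ↦ hΦ0 _ a, fun a t ht ↦ (hflow _ a (hself a) t ht).1, fun a ↦ hL0 _ a,
      fun a t ht ↦ (hflow _ a (hself a) t ht).2.1⟩, fun a t ht ↦ ?_⟩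
  refine (hflow _ a (hself a) t ht).2.2.congr_of_eventuallyEq ?_
  filter_upwards [continuous_norm.continuousAt.eventually_lt_const (lt_add_one ‖a‖)] with b hb
  exact h.eqOn_of_hasDerivAt hF (fun s hs ↦ (hflow _ b hb.le s hs).1)
    (fun s hs ↦ (hflow _ b (hself b) s hs).1) ((hΦ0 _ b).trans (hΦ0 _ b).symm) ht

end HasAprioriBound

end AprioriBound

section Pairs

variable {X Y : Type*} [NormedAddCommGroup X] [NormedSpace ℝ X] [NormedAddCommGroup Y]
  [NormedSpace ℝ Y] {z : ℝ → X × Y} {z' : X × Y} {t : ℝ}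

lemma hasDerivAt_fst_comp (h : HasDerivAt z z' t) : HasDerivAt (fun s ↦ (z s).1) z'.1 t :=
  HasFDerivAt.fst h

lemma hasDerivAt_snd_comp (h : HasDerivAt z z' t) : HasDerivAt (fun s ↦ (z s).2) z'.2 t :=
  HasFDerivAt.snd h

end Pairs

section ConformalMetric

variable {V : Type*} [NormedAddCommGroup V] [InnerProductSpace ℝ V] {u : V → ℝ} {g : V → V} {R : ℝ}

/-- `u` is a nonnegative `C²` function vanishing on the ball of radius `R`, and `g = ∇u`; it is the
logarithm of the factor of the conformal metric `e ^ (2 u) |dx|²`. -/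
structure IsConformalFactor (u : V → ℝ) (g : V → V) (R : ℝ) : Prop where
  hasFDerivAt : ∀ x, HasFDerivAt u (innerSL ℝ (g x)) x
  contDiff_grad : ContDiff ℝ 1 g
  nonneg : ∀ x, 0 ≤ u x
  radius_pos : 0 < R
  eq_zero : ∀ x, ‖x‖ < R → u x = 0

/-- The geodesic equations of the metric `e ^ (2 u) |dx|²` in Hamiltonian form, for the pairs
`(x, p)` of a position and a momentum; the Hamiltonian is `e ^ (-2 u x) |p|² / 2`. -/
def geodesicField (u : V → ℝ) (g : V → V) (y : V × V) : V × V :=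
  (Real.exp (-2 * u y.1) • y.2, (Real.exp (-2 * u y.1) * ‖y.2‖ ^ 2) • g y.1)

namespace IsConformalFactor

lemma contDiff (h : IsConformalFactor u g R) : ContDiff ℝ 1 u :=
  contDiff_one_iff_hasFDerivAt.2
    ⟨fun x ↦ innerSL ℝ (g x), (innerSL ℝ).continuous.comp h.contDiff_grad.continuous, h.hasFDerivAt⟩

lemma grad_eq_zero (h : IsConformalFactor u g R) {x : V} (hx : ‖x‖ < R) : g x = 0 := by
  have hconst : HasFDerivAt u (0 : V →L[ℝ] ℝ) x := by
    refine (hasFDerivAt_const (0 : ℝ) x).congr_of_eventuallyEq ?_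
    filter_upwards [continuous_norm.continuousAt.eventually_lt_const hx] with y hy
      using h.eq_zero y hy
  have hinner := congrArg (fun l : V →L[ℝ] ℝ ↦ l (g x)) ((h.hasFDerivAt x).unique hconst)
  simpa using hinner

lemma contDiff_geodesicField (h : IsConformalFactor u g R) : ContDiff ℝ 1 (geodesicField u g) := by
  have hexp : ContDiff ℝ 1 fun y : V × V ↦ Real.exp (-2 * u y.1) :=
    (contDiff_const.mul (h.contDiff.comp contDiff_fst)).exp
  exact (hexp.smul contDiff_snd).prodMk
    ((hexp.mul (contDiff_snd.norm_sq ℝ)).smul (h.contDiff_grad.comp contDiff_fst))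

lemma hasDerivAt_exp_comp (h : IsConformalFactor u g R) {x : ℝ → V} {x' : V} {t : ℝ}
    (hx : HasDerivAt x x' t) : HasDerivAt (fun s ↦ Real.exp (-2 * u (x s)))
      (Real.exp (-2 * u (x t)) * (-2 * inner ℝ (g (x t)) x')) t :=
  (((h.hasFDerivAt (x t)).comp_hasDerivAt t hx).const_mul (-2)).exp

lemma energy_eq (h : IsConformalFactor u g R) {Y : ℝ → V × V} {c : ℝ → ℝ}
    (hY : ∀ t ∈ Icc (0 : ℝ) 1, HasDerivAt Y (c t • geodesicField u g (Y t)) t) {t : ℝ}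
    (ht : t ∈ Icc (0 : ℝ) 1) : Real.exp (-2 * u (Y t).1) * ‖(Y t).2‖ ^ 2 =
      Real.exp (-2 * u (Y 0).1) * ‖(Y 0).2‖ ^ 2 := by
  have hd (s : ℝ) (hs : s ∈ Icc (0 : ℝ) 1) :
      HasDerivAt (fun s ↦ Real.exp (-2 * u (Y s).1) * ‖(Y s).2‖ ^ 2) 0 s := by
    refine ((h.hasDerivAt_exp_comp (hasDerivAt_fst_comp (hY s hs))).mul
      (hasDerivAt_snd_comp (hY s hs)).norm_sq).congr_deriv ?_
    simp only [geodesicField, Prod.smul_mk, inner_smul_right]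
    rw [real_inner_comm (g _) ((Y s).2)]
    ring
  exact constant_of_has_deriv_right_zero (fun s hs ↦ (hd s hs).continuousAt.continuousWithinAt)
    (fun s hs ↦ (hd s (Ico_subset_Icc_self hs)).hasDerivWithinAt) t ht

lemma norm_momentum_eq (h : IsConformalFactor u g R) {Y : ℝ → V × V} {c : ℝ → ℝ}
    (hY : ∀ t ∈ Icc (0 : ℝ) 1, HasDerivAt Y (c t • geodesicField u g (Y t)) t) {t : ℝ}
    (ht : t ∈ Icc (0 : ℝ) 1) :
    ‖(Y t).2‖ = Real.exp (u (Y t).1) * (Real.exp (-u (Y 0).1) * ‖(Y 0).2‖) := by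
  refine (sq_eq_sq₀ (norm_nonneg _) (by positivity)).1 ?_
  have hsq (x : V) : Real.exp (-2 * u x) = Real.exp (-u x) ^ 2 := by
    rw [← Real.exp_nat_mul]; ring_nf
  have hone : Real.exp (u (Y t).1) * Real.exp (-u (Y t).1) = 1 := by
    rw [← Real.exp_add, add_neg_cancel, Real.exp_zero]
  calc ‖(Y t).2‖ ^ 2
      = (Real.exp (u (Y t).1) * Real.exp (-u (Y t).1)) ^ 2 * ‖(Y t).2‖ ^ 2 := by
        rw [hone, one_pow, one_mul]
    _ = Real.exp (u (Y t).1) ^ 2 * (Real.exp (-2 * u (Y t).1) * ‖(Y t).2‖ ^ 2) := by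
        rw [hsq]; ring
    _ = (Real.exp (u (Y t).1) * (Real.exp (-u (Y 0).1) * ‖(Y 0).2‖)) ^ 2 := by
        rw [h.energy_eq hY ht, hsq]; ring

lemma norm_position_sub_le (h : IsConformalFactor u g R) {Y : ℝ → V × V} {c : ℝ → ℝ}
    (hc : ∀ t, c t ∈ Icc (0 : ℝ) 1)
    (hY : ∀ t ∈ Icc (0 : ℝ) 1, HasDerivAt Y (c t • geodesicField u g (Y t)) t) {t : ℝ}
    (ht : t ∈ Icc (0 : ℝ) 1) : ‖(Y t).1 - (Y 0).1‖ ≤ ‖(Y 0).2‖ * t := by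
  have hspeed (s : ℝ) (hs : s ∈ Icc (0 : ℝ) 1) :
      ‖(c s • geodesicField u g (Y s)).1‖ ≤ ‖(Y 0).2‖ := by
    have hle {x : V} : Real.exp (-u x) ≤ 1 := Real.exp_le_one_iff.2 (neg_nonpos.2 (h.nonneg x))
    calc ‖(c s • geodesicField u g (Y s)).1‖
        = c s * (Real.exp (-2 * u (Y s).1) * ‖(Y s).2‖) := by
          simp only [geodesicField, Prod.smul_fst, norm_smul, Real.norm_of_nonneg (hc s).1,
            Real.norm_of_nonneg (Real.exp_pos _).le]
      _ = c s * (Real.exp (-u (Y s).1) * (Real.exp (-u (Y 0).1) * ‖(Y 0).2‖)) := by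
          rw [h.norm_momentum_eq hY hs, ← mul_assoc (Real.exp (-2 * u (Y s).1)), ← Real.exp_add]
          ring_nf
      _ ≤ 1 * (1 * (1 * ‖(Y 0).2‖)) := by gcongr <;> first | exact (hc s).2 | exact hle
      _ = ‖(Y 0).2‖ := by ring
  simpa only [sub_zero] using norm_image_sub_le_of_norm_deriv_right_le_segment
    (fun s hs ↦ (hasDerivAt_fst_comp (hY s hs)).continuousAt.continuousWithinAt)
    (fun s hs ↦ (hasDerivAt_fst_comp (hY s (Ico_subset_Icc_self hs))).hasDerivWithinAt)
    (fun s hs ↦ hspeed s (Ico_subset_Icc_self hs)) t ht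

lemma hasAprioriBound_geodesicField [ProperSpace V] (h : IsConformalFactor u g R) :
    HasAprioriBound (geodesicField u g) := by
  intro m
  obtain ⟨U, hU⟩ := (isCompact_closedBall (0 : V) (m + m)).exists_bound_of_continuousOn
    h.contDiff.continuous.continuousOn
  refine ⟨max 1 (max (m + m + 1) (Real.exp U * m + 1)), lt_max_of_lt_left one_pos,
    fun Y c hc h0 hY t ht ↦ ?_⟩
  have hx0 : ‖(Y 0).1‖ ≤ m := (norm_fst_le _).trans h0
  have hp0 : ‖(Y 0).2‖ ≤ m := (norm_snd_le _).trans h0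
  have hx : ‖(Y t).1‖ ≤ m + m := by
    refine (norm_le_norm_add_norm_sub' _ (Y 0).1).trans (add_le_add hx0 ?_)
    exact (h.norm_position_sub_le hc hY ht).trans
      ((mul_le_of_le_one_right (norm_nonneg _) ht.2).trans hp0)
  have hp : ‖(Y t).2‖ ≤ Real.exp U * m := by
    rw [h.norm_momentum_eq hY ht]
    gcongr
    · exact (le_abs_self _).trans (hU _ (mem_closedBall_zero_iff.2 hx))
    · exact (mul_le_of_le_one_left (norm_nonneg _)
        (Real.exp_le_one_iff.2 (neg_nonpos.2 (h.nonneg _)))).trans hp0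
  rw [Prod.norm_def]
  refine lt_max_of_lt_right (max_lt ?_ ?_)
  · exact lt_max_of_lt_left (by linarith)
  · exact lt_max_of_lt_right (by linarith)

end IsConformalFactor

end ConformalMetric

section JacobiEquation

variable {J K q : ℝ → ℝ}

lemma monotoneOn_sq_of_jacobi (hJ : ∀ t ∈ Icc (0 : ℝ) 1, HasDerivAt J (K t) t)
    (hK : ∀ t ∈ Icc (0 : ℝ) 1, HasDerivAt K (q t * J t) t) (hq : ∀ t, 0 ≤ q t) (hJ0 : J 0 = 0) :
    MonotoneOn (fun t ↦ J t ^ 2) (Icc 0 1) := by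
  have hmono : MonotoneOn (fun t ↦ J t * K t) (Icc 0 1) :=
    monotoneOn_of_hasDerivWithinAt_nonneg (convex_Icc _ _)
      (fun t ht ↦ ((hJ t ht).mul (hK t ht)).continuousAt.continuousWithinAt)
      (fun t ht ↦ ((hJ t (interior_subset ht)).mul (hK t (interior_subset ht))).hasDerivWithinAt)
      fun t _ ↦ by nlinarith only [mul_self_nonneg (K t), mul_nonneg (hq t) (mul_self_nonneg (J t))]
  have hnonneg {t : ℝ} (ht : t ∈ Icc (0 : ℝ) 1) : 0 ≤ J t * K t := by
    simpa only [hJ0, zero_mul] using hmono (left_mem_Icc.2 zero_le_one) ht ht.1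
  refine monotoneOn_of_hasDerivWithinAt_nonneg (convex_Icc _ _)
    (fun t ht ↦ ((hJ t ht).pow 2).continuousAt.continuousWithinAt)
    (fun t ht ↦ ((hJ t (interior_subset ht)).pow 2).hasDerivWithinAt) fun t ht ↦ ?_
  norm_num only [Nat.cast_ofNat, pow_one]
  linarith [hnonneg (interior_subset ht)]

lemma eventually_pos_of_hasDerivAt_pos {x c : ℝ} (hJ : HasDerivAt J c x) (hJx : J x = 0)
    (hc : 0 < c) : ∀ᶠ s in 𝓝[>] x, 0 < J s := by
  have hslope : ∀ᶠ s in 𝓝[>] x, 0 < slope J x s :=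
    (hasDerivWithinAt_iff_tendsto_slope' self_notMem_Ioi).1 hJ.hasDerivWithinAt
      |>.eventually_const_lt hc
  filter_upwards [hslope, self_mem_nhdsWithin] with s hs hxs
  rw [slope_def_field, hJx, sub_zero] at hs
  exact (div_pos_iff_of_pos_right (sub_pos.2 hxs)).1 hs

/-- Since `q` is nonnegative, the square of `J` is monotone. -/
theorem jacobi_pos (hJ : ∀ t ∈ Icc (0 : ℝ) 1, HasDerivAt J (K t) t)
    (hK : ∀ t ∈ Icc (0 : ℝ) 1, HasDerivAt K (q t * J t) t) (hq : ∀ t, 0 ≤ q t) (hJ0 : J 0 = 0)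
    (hK0 : 0 < K 0) {t : ℝ} (ht : t ∈ Ioc (0 : ℝ) 1) : 0 < J t := by
  have hmono := monotoneOn_sq_of_jacobi hJ hK hq hJ0
  have hev := eventually_pos_of_hasDerivAt_pos (hJ 0 (left_mem_Icc.2 zero_le_one)) hJ0 hK0
  have hpos_before {r : ℝ} (hr : r ∈ Ioc (0 : ℝ) 1) : ∃ s ∈ Ioo 0 r, 0 < J s :=
    ((hev.and (Ioo_mem_nhdsGT hr.1)).exists).imp fun _ hs ↦ ⟨hs.2, hs.1⟩
  have hne {r : ℝ} (hr : r ∈ Ioc (0 : ℝ) 1) : J r ≠ 0 := by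
    obtain ⟨s, hs, hJs⟩ := hpos_before hr
    have hle := hmono ⟨hs.1.le, hs.2.le.trans hr.2⟩ ⟨hr.1.le, hr.2⟩ hs.2.le
    exact fun hJr ↦ absurd hle (by simpa [hJr] using hJs.ne')
  by_contra! hJt
  obtain ⟨s, hs, hJs⟩ := hpos_before ht
  have hcont : ContinuousOn J (Icc s t) := fun r hr ↦
    (hJ r ⟨hs.1.le.trans hr.1, hr.2.trans ht.2⟩).continuousAt.continuousWithinAt
  obtain ⟨r, hr, hJr⟩ := intermediate_value_Icc' hs.2.le hcont ⟨hJt, hJs.le⟩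
  exact hne ⟨hs.1.trans_le hr.1, hr.2.trans ht.2⟩ hJr

end JacobiEquation

section ComplexPlane

lemma inner_eq_re_mul_re_add_im_mul_im (a b : ℂ) : inner ℝ a b = a.re * b.re + a.im * b.im := by
  simp only [Complex.inner, Complex.mul_re, Complex.conj_re, Complex.conj_im]
  ring

lemma norm_sq_eq_re_sq_add_im_sq (p : ℂ) : ‖p‖ ^ 2 = p.re ^ 2 + p.im ^ 2 := by
  rw [← Complex.normSq_eq_norm_sq, Complex.normSq_apply]
  ring

lemma inner_self_I_mul (p : ℂ) : inner ℝ p (Complex.I * p) = 0 := by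
  simp only [inner_eq_re_mul_re_add_im_mul_im, Complex.mul_re, Complex.mul_im, Complex.I_re,
    Complex.I_im]
  ring

lemma eq_inner_smul_add_inner_I_mul_smul {p : ℂ} (hp : p ≠ 0) (a : ℂ) :
    a = (inner ℝ p a / ‖p‖ ^ 2) • p + (inner ℝ a (Complex.I * p) / ‖p‖ ^ 2) • (Complex.I * p) := by
  have h0 : p.re ^ 2 + p.im ^ 2 ≠ 0 := by
    rwa [← norm_sq_eq_re_sq_add_im_sq, pow_ne_zero_iff two_ne_zero, norm_ne_zero_iff]
  rw [norm_sq_eq_re_sq_add_im_sq]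
  apply Complex.ext <;>
  · simp only [inner_eq_re_mul_re_add_im_mul_im, Complex.add_re, Complex.add_im, Complex.smul_re,
      Complex.smul_im, smul_eq_mul, Complex.mul_re, Complex.mul_im, Complex.I_re, Complex.I_im]
    field_simp
    ring

lemma eq_smul_I_mul_of_inner_eq_zero {p a : ℂ} (hp : p ≠ 0) (ha : inner ℝ p a = 0) :
    a = (inner ℝ a (Complex.I * p) / ‖p‖ ^ 2) • (Complex.I * p) := by
  simpa only [ha, zero_div, zero_smul, zero_add] using eq_inner_smul_add_inner_I_mul_smul hp a

lemma norm_sq_mul_inner_I_mul (p b g : ℂ) : ‖p‖ ^ 2 * inner ℝ b (Complex.I * g) =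
    inner ℝ g p * inner ℝ b (Complex.I * p) + inner ℝ p b * inner ℝ p (Complex.I * g) := by
  simp only [inner_eq_re_mul_re_add_im_mul_im, norm_sq_eq_re_sq_add_im_sq, Complex.mul_re,
    Complex.mul_im, Complex.I_re, Complex.I_im]
  ring

lemma trace_eq_re_apply_one_add_im_apply_I (M : ℂ →ₗ[ℝ] ℂ) :
    LinearMap.trace ℝ ℂ M = (M 1).re + (M Complex.I).im := by
  simp [LinearMap.trace_eq_matrix_trace ℝ Complex.basisOneI, Matrix.trace, LinearMap.toMatrix_apply]

lemma inner_apply_I_mul_add_inner_apply (M : ℂ →ₗ[ℝ] ℂ) (p : ℂ) :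
    inner ℝ (M (Complex.I * p)) (Complex.I * p) + inner ℝ (M p) p =
      LinearMap.trace ℝ ℂ M * ‖p‖ ^ 2 := by
  have hM (v : ℂ) : M v = v.re • M 1 + v.im • M Complex.I := by
    rw [← map_smul, ← map_smul, ← map_add]
    congr 1
    apply Complex.ext <;> simp
  rw [hM (Complex.I * p), hM p, trace_eq_re_apply_one_add_im_apply_I]
  simp only [inner_eq_re_mul_re_add_im_mul_im, norm_sq_eq_re_sq_add_im_sq, Complex.add_re,
    Complex.add_im, Complex.smul_re, Complex.smul_im, smul_eq_mul, Complex.mul_re, Complex.mul_im,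
    Complex.I_re, Complex.I_im]
  ring

lemma inner_apply_I_mul_add_inner_I_mul_apply (M : ℂ →ₗ[ℝ] ℂ) {p a : ℂ} (hp : p ≠ 0)
    (ha : inner ℝ p a = 0) : inner ℝ (M a) (Complex.I * p) + inner ℝ a (Complex.I * M p) =
      LinearMap.trace ℝ ℂ M * inner ℝ a (Complex.I * p) := by
  have hI (v w : ℂ) : inner ℝ (Complex.I * v) (Complex.I * w) = inner ℝ w v := by
    simp only [inner_eq_re_mul_re_add_im_mul_im, Complex.mul_re, Complex.mul_im, Complex.I_re,
      Complex.I_im]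
    ring
  rw [eq_smul_I_mul_of_inner_eq_zero hp ha]
  simp only [map_smul, real_inner_smul_left]
  rw [hI, ← mul_add, inner_apply_I_mul_add_inner_apply, hI, real_inner_self_eq_norm_sq]
  ring

end ComplexPlane

section RadialGeodesics

variable {V : Type*} [NormedAddCommGroup V] [InnerProductSpace ℝ V] {u : V → ℝ} {g : V → V} {R : ℝ}

lemma IsConformalFactor.fderiv_geodesicField_apply (h : IsConformalFactor u g R) (y v : V × V) :
    fderiv ℝ (geodesicField u g) y v =
      (Real.exp (-2 * u y.1) • v.2 + (Real.exp (-2 * u y.1) * (-2 * inner ℝ (g y.1) v.1)) • y.2,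
        (Real.exp (-2 * u y.1) * ‖y.2‖ ^ 2) • fderiv ℝ g y.1 v.1 +
          (Real.exp (-2 * u y.1) * (-2 * inner ℝ (g y.1) v.1) * ‖y.2‖ ^ 2 +
            Real.exp (-2 * u y.1) * (2 * inner ℝ y.2 v.2)) • g y.1) := by
  have hline (x a : V) : HasDerivAt (fun s : ℝ ↦ x + s • a) a 0 := by
    simpa using ((hasDerivAt_id (0 : ℝ)).smul_const a).const_add x
  have hfield : HasFDerivAt (geodesicField u g) (fderiv ℝ (geodesicField u g) y)
      (y.1 + (0 : ℝ) • v.1, y.2 + (0 : ℝ) • v.2) := by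
    simpa using (h.contDiff_geodesicField.differentiable one_ne_zero y).hasFDerivAt
  have hg : HasFDerivAt g (fderiv ℝ g y.1) (y.1 + (0 : ℝ) • v.1) := by
    simpa using (h.contDiff_grad.differentiable one_ne_zero y.1).hasFDerivAt
  have hexp := h.hasDerivAt_exp_comp (hline y.1 v.1)
  have hchain := hfield.comp_hasDerivAt (0 : ℝ) ((hline y.1 v.1).prodMk (hline y.2 v.2))
  have hdirect := (hexp.smul (hline y.2 v.2)).prodMk ((hexp.mul (hline y.2 v.2).norm_sq).smul
    (hg.comp_hasDerivAt (0 : ℝ) (hline y.1 v.1)))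
  simpa only [zero_smul, add_zero, Pi.mul_apply, Function.comp_apply] using hchain.unique hdirect

/-- `Γ z` is the geodesic that starts at the origin with momentum `z`, and `Λ z t` is the
derivative of `w ↦ Γ w t` at `z`, so that `t ↦ Λ z t ζ` is a Jacobi field in phase space. -/
structure IsRadialGeodesicFlow (u : V → ℝ) (g : V → V) (Γ : V → ℝ → V × V)
    (Λ : V → ℝ → V →L[ℝ] V × V) : Prop where
  geodesic_zero : ∀ z, Γ z 0 = (0, z)
  hasDerivAt_geodesic : ∀ z, ∀ t ∈ Icc (0 : ℝ) 1, HasDerivAt (Γ z) (geodesicField u g (Γ z t)) t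
  jacobi_zero : ∀ z, Λ z 0 = .inr ℝ V V
  hasDerivAt_jacobi : ∀ z ζ, ∀ t ∈ Icc (0 : ℝ) 1,
    HasDerivAt (fun t ↦ Λ z t ζ) (fderiv ℝ (geodesicField u g) (Γ z t) (Λ z t ζ)) t
  hasStrictFDerivAt : ∀ z, ∀ t ∈ Icc (0 : ℝ) 1, HasStrictFDerivAt (fun w ↦ Γ w t) (Λ z t) z

theorem IsConformalFactor.exists_isRadialGeodesicFlow [FiniteDimensional ℝ V]
    (h : IsConformalFactor u g R) : ∃ Γ Λ, IsRadialGeodesicFlow u g Γ Λ := by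
  have := FiniteDimensional.proper_real V
  obtain ⟨Φ, L, hflow, hstrict⟩ :=
    h.hasAprioriBound_geodesicField.exists_isLinearizedFlow h.contDiff_geodesicField
  refine ⟨fun z ↦ Φ (0, z), fun z t ↦ L (0, z) t ∘L .inr ℝ V V, fun z ↦ hflow.flow_zero _,
    fun z t ht ↦ hflow.hasDerivAt_flow _ t ht, fun z ↦ ?_, fun z ζ t ht ↦ ?_, fun z t ht ↦ ?_⟩
  · rw [hflow.tangent_zero, ContinuousLinearMap.id_comp]
  · simpa using (hflow.hasDerivAt_tangent (0, z) t ht).clm_apply (hasDerivAt_const t (0, ζ))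
  · exact (hstrict (0, z) t ht).comp z (ContinuousLinearMap.inr ℝ V V).hasStrictFDerivAt

namespace IsRadialGeodesicFlow

variable {Γ : V → ℝ → V × V} {Λ : V → ℝ → V →L[ℝ] V × V} {t : ℝ}

section Geodesics

variable (hΓ : IsRadialGeodesicFlow u g Γ Λ) (h : IsConformalFactor u g R) (z : V)

include hΓ

lemma hasDerivAt_position (ht : t ∈ Icc (0 : ℝ) 1) : HasDerivAt (fun t ↦ (Γ z t).1)
    (Real.exp (-2 * u (Γ z t).1) • (Γ z t).2) t :=
  hasDerivAt_fst_comp (hΓ.hasDerivAt_geodesic z t ht)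

include h

lemma energy_eq (ht : t ∈ Icc (0 : ℝ) 1) :
    Real.exp (-2 * u (Γ z t).1) * ‖(Γ z t).2‖ ^ 2 = ‖z‖ ^ 2 := by
  have hzero : u 0 = 0 := h.eq_zero 0 (norm_zero.trans_lt h.radius_pos)
  simpa [hΓ.geodesic_zero, hzero] using h.energy_eq (Y := Γ z) (c := fun _ ↦ 1)
    (by simpa only [one_smul] using hΓ.hasDerivAt_geodesic z) ht

lemma hasDerivAt_momentum (ht : t ∈ Icc (0 : ℝ) 1) :
    HasDerivAt (fun t ↦ (Γ z t).2) (‖z‖ ^ 2 • g (Γ z t).1) t := by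
  rw [← hΓ.energy_eq h z ht]
  exact hasDerivAt_snd_comp (hΓ.hasDerivAt_geodesic z t ht)

lemma norm_momentum_eq (ht : t ∈ Icc (0 : ℝ) 1) :
    ‖(Γ z t).2‖ = Real.exp (u (Γ z t).1) * ‖z‖ := by
  have hzero : u 0 = 0 := h.eq_zero 0 (norm_zero.trans_lt h.radius_pos)
  simpa [hΓ.geodesic_zero, hzero] using h.norm_momentum_eq (Y := Γ z) (c := fun _ ↦ 1)
    (by simpa only [one_smul] using hΓ.hasDerivAt_geodesic z) ht

lemma norm_position_le (ht : t ∈ Icc (0 : ℝ) 1) : ‖(Γ z t).1‖ ≤ ‖z‖ * t := by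
  simpa [hΓ.geodesic_zero] using h.norm_position_sub_le (Y := Γ z) (c := fun _ ↦ 1)
    (fun _ ↦ ⟨zero_le_one, le_rfl⟩)
    (by simpa only [one_smul] using hΓ.hasDerivAt_geodesic z) ht

variable {z} in
lemma momentum_ne_zero (hz : z ≠ 0) (ht : t ∈ Icc (0 : ℝ) 1) : (Γ z t).2 ≠ 0 := by
  rw [← norm_pos_iff, hΓ.norm_momentum_eq h z ht]
  exact mul_pos (Real.exp_pos _) (norm_pos_iff.2 hz)

variable {z} in
lemma eq_of_norm_lt [FiniteDimensional ℝ V] (hz : ‖z‖ < R) (ht : t ∈ Icc (0 : ℝ) 1) :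
    Γ z t = (t • z, z) := by
  have := FiniteDimensional.proper_real V
  refine h.hasAprioriBound_geodesicField.eqOn_of_hasDerivAt h.contDiff_geodesicField
    (hΓ.hasDerivAt_geodesic z) (Z := fun t ↦ (t • z, z)) (fun s hs ↦ ?_)
    (by simp [hΓ.geodesic_zero]) ht
  have hlt : ‖s • z‖ < R := by
    rw [norm_smul, Real.norm_of_nonneg hs.1]
    exact (mul_le_of_le_one_left (norm_nonneg z) hs.2).trans_lt hz
  have hfield : geodesicField u g (s • z, z) = ((1 : ℝ) • z, 0) := by
    simp [geodesicField, h.eq_zero _ hlt, h.grad_eq_zero hlt]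
  rw [hfield]
  exact ((hasDerivAt_id s).smul_const z).prodMk (hasDerivAt_const s z)

end Geodesics

section JacobiFields

variable (hΓ : IsRadialGeodesicFlow u g Γ Λ) (h : IsConformalFactor u g R) (z ζ : V)

include hΓ h

lemma fderiv_energy_apply (ht : t ∈ Icc (0 : ℝ) 1) :
    Real.exp (-2 * u (Γ z t).1) * (-2 * inner ℝ (g (Γ z t).1) (Λ z t ζ).1) * ‖(Γ z t).2‖ ^ 2 +
      Real.exp (-2 * u (Γ z t).1) * (2 * inner ℝ (Γ z t).2 (Λ z t ζ).2) = 2 * inner ℝ z ζ := by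
  have hline : HasDerivAt (fun s : ℝ ↦ z + s • ζ) ζ 0 := by
    simpa using ((hasDerivAt_id (0 : ℝ)).smul_const ζ).const_add z
  have hflow : HasFDerivAt (fun w ↦ Γ w t) (Λ z t) (z + (0 : ℝ) • ζ) := by
    simpa using (hΓ.hasStrictFDerivAt z t ht).hasFDerivAt
  have hvar := hflow.comp_hasDerivAt (0 : ℝ) hline
  have henergy := (h.hasDerivAt_exp_comp (hasDerivAt_fst_comp hvar)).mul
    (hasDerivAt_snd_comp hvar).norm_sq
  simpa using henergy.unique
    (hline.norm_sq.congr_of_eventuallyEq (.of_forall fun s ↦ hΓ.energy_eq h _ ht))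

lemma hasDerivAt_jacobi_fst (ht : t ∈ Icc (0 : ℝ) 1) : HasDerivAt (fun t ↦ (Λ z t ζ).1)
    (Real.exp (-2 * u (Γ z t).1) • (Λ z t ζ).2 +
      (Real.exp (-2 * u (Γ z t).1) * (-2 * inner ℝ (g (Γ z t).1) (Λ z t ζ).1)) • (Γ z t).2) t := by
  simpa only [h.fderiv_geodesicField_apply] using
    hasDerivAt_fst_comp (hΓ.hasDerivAt_jacobi z ζ t ht)

lemma hasDerivAt_jacobi_snd (ht : t ∈ Icc (0 : ℝ) 1) : HasDerivAt (fun t ↦ (Λ z t ζ).2)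
    (‖z‖ ^ 2 • fderiv ℝ g (Γ z t).1 (Λ z t ζ).1 + (2 * inner ℝ z ζ) • g (Γ z t).1) t := by
  simpa only [h.fderiv_geodesicField_apply, hΓ.fderiv_energy_apply h z ζ ht, hΓ.energy_eq h z ht]
    using hasDerivAt_snd_comp (hΓ.hasDerivAt_jacobi z ζ t ht)

theorem gauss_lemma (ht : t ∈ Icc (0 : ℝ) 1) :
    inner ℝ (Γ z t).2 (Λ z t ζ).1 = t * inner ℝ z ζ := by
  have hd (s : ℝ) (hs : s ∈ Icc (0 : ℝ) 1) :
      HasDerivAt (fun t ↦ inner ℝ (Γ z t).2 (Λ z t ζ).1 - t * inner ℝ z ζ) 0 s := by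
    refine (((hΓ.hasDerivAt_momentum h z hs).inner ℝ (hΓ.hasDerivAt_jacobi_fst h z ζ hs)).sub
      ((hasDerivAt_id s).mul_const (inner ℝ z ζ))).congr_deriv ?_
    simp only [inner_add_right, real_inner_smul_right, real_inner_smul_left,
      real_inner_self_eq_norm_sq, ← hΓ.energy_eq h z hs]
    linear_combination (1 / 2) * hΓ.fderiv_energy_apply h z ζ hs
  have hconst := constant_of_has_deriv_right_zero
    (fun s hs ↦ (hd s hs).continuousAt.continuousWithinAt)
    (fun s hs ↦ (hd s (Ico_subset_Icc_self hs)).hasDerivWithinAt) t ht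
  simp only [hΓ.jacobi_zero, ContinuousLinearMap.inr_apply, inner_zero_right, zero_mul,
    sub_zero] at hconst
  exact sub_eq_zero.1 hconst

variable {z} in
lemma jacobi_one_of_norm_lt [FiniteDimensional ℝ V] (hz : ‖z‖ < R) : Λ z 1 ζ = (ζ, ζ) := by
  have h1 : (1 : ℝ) ∈ Icc (0 : ℝ) 1 := right_mem_Icc.2 zero_le_one
  have hdiag : HasFDerivAt (fun w ↦ Γ w 1)
      ((ContinuousLinearMap.id ℝ V).prod (ContinuousLinearMap.id ℝ V)) z := by
    refine ((hasFDerivAt_id z).prodMk (hasFDerivAt_id z)).congr_of_eventuallyEq ?_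
    filter_upwards [continuous_norm.continuousAt.eventually_lt_const hz] with w hw
    simp [hΓ.eq_of_norm_lt h hw h1]
  rw [(hΓ.hasStrictFDerivAt z 1 h1).hasFDerivAt.unique hdiag]
  rfl

end JacobiFields

end IsRadialGeodesicFlow

end RadialGeodesics

section ExponentialMap

variable {u : ℂ → ℝ} {g : ℂ → ℂ} {R : ℝ}

namespace IsRadialGeodesicFlow

variable {Γ : ℂ → ℝ → ℂ × ℂ} {Λ : ℂ → ℝ → ℂ →L[ℝ] ℂ × ℂ} {z ζ : ℂ} {t : ℝ}

lemma inner_momentum_jacobi_snd (hΓ : IsRadialGeodesicFlow u g Γ Λ) (h : IsConformalFactor u g R)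
    (hζ : inner ℝ z ζ = 0) (ht : t ∈ Icc (0 : ℝ) 1) :
    inner ℝ (Γ z t).2 (Λ z t ζ).2 = ‖(Γ z t).2‖ ^ 2 * inner ℝ (g (Γ z t).1) (Λ z t ζ).1 := by
  refine mul_left_cancel₀ (Real.exp_pos (-2 * u (Γ z t).1)).ne' ?_
  linear_combination (1 / 2) * (hΓ.fderiv_energy_apply h z ζ ht).trans (by rw [hζ, mul_zero])

lemma hasDerivAt_inner_I_mul_momentum (hΓ : IsRadialGeodesicFlow u g Γ Λ)
    (h : IsConformalFactor u g R) (ht : t ∈ Icc (0 : ℝ) 1) :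
    HasDerivAt (fun t ↦ inner ℝ (Λ z t ζ).1 (Complex.I * (Γ z t).2))
      (Real.exp (-2 * u (Γ z t).1) * inner ℝ (Λ z t ζ).2 (Complex.I * (Γ z t).2) +
        ‖z‖ ^ 2 * inner ℝ (Λ z t ζ).1 (Complex.I * g (Γ z t).1)) t := by
  refine ((hΓ.hasDerivAt_jacobi_fst h z ζ ht).inner ℝ
    ((hΓ.hasDerivAt_momentum h z ht).const_mul Complex.I)).congr_deriv ?_
  simp only [inner_add_left, real_inner_smul_left, mul_smul_comm, real_inner_smul_right,
    inner_self_I_mul]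
  ring

lemma hasDerivAt_deriv_inner_I_mul_momentum (hΓ : IsRadialGeodesicFlow u g Γ Λ)
    (h : IsConformalFactor u g R) (hz : z ≠ 0) (hζ : inner ℝ z ζ = 0) (ht : t ∈ Icc (0 : ℝ) 1) :
    HasDerivAt (fun t ↦ Real.exp (-2 * u (Γ z t).1) *
        inner ℝ (Λ z t ζ).2 (Complex.I * (Γ z t).2) +
        ‖z‖ ^ 2 * inner ℝ (Λ z t ζ).1 (Complex.I * g (Γ z t).1))
      (‖z‖ ^ 2 * Real.exp (-2 * u (Γ z t).1) *
        LinearMap.trace ℝ ℂ (fderiv ℝ g (Γ z t).1) *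
        inner ℝ (Λ z t ζ).1 (Complex.I * (Γ z t).2)) t := by
  have hgrad := ((h.contDiff_grad.differentiable one_ne_zero _).hasFDerivAt.comp_hasDerivAt t
    (hΓ.hasDerivAt_position z ht)).const_mul Complex.I
  have hmom := (hΓ.hasDerivAt_momentum h z ht).const_mul Complex.I
  have hexp := h.hasDerivAt_exp_comp (hΓ.hasDerivAt_position z ht)
  refine ((hexp.mul ((hΓ.hasDerivAt_jacobi_snd h z ζ ht).inner ℝ hmom)).add
    (((hΓ.hasDerivAt_jacobi_fst h z ζ ht).inner ℝ hgrad).const_mul (‖z‖ ^ 2))).congr_deriv ?_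
  have hgauss : inner ℝ (Γ z t).2 (Λ z t ζ).1 = 0 := by rw [hΓ.gauss_lemma h z ζ ht, hζ, mul_zero]
  have htrace := inner_apply_I_mul_add_inner_I_mul_apply (fderiv ℝ g (Γ z t).1 : ℂ →ₗ[ℝ] ℂ)
    (hΓ.momentum_ne_zero h hz ht) hgauss
  have hframe := norm_sq_mul_inner_I_mul (Γ z t).2 (Λ z t ζ).2 (g (Γ z t).1)
  rw [hΓ.inner_momentum_jacobi_snd h hζ ht] at hframe
  simp only [hζ, mul_zero, zero_smul, add_zero, map_smul, inner_add_left, real_inner_smul_left,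
    mul_smul_comm, real_inner_smul_right, ContinuousLinearMap.coe_coe, ← hΓ.energy_eq h z ht,
    Function.comp_apply] at htrace ⊢
  linear_combination Real.exp (-2 * u (Γ z t).1) ^ 2 * ‖(Γ z t).2‖ ^ 2 * htrace +
    2 * Real.exp (-2 * u (Γ z t).1) ^ 2 * hframe

/-- Subharmonicity of `u` means that the metric has nonpositive curvature, so there are no
conjugate points. -/
theorem exists_jacobi_I_mul_eq_smul (hΓ : IsRadialGeodesicFlow u g Γ Λ)
    (h : IsConformalFactor u g R) (hsub : ∀ x, 0 ≤ LinearMap.trace ℝ ℂ (fderiv ℝ g x))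
    (hz : z ≠ 0) : ∃ η > 0, (Λ z 1 (Complex.I * z)).1 = (η : ℝ) • (Complex.I * (Γ z 1).2) := by
  have h1 : (1 : ℝ) ∈ Icc (0 : ℝ) 1 := right_mem_Icc.2 zero_le_one
  have hζ := inner_self_I_mul z
  have hpos : 0 < inner ℝ (Λ z 1 (Complex.I * z)).1 (Complex.I * (Γ z 1).2) := by
    refine jacobi_pos (fun t ht ↦ hΓ.hasDerivAt_inner_I_mul_momentum h ht)
      (fun t ht ↦ hΓ.hasDerivAt_deriv_inner_I_mul_momentum h hz hζ ht)
      (fun t ↦ mul_nonneg (by positivity) (hsub _)) ?_ ?_ ⟨zero_lt_one, le_rfl⟩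
    · simp [hΓ.jacobi_zero]
    · have hzero : u 0 = 0 := h.eq_zero 0 (norm_zero.trans_lt h.radius_pos)
      simp only [hΓ.jacobi_zero, hΓ.geodesic_zero, ContinuousLinearMap.inr_apply, hzero,
        real_inner_self_eq_norm_sq, inner_zero_left, mul_zero, Real.exp_zero, one_mul, add_zero]
      exact pow_pos (norm_pos_iff.2 (mul_ne_zero Complex.I_ne_zero hz)) 2
  have hp := hΓ.momentum_ne_zero h hz h1
  refine ⟨_, div_pos hpos (pow_pos (norm_pos_iff.2 hp) 2),
    eq_smul_I_mul_of_inner_eq_zero hp ?_⟩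
  rw [hΓ.gauss_lemma h z _ h1, hζ, mul_zero]

lemma eq_zero_of_jacobi_fst_eq_zero (hΓ : IsRadialGeodesicFlow u g Γ Λ)
    (h : IsConformalFactor u g R) (hsub : ∀ x, 0 ≤ LinearMap.trace ℝ ℂ (fderiv ℝ g x))
    (h0 : (Λ z 1 ζ).1 = 0) : ζ = 0 := by
  have h1 : (1 : ℝ) ∈ Icc (0 : ℝ) 1 := right_mem_Icc.2 zero_le_one
  obtain rfl | hz := eq_or_ne z 0
  · simpa [hΓ.jacobi_one_of_norm_lt h ζ (norm_zero.trans_lt h.radius_pos)] using h0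
  have horth : inner ℝ z ζ = 0 := by simpa [h0] using (hΓ.gauss_lemma h z ζ h1).symm
  obtain ⟨η, hη, hjac⟩ := hΓ.exists_jacobi_I_mul_eq_smul h hsub hz
  have hζ := eq_smul_I_mul_of_inner_eq_zero hz horth
  have hp := hΓ.momentum_ne_zero h hz h1
  rw [hζ, map_smul, Prod.smul_fst, hjac, smul_eq_zero_iff_left
    (smul_ne_zero hη.ne' (mul_ne_zero Complex.I_ne_zero hp))] at h0
  rw [hζ, h0, zero_smul]

end IsRadialGeodesicFlow

/-- `E` is the exponential map at the origin of the metric `e ^ (2 u) |dx|²`, without conjugate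
points; `L z` is its derivative at `z`, and `P z` is the momentum at time `1` of the geodesic that
starts with momentum `z`. -/
structure IsExponentialMap (u : ℂ → ℝ) (g : ℂ → ℂ) (R : ℝ) (E P : ℂ → ℂ) (L : ℂ → ℂ →L[ℝ] ℂ) :
    Prop where
  hasStrictFDerivAt : ∀ z, HasStrictFDerivAt E (L z) z
  continuous_momentum : Continuous P
  eq_zero_of_deriv_eq_zero : ∀ z ζ, L z ζ = 0 → ζ = 0
  inner_momentum_deriv : ∀ z ζ, inner ℝ (P z) (L z ζ) = inner ℝ z ζ
  eq_self : ∀ z, ‖z‖ < R → E z = z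
  momentum_eq_self : ∀ z, ‖z‖ < R → P z = z
  norm_momentum : ∀ z, ‖P z‖ = Real.exp (u (E z)) * ‖z‖
  norm_le : ∀ z, ‖E z‖ ≤ ‖z‖
  deriv_I_mul : ∀ z, z ≠ 0 → ∃ η > 0, L z (Complex.I * z) = (η : ℝ) • (Complex.I * P z)
  exists_geodesic : ∀ z, ∃ Y : ℝ → ℂ × ℂ, Y 0 = (0, z) ∧ Y 1 = (E z, P z) ∧
    (∀ t ∈ Icc (0 : ℝ) 1, HasDerivAt Y (geodesicField u g (Y t)) t) ∧
    ∀ t ∈ Icc (0 : ℝ) 1, ‖(Y t).2‖ = Real.exp (u (Y t).1) * ‖z‖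

theorem IsConformalFactor.exists_isExponentialMap (h : IsConformalFactor u g R)
    (hsub : ∀ x, 0 ≤ LinearMap.trace ℝ ℂ (fderiv ℝ g x)) :
    ∃ E P L, IsExponentialMap u g R E P L := by
  obtain ⟨Γ, Λ, hΓ⟩ := h.exists_isRadialGeodesicFlow
  have h1 : (1 : ℝ) ∈ Icc (0 : ℝ) 1 := right_mem_Icc.2 zero_le_one
  refine ⟨fun z ↦ (Γ z 1).1, fun z ↦ (Γ z 1).2, fun z ↦ .fst ℝ ℂ ℂ ∘L Λ z 1, ?_⟩
  exact {
    hasStrictFDerivAt := fun z ↦ (hΓ.hasStrictFDerivAt z 1 h1).fst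
    continuous_momentum := continuous_snd.comp
      (continuous_iff_continuousAt.2 fun z ↦ (hΓ.hasStrictFDerivAt z 1 h1).continuousAt)
    eq_zero_of_deriv_eq_zero := fun _ _ ↦ hΓ.eq_zero_of_jacobi_fst_eq_zero h hsub
    inner_momentum_deriv := fun z ζ ↦ (hΓ.gauss_lemma h z ζ h1).trans (one_mul _)
    eq_self := fun z hz ↦ by simp only [hΓ.eq_of_norm_lt h hz h1, one_smul]
    momentum_eq_self := fun z hz ↦ by simp only [hΓ.eq_of_norm_lt h hz h1]
    norm_momentum := fun z ↦ hΓ.norm_momentum_eq h z h1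
    norm_le := fun z ↦ (hΓ.norm_position_le h z h1).trans_eq (mul_one _)
    deriv_I_mul := fun _ hz ↦ hΓ.exists_jacobi_I_mul_eq_smul h hsub hz
    exists_geodesic := fun z ↦ ⟨Γ z, hΓ.geodesic_zero z, rfl, hΓ.hasDerivAt_geodesic z,
      fun _ ht ↦ hΓ.norm_momentum_eq h z ht⟩ }

end ExponentialMap

section RadialLifts

variable {X Y : Type*} [TopologicalSpace X]

lemma exists_uniform_local_sections [PseudoMetricSpace Y] {p : X → Y} (hp : IsLocalHomeomorph p)
    {K : Set X} (hK : IsCompact K) : ∃ ε > 0, ∀ z ∈ K, ∃ s : Y → X,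
      ContinuousOn s (ball (p z) ε) ∧ s (p z) = z ∧ ∀ y ∈ ball (p z) ε, p (s y) = y := by
  let Section (z : X) (ε : ℝ) : Prop := ∃ s : Y → X,
    ContinuousOn s (ball (p z) ε) ∧ s (p z) = z ∧ ∀ y ∈ ball (p z) ε, p (s y) = y
  have shrink {z : X} {ε δ : ℝ} (h : Section z ε) (hδ : δ ≤ ε) : Section z δ := by
    obtain ⟨s, hs, hsz, hps⟩ := h
    have hball : ball (p z) δ ⊆ ball (p z) ε := ball_subset_ball hδ
    exact ⟨s, hs.mono hball, hsz, fun y hy ↦ hps y (hball hy)⟩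
  refine hK.induction_on (p := fun K ↦ ∃ ε > 0, ∀ z ∈ K, Section z ε) ⟨1, one_pos, by simp⟩ ?_ ?_ ?_
  · exact fun A B hAB ⟨ε, hε, hs⟩ ↦ ⟨ε, hε, fun z hz ↦ hs z (hAB hz)⟩
  · rintro A B ⟨ε, hε, hs⟩ ⟨ε', hε', hs'⟩
    refine ⟨min ε ε', lt_min hε hε', fun z hz ↦ hz.elim ?_ ?_⟩
    · exact fun hz ↦ shrink (hs z hz) (min_le_left _ _)
    · exact fun hz ↦ shrink (hs' z hz) (min_le_right _ _)
  · intro z _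
    obtain ⟨e, hz, rfl⟩ := hp z
    obtain ⟨ε, hε, hball⟩ := Metric.isOpen_iff.1 e.open_target (e z) (e.map_source hz)
    have hnear : ∀ᶠ y in 𝓝 z, y ∈ e.source ∧ e y ∈ ball (e z) (ε / 2) :=
      Filter.Eventually.and (e.open_source.mem_nhds hz)
        ((e.continuousAt hz).eventually (ball_mem_nhds _ (half_pos hε)))
    refine ⟨_, mem_nhdsWithin_of_mem_nhds hnear, ε / 2, half_pos hε, fun y hy ↦ ?_⟩
    have hsub : ball (e y) (ε / 2) ⊆ e.target :=
      (ball_subset_ball' (by linarith [mem_ball.1 hy.2])).trans hball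
    exact ⟨e.symm, e.continuousOn_symm.mono hsub, e.left_inv hy.1,
      fun a ha ↦ e.right_inv (hsub ha)⟩

lemma exists_lift_extension [TopologicalSpace Y] {p : X → Y} {γ : ℝ → Y} {v : ℝ → X} {T T' : ℝ}
    (hv : Continuous v) (hl : ∀ t ∈ Icc 0 T, p (v t) = γ t) (hT : 0 ≤ T) (hTT' : T ≤ T')
    (hγ : ContinuousOn γ (Icc T T')) {s : Y → X} {U : Set Y} (hs : ContinuousOn s U)
    (hsT : s (γ T) = v T) (hps : ∀ y ∈ U, p (s y) = y) (hU : MapsTo γ (Icc T T') U) :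
    ∃ w : ℝ → X, Continuous w ∧ w 0 = v 0 ∧ ∀ t ∈ Icc 0 T', p (w t) = γ t := by
  have hcont : Continuous fun t ↦ s (γ (projIcc T T' hTT' t)) :=
    (hs.comp hγ hU).comp_continuous (continuous_subtype_val.comp continuous_projIcc)
      fun t ↦ (projIcc T T' hTT' t).2
  refine ⟨fun t ↦ if t ≤ T then v t else s (γ (projIcc T T' hTT' t)),
    hv.if_le hcont continuous_id continuous_const ?_, if_pos hT, fun t ht ↦ ?_⟩
  · rintro t rfl
    rw [projIcc_left, hsT]
  · obtain htT | hTt := le_or_gt t T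
    · simpa only [if_pos htT] using hl t ⟨ht.1, htT⟩
    · simpa only [if_neg hTt.not_ge, projIcc_of_mem hTT' ⟨hTt.le, ht.2⟩] using
        hps _ (hU ⟨hTt.le, ht.2⟩)

theorem exists_lift_of_partial_lifts_mem [PseudoMetricSpace Y] {p : X → Y}
    (hp : IsLocalHomeomorph p) {γ : ℝ → Y} (hγ : ContinuousOn γ (Icc 0 1)) {x₀ : X}
    (h0 : p x₀ = γ 0) {K : Set X} (hK : IsCompact K)
    (hmem : ∀ T ∈ Icc (0 : ℝ) 1, ∀ v : ℝ → X, Continuous v → v 0 = x₀ →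
      (∀ t ∈ Icc 0 T, p (v t) = γ t) → v T ∈ K) :
    ∃ v : ℝ → X, Continuous v ∧ v 0 = x₀ ∧ ∀ t ∈ Icc (0 : ℝ) 1, p (v t) = γ t := by
  obtain ⟨ε, hε, hsec⟩ := exists_uniform_local_sections hp hK
  obtain ⟨δ, hδ, hγδ⟩ := Metric.uniformContinuousOn_iff.1
    (isCompact_Icc.uniformContinuousOn_of_continuous hγ) ε hε
  have partialLift (n : ℕ) : ∃ v : ℝ → X, Continuous v ∧ v 0 = x₀ ∧
      ∀ t ∈ Icc (0 : ℝ) (min 1 (n * (δ / 2))), p (v t) = γ t := by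
    induction n with
    | zero =>
      refine ⟨fun _ ↦ x₀, continuous_const, rfl, fun t ht ↦ ?_⟩
      obtain rfl : t = 0 := by simpa using ht
      exact h0
    | succ n ih =>
      obtain ⟨v, hv, hv0, hl⟩ := ih
      set T := min 1 (n * (δ / 2)) with hT
      set T' := min 1 ((n + 1 : ℕ) * (δ / 2)) with hT'
      have hT0 : 0 ≤ T := by positivity
      have hTT' : T ≤ T' := min_le_min_left _ (by gcongr; exact n.le_succ)
      have hT'T : T' ≤ T + δ / 2 := by
        rw [hT, hT', ← min_add_add_right]
        exact min_le_min (by linarith) (by push_cast; linarith)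
      have hTmem : T ∈ Icc (0 : ℝ) 1 := ⟨hT0, min_le_left _ _⟩
      have hIcc : Icc T T' ⊆ Icc 0 1 := Icc_subset_Icc hT0 (min_le_left _ _)
      obtain ⟨s, hs, hsT, hps⟩ := hsec (v T) (hmem T hTmem v hv hv0 hl)
      rw [hl T (right_mem_Icc.2 hT0)] at hs hsT hps
      obtain ⟨w, hw, hw0, hwl⟩ := exists_lift_extension hv hl hT0 hTT' (hγ.mono hIcc) hs hsT hps
        fun t ht ↦ hγδ t (hIcc ht) T hTmem
          (by rw [Real.dist_eq, abs_of_nonneg (sub_nonneg.2 ht.1)]; linarith [ht.2])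
      exact ⟨w, hw, hw0.trans hv0, hwl⟩
  obtain ⟨n, hn⟩ := exists_nat_ge (1 / (δ / 2))
  have hn1 := (div_le_iff₀ (half_pos hδ)).1 hn
  simpa only [min_eq_left hn1] using partialLift n

theorem exists_continuous_inverse_of_radial_lifts [T2Space X] [PreconnectedSpace X]
    [NormedAddCommGroup Y] [NormedSpace ℝ Y] {p : X → Y} (hp : IsLocalHomeomorph p) {x₀ : X}
    (hlift : ∀ y, ∃ v : ℝ → X, Continuous v ∧ v 0 = x₀ ∧ ∀ t ∈ Icc (0 : ℝ) 1, p (v t) = t • y) :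
    ∃ s : Y → X, Continuous s ∧ (∀ y, p (s y) = y) ∧ ∀ x, s (p x) = x := by
  choose v hv hv0 hl using hlift
  have hcont : Continuous fun q : unitInterval × Y ↦ v q.2 q.1 := by
    refine hp.continuous_lift (T2Space.isSeparatedMap p)
      ⟨fun q : unitInterval × Y ↦ (q.1 : ℝ) • q.2, by fun_prop⟩ ?_ ?_ fun y ↦ ?_
    · exact funext fun q ↦ hl q.2 q.1 q.1.2
    · simpa [hv0] using continuous_const
    · exact (hv y).comp continuous_subtype_val
  have hs : Continuous fun y ↦ v y 1 := hcont.comp (Continuous.prodMk_right (1 : unitInterval))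
  have hps (y : Y) : p (v y 1) = y := by
    simpa only [one_smul] using hl y 1 (right_mem_Icc.2 zero_le_one)
  refine ⟨fun y ↦ v y 1, hs, hps, fun x ↦ ?_⟩
  exact congrFun ((T2Space.isSeparatedMap p).eq_of_comp_eq hp.isLocallyInjective
    (g₁ := fun x ↦ v (p x) 1) (g₂ := id) (hs.comp hp.continuous) continuous_id
    (funext fun x ↦ hps (p x)) (v 0 1) (by simp only [hps, id_eq])) x

end RadialLifts

section InverseExponentialMap

namespace IsExponentialMap

variable {u : ℂ → ℝ} {g : ℂ → ℂ} {R : ℝ} {E P : ℂ → ℂ} {L : ℂ → ℂ →L[ℝ] ℂ}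

lemma exists_continuousLinearEquiv (h : IsExponentialMap u g R E P L) (z : ℂ) :
    ∃ e : ℂ ≃L[ℝ] ℂ, (e : ℂ →L[ℝ] ℂ) = L z := by
  have hinj : Function.Injective (L z : ℂ →ₗ[ℝ] ℂ) :=
    (injective_iff_map_eq_zero _).2 (h.eq_zero_of_deriv_eq_zero z)
  exact ⟨(LinearEquiv.ofInjectiveEndo (L z : ℂ →ₗ[ℝ] ℂ) hinj).toContinuousLinearEquiv, rfl⟩

lemma isLocalHomeomorph (h : IsExponentialMap u g R E P L) : IsLocalHomeomorph E := by
  intro z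
  obtain ⟨e, he⟩ := h.exists_continuousLinearEquiv z
  have hstrict : HasStrictFDerivAt E (e : ℂ →L[ℝ] ℂ) z := he ▸ h.hasStrictFDerivAt z
  exact ⟨hstrict.toOpenPartialHomeomorph E, hstrict.mem_toOpenPartialHomeomorph_source, rfl⟩

lemma continuous (h : IsExponentialMap u g R E P L) : Continuous E :=
  h.isLocalHomeomorph.continuous

lemma exists_hasDerivAt_lift (h : IsExponentialMap u g R E P L) {v : ℝ → ℂ} {x : ℂ} {t : ℝ}
    (hv : ContinuousAt v t) (hl : ∀ᶠ s in 𝓝 t, E (v s) = s • x) :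
    ∃ w, HasDerivAt v w t ∧ L (v t) w = x := by
  obtain ⟨e, he⟩ := h.exists_continuousLinearEquiv (v t)
  have hstrict : HasStrictFDerivAt E (e : ℂ →L[ℝ] ℂ) (v t) := he ▸ h.hasStrictFDerivAt (v t)
  have hinv : HasFDerivAt (hstrict.localInverse E e (v t)) (e.symm : ℂ →L[ℝ] ℂ) (t • x) :=
    hl.self_of_nhds ▸ hstrict.to_localInverse.hasFDerivAt
  have hv_eq : v =ᶠ[𝓝 t] fun s ↦ hstrict.localInverse E e (v t) (s • x) := by
    filter_upwards [hv.eventually hstrict.eventually_left_inverse, hl] with s hs hls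
    rw [← hls, hs]
  refine ⟨e.symm x, ?_, by rw [← he, ContinuousLinearEquiv.coe_coe, e.apply_symm_apply]⟩
  simpa using (hinv.comp_hasDerivAt t ((hasDerivAt_id t).smul_const x)).congr_of_eventuallyEq hv_eq

lemma inner_le_of_deriv_eq (h : IsExponentialMap u g R E P L) {z w x : ℂ} {M : ℝ}
    (hM : Real.exp (u (E z)) ≤ M) (hw : L z w = x) : inner ℝ z w ≤ M * ‖x‖ * ‖z‖ :=
  calc inner ℝ z w = inner ℝ (P z) x := by rw [← hw, h.inner_momentum_deriv]
    _ ≤ ‖P z‖ * ‖x‖ := real_inner_le_norm _ _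
    _ ≤ M * ‖z‖ * ‖x‖ := by rw [h.norm_momentum]; gcongr
    _ = M * ‖x‖ * ‖z‖ := by ring

/-- By the Gauss lemma, a lift of a segment moves away from the origin at most at the conformal
speed of the segment. -/
lemma norm_lift_le (h : IsExponentialMap u g R E P L) {v : ℝ → ℂ} {x : ℂ} {T M : ℝ}
    (hv : Continuous v) (hT : T ∈ Icc (0 : ℝ) 1) (hv0 : v 0 = 0)
    (hM : ∀ t ∈ Icc (0 : ℝ) 1, Real.exp (u (t • x)) ≤ M)
    (hl : ∀ t ∈ Icc 0 T, E (v t) = t • x) : ‖v T‖ ≤ 1 + M * ‖x‖ := by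
  have hM0 : 0 ≤ M := (Real.exp_pos _).le.trans (hM 0 (left_mem_Icc.2 zero_le_one))
  have hsqrt (a : ℂ) : ‖a‖ ≤ √(1 + ‖a‖ ^ 2) := Real.le_sqrt_of_sq_le (by linarith)
  choose! w hw hLw using fun t (ht : t ∈ Ioo 0 T) ↦ h.exists_hasDerivAt_lift
    (hv.continuousAt (x := t)) (mem_of_superset (Icc_mem_nhds ht.1 ht.2) hl)
  have hanti : AntitoneOn (fun t ↦ √(1 + ‖v t‖ ^ 2) - M * ‖x‖ * t) (Icc 0 T) := by
    refine antitoneOn_of_hasDerivWithinAt_nonpos (convex_Icc _ _) (by fun_prop)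
      (f' := fun t ↦ 2 * inner ℝ (v t) (w t) / (2 * √(1 + ‖v t‖ ^ 2)) - M * ‖x‖ * 1)
      (fun s hs ↦ ?_) fun s hs ↦ ?_
    all_goals rw [interior_Icc] at hs
    · exact ((((hw s hs).norm_sq.const_add 1).sqrt (by positivity)).sub
        ((hasDerivAt_id s).const_mul _)).hasDerivWithinAt
    · have hEs := hl s (Ioo_subset_Icc_self hs)
      have hinner := h.inner_le_of_deriv_eq (hEs ▸ hM s ⟨hs.1.le, hs.2.le.trans hT.2⟩) (hLw s hs)
      rw [mul_div_mul_left _ _ two_ne_zero, mul_one, sub_nonpos, div_le_iff₀ (by positivity)]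
      exact hinner.trans (mul_le_mul_of_nonneg_left (hsqrt _) (by positivity))
  have hle := hanti (left_mem_Icc.2 hT.1) (right_mem_Icc.2 hT.1) hT.1
  simp only [hv0, norm_zero, zero_pow two_ne_zero, add_zero, Real.sqrt_one, mul_zero] at hle
  have hMT : M * ‖x‖ * T ≤ M * ‖x‖ := mul_le_of_le_one_right (by positivity) hT.2
  linarith [hsqrt (v T)]

theorem exists_continuous_inverse (h : IsExponentialMap u g R E P L) (hu : Continuous u)
    (hR : 0 < R) : ∃ S : ℂ → ℂ, Continuous S ∧ (∀ x, E (S x) = x) ∧ ∀ z, S (E z) = z := by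
  have hE0 : E 0 = 0 := h.eq_self 0 (norm_zero.trans_lt hR)
  refine exists_continuous_inverse_of_radial_lifts h.isLocalHomeomorph (x₀ := 0) fun x ↦ ?_
  have hexp : Continuous fun t : ℝ ↦ Real.exp (u (t • x)) := by fun_prop
  obtain ⟨M, hM⟩ := isCompact_Icc.bddAbove_image (K := Icc (0 : ℝ) 1) hexp.continuousOn
  refine exists_lift_of_partial_lifts_mem h.isLocalHomeomorph (by fun_prop)
    (by rw [hE0, zero_smul]) (isCompact_closedBall 0 (1 + M * ‖x‖)) fun T hT v hv hv0 hl ↦ ?_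
  exact mem_closedBall_zero_iff.2
    (h.norm_lift_le hv hT hv0 (fun t ht ↦ hM (mem_image_of_mem _ ht)) hl)

lemma hasFDerivAt_half_norm_sq_inverse (h : IsExponentialMap u g R E P L) {S : ℂ → ℂ}
    (hS : Continuous S) (hES : ∀ x, E (S x) = x) (x : ℂ) :
    HasFDerivAt (fun x ↦ ‖S x‖ ^ 2 / 2) (innerSL ℝ (P (S x))) x := by
  obtain ⟨e, he⟩ := h.exists_continuousLinearEquiv (S x)
  have hE : HasFDerivAt E (e : ℂ →L[ℝ] ℂ) (S x) := he ▸ (h.hasStrictFDerivAt (S x)).hasFDerivAt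
  have hS' := HasFDerivAt.of_local_left_inverse hS.continuousAt hE (.of_forall hES)
  simp only [div_eq_mul_inv]
  refine (hS'.norm_sq.mul_const (2⁻¹ : ℝ)).congr_fderiv (ContinuousLinearMap.ext fun ζ ↦ ?_)
  have hgauss := h.inner_momentum_deriv (S x) (e.symm ζ)
  rw [← he, ContinuousLinearEquiv.coe_coe, e.apply_symm_apply] at hgauss
  simp [hgauss, -Complex.inner]

end IsExponentialMap

end InverseExponentialMap

section Majorants

lemma exists_continuous_monotone_ge {b : ℝ → ℝ} (hb : Monotone b) :
    ∃ κ : ℝ → ℝ, Continuous κ ∧ Monotone κ ∧ ∀ s, b s ≤ κ s := by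
  have hint : ∀ s t, IntervalIntegrable b MeasureTheory.volume s t :=
    fun s t ↦ hb.intervalIntegrable
  have hshift : ∀ s, IntervalIntegrable (fun t ↦ b (s + t)) MeasureTheory.volume 0 1 :=
    fun s ↦ Monotone.intervalIntegrable fun x y hxy ↦ hb (by linarith)
  refine ⟨fun s ↦ ∫ t in (0 : ℝ)..1, b (s + t), ?_, fun s t hst ↦ ?_, fun s ↦ ?_⟩
  · have hprim := intervalIntegral.continuous_primitive hint 0
    refine ((hprim.comp (continuous_id.add (continuous_const (y := 1)))).sub hprim).congr fun s ↦ ?_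
    rw [intervalIntegral.integral_comp_add_left b, add_zero,
      ← intervalIntegral.integral_interval_sub_left (hint 0 _) (hint 0 _)]
    rfl
  · exact intervalIntegral.integral_mono_on zero_le_one (hshift s) (hshift t)
      fun x _ ↦ hb (by linarith)
  · calc b s = ∫ _ in (0 : ℝ)..1, b s := by simp
      _ ≤ ∫ t in (0 : ℝ)..1, b (s + t) :=
        intervalIntegral.integral_mono_on zero_le_one (by simp) (hshift s)
          fun t ht ↦ hb (by linarith [ht.1])

lemma exists_continuous_monotone_radial_majorant {X : Type*} [NormedAddCommGroup X]
    [ProperSpace X] {B : X → ℝ} (hB : Continuous B) (hB0 : ∀ x, 0 ≤ B x) :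
    ∃ κ : ℝ → ℝ, Continuous κ ∧ Monotone κ ∧ (∀ s, 0 ≤ κ s) ∧ ∀ x s, ‖x‖ ≤ s → B x ≤ κ s := by
  have hbdd : ∀ s, BddAbove (B '' closedBall (0 : X) s) :=
    fun s ↦ (isCompact_closedBall 0 s).bddAbove_image hB.continuousOn
  have hle : ∀ {x : X} {s : ℝ}, ‖x‖ ≤ max s 0 → B x ≤ sSup (B '' closedBall (0 : X) (max s 0)) :=
    fun hx ↦ le_csSup (hbdd _) (mem_image_of_mem B (mem_closedBall_zero_iff.2 hx))
  have hmono : Monotone fun s ↦ sSup (B '' closedBall (0 : X) (max s 0)) := fun s t hst ↦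
    csSup_le_csSup (hbdd _) ⟨B 0, mem_image_of_mem B (by simp)⟩
      (image_mono (closedBall_subset_closedBall (max_le_max_right _ hst)))
  obtain ⟨κ, hκ, hκm, hκB⟩ := exists_continuous_monotone_ge hmono
  exact ⟨κ, hκ, hκm, fun s ↦ (hB0 0).trans ((hle (by simp)).trans (hκB s)),
    fun x s hx ↦ (hle (hx.trans (le_max_left _ _))).trans (hκB s)⟩

end Majorants

section Profiles

lemma hasDerivAt_max_sub_zero_sq (s₀ s : ℝ) :
    HasDerivAt (fun s : ℝ ↦ max (s - s₀) 0 ^ 2) (2 * max (s - s₀) 0) s := by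
  have hsq : HasDerivAt (fun s : ℝ ↦ (s - s₀) ^ 2) (2 * (s - s₀)) s :=
    (((hasDerivAt_id s).sub_const s₀).pow 2).congr_deriv (by simp)
  rcases lt_trichotomy s s₀ with h | rfl | h
  · rw [max_eq_right (by linarith), mul_zero]
    refine (hasDerivAt_const s (0 : ℝ)).congr_of_eventuallyEq ?_
    filter_upwards [Iio_mem_nhds h] with y hy
    rw [max_eq_right (sub_nonpos.2 (mem_Iio.1 hy).le), zero_pow two_ne_zero]
  · simp only [sub_self, max_self, mul_zero] at hsq ⊢
    rw [hasDerivAt_iff_isLittleO] at hsq ⊢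
    refine (Asymptotics.isBigO_of_le _ fun y ↦ ?_).trans_isLittleO hsq
    simp only [sub_self, max_self, smul_zero, sub_zero, ne_eq, OfNat.ofNat_ne_zero,
      not_false_eq_true, zero_pow, norm_pow]
    gcongr
    exact abs_max_sub_max_le_abs (y - s) 0 0 |>.trans_eq' (by simp) |>.trans_eq (by simp)
  · rw [max_eq_left (by linarith)]
    refine hsq.congr_of_eventuallyEq ?_
    filter_upwards [Ioi_mem_nhds h] with y hy
    rw [max_eq_left (sub_nonneg.2 (mem_Ioi.1 hy).le)]

/-- A convex function `G` with first two derivatives `G'` and `G''` which vanishes up to `s₀` and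
then grows at rate at least `κ`. -/
structure IsConvexProfile (κ : ℝ → ℝ) (s₀ : ℝ) (G G' G'' : ℝ → ℝ) : Prop where
  hasDerivAt : ∀ s, HasDerivAt G (G' s) s
  hasDerivAt_deriv : ∀ s, HasDerivAt G' (G'' s) s
  continuous_second : Continuous G''
  monotone_deriv : Monotone G'
  monotone_second : Monotone G''
  eq_zero : ∀ s ≤ s₀, G s = 0
  deriv_eq_zero : ∀ s ≤ s₀, G' s = 0
  second_eq_zero : ∀ s ≤ s₀, G'' s = 0
  deriv_nonneg : ∀ s, 0 ≤ G' s
  mul_deriv_le : ∀ s, κ s * G' s ≤ G'' s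
  le_second : ∀ s, s₀ + 1 ≤ s → κ s ≤ G'' s

lemma hasDerivAt_integral_of_continuous {h : ℝ → ℝ} (hh : Continuous h) (a s : ℝ) :
    HasDerivAt (fun s ↦ ∫ t in a..s, h t) (h s) s :=
  intervalIntegral.integral_hasDerivAt_right (hh.intervalIntegrable _ _)
    (hh.stronglyMeasurableAtFilter _ _) hh.continuousAt

/-- The profile is determined by `G' s = (s - s₀)₊² exp (∫ κ)`. -/
lemma exists_isConvexProfile {κ : ℝ → ℝ} (hκ : Continuous κ) (hm : Monotone κ)
    (h0 : ∀ s, 0 ≤ κ s) (s₀ : ℝ) : ∃ G G' G'', IsConvexProfile κ s₀ G G' G'' := by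
  set A : ℝ → ℝ := fun s ↦ ∫ t in s₀..s, κ t
  have hAd : ∀ s, HasDerivAt A (κ s) s := hasDerivAt_integral_of_continuous hκ s₀
  have hAc : Continuous A := continuous_iff_continuousAt.2 fun s ↦ (hAd s).continuousAt
  have hAm : Monotone A := monotone_of_hasDerivAt_nonneg hAd h0
  set ψ : ℝ → ℝ := fun s ↦ max (s - s₀) 0
  have hψc : Continuous ψ := by fun_prop
  have hψ0 : ∀ s, 0 ≤ ψ s := fun s ↦ le_max_right _ _
  have hψm : Monotone ψ := fun s t hst ↦ max_le_max_right _ (by linarith)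
  have hψz : ∀ s ≤ s₀, ψ s = 0 := fun s hs ↦ max_eq_right (by linarith)
  set G' : ℝ → ℝ := fun s ↦ ψ s ^ 2 * Real.exp (A s) with hG'
  set G'' : ℝ → ℝ := fun s ↦ (2 * ψ s + κ s * ψ s ^ 2) * Real.exp (A s) with hG''
  have hd : ∀ s, HasDerivAt G' (G'' s) s := fun s ↦
    ((hasDerivAt_max_sub_zero_sq s₀ s).mul (hAd s).exp).congr_deriv (by simp only [hG'', ψ]; ring)
  have hG'c : Continuous G' := by fun_prop
  have hG''0 : ∀ s, 0 ≤ G'' s := fun s ↦ by have := hψ0 s; have := h0 s; positivity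
  have hκG' : ∀ s, κ s * G' s ≤ G'' s := fun s ↦ by
    simp only [hG', hG'', ← mul_assoc]
    gcongr
    linarith [hψ0 s]
  refine ⟨fun s ↦ ∫ t in s₀..s, G' t, G', G'', ?_, hd, by fun_prop,
    monotone_of_hasDerivAt_nonneg hd hG''0, fun s t hst ↦ ?_, fun s hs ↦ ?_, fun s hs ↦ ?_,
    fun s hs ↦ ?_, fun s ↦ by positivity, fun s ↦ ?_, fun s hs ↦ ?_⟩
  · exact hasDerivAt_integral_of_continuous hG'c s₀
  · have := hψ0 s; have := h0 s; have := hψ0 t; have := h0 t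
    have := hψm hst; have := hm hst; have := hAm hst
    simp only [hG'']
    gcongr
  · refine (intervalIntegral.integral_congr (g := 0) fun t ht ↦ ?_).trans (by simp)
    simp [hG', hψz t (uIcc_of_ge hs ▸ ht).2]
  · simp [hG', hψz s hs]
  · simp [hG'', hψz s hs]
  · exact hκG' s
  · have hψ1 : 1 ≤ ψ s := le_max_of_le_left (by linarith)
    have hA0 : 0 ≤ A s := by simpa [A] using hAm (show s₀ ≤ s by linarith)
    have hG'1 : 1 ≤ G' s := one_le_mul_of_one_le_of_one_le (one_le_pow₀ hψ1) (Real.one_le_exp hA0)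
    exact (le_mul_of_one_le_right (h0 s) hG'1).trans (hκG' s)

namespace IsConvexProfile

variable {κ G G' G'' : ℝ → ℝ} {s₀ : ℝ}

lemma contDiff_deriv (h : IsConvexProfile κ s₀ G G' G'') : ContDiff ℝ 1 G' := by
  rw [contDiff_one_iff_deriv, funext fun s ↦ (h.hasDerivAt_deriv s).deriv]
  exact ⟨fun s ↦ (h.hasDerivAt_deriv s).differentiableAt, h.continuous_second⟩

lemma second_nonneg (h : IsConvexProfile κ s₀ G G' G'') (s : ℝ) : 0 ≤ G'' s := by
  rw [← h.second_eq_zero (min s s₀) (min_le_right _ _)]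
  exact h.monotone_second (min_le_left _ _)

lemma two_mul_le_add_sub (h : IsConvexProfile κ s₀ G G' G'') (s d : ℝ) :
    2 * G s ≤ G (s + d) + G (s - d) := by
  have hconv : ConvexOn ℝ univ G := by
    refine Monotone.convexOn_univ_of_deriv (fun s ↦ (h.hasDerivAt s).differentiableAt) ?_
    rw [funext fun s ↦ (h.hasDerivAt s).deriv]
    exact h.monotone_deriv
  have := hconv.2 (mem_univ (s + d)) (mem_univ (s - d)) one_half_pos.le one_half_pos.le
    (add_halves 1)
  simp only [smul_eq_mul] at this
  rw [show 1 / 2 * (s + d) + 1 / 2 * (s - d) = s by ring] at this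
  linarith

end IsConvexProfile

end Profiles

section SmoothNorm

variable {V : Type*} [NormedAddCommGroup V]

/-- The smooth substitute `√(1 + |x|²)` for the norm. -/
def smoothNorm (x : V) : ℝ := √(1 + ‖x‖ ^ 2)

lemma smoothNorm_sq (x : V) : smoothNorm x ^ 2 = 1 + ‖x‖ ^ 2 := Real.sq_sqrt (by positivity)

lemma one_le_smoothNorm (x : V) : 1 ≤ smoothNorm x :=
  Real.one_le_sqrt.2 (by nlinarith [norm_nonneg x])

lemma smoothNorm_pos (x : V) : 0 < smoothNorm x := zero_lt_one.trans_le (one_le_smoothNorm x)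

lemma norm_le_smoothNorm (x : V) : ‖x‖ ≤ smoothNorm x := Real.le_sqrt_of_sq_le (by linarith)

variable [InnerProductSpace ℝ V]

/-- The gradient of `smoothNorm`. -/
def smoothNormGrad (x : V) : V := (smoothNorm x)⁻¹ • x

lemma norm_smoothNormGrad_le (x : V) : ‖smoothNormGrad x‖ ≤ 1 := by
  rw [smoothNormGrad, norm_smul, norm_inv, Real.norm_of_nonneg (smoothNorm_pos x).le,
    inv_mul_le_one₀ (smoothNorm_pos x)]
  exact norm_le_smoothNorm x

lemma contDiff_smoothNorm : ContDiff ℝ 1 (smoothNorm : V → ℝ) :=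
  (contDiff_const.add (contDiff_norm_sq ℝ)).sqrt fun x ↦ by positivity

lemma contDiff_smoothNormGrad : ContDiff ℝ 1 (smoothNormGrad : V → V) :=
  (contDiff_smoothNorm.inv fun x ↦ (smoothNorm_pos x).ne').smul contDiff_id

lemma hasFDerivAt_smoothNorm (x : V) :
    HasFDerivAt smoothNorm (innerSL ℝ (smoothNormGrad x)) x := by
  have hsq : HasFDerivAt (fun x : V ↦ 1 + ‖x‖ ^ 2) (2 • innerSL ℝ x) x :=
    (hasStrictFDerivAt_norm_sq x).hasFDerivAt.const_add 1
  refine (hsq.sqrt (by positivity)).congr_fderiv ?_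
  rw [smoothNormGrad, map_smul, smoothNorm, ← Nat.cast_smul_eq_nsmul ℝ, smul_smul]
  congr 1
  field_simp
  norm_num

lemma hasFDerivAt_innerSL_comp {h h' : ℝ → ℝ} {ρ : V → ℝ} {w x : V}
    (hh : HasDerivAt h (h' (ρ x)) (ρ x)) (hρ : HasFDerivAt ρ (innerSL ℝ w) x) :
    HasFDerivAt (fun y ↦ h (ρ y)) (innerSL ℝ (h' (ρ x) • w)) x :=
  (hh.comp_hasFDerivAt x hρ).congr_fderiv (by rw [map_smul])

variable [FiniteDimensional ℝ V]

lemma abs_trace_le_finrank_mul_norm (M : V →L[ℝ] V) :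
    |LinearMap.trace ℝ V M| ≤ Module.finrank ℝ V * ‖M‖ := by
  rw [LinearMap.trace_eq_sum_inner _ (stdOrthonormalBasis ℝ V)]
  calc _ ≤ ∑ i, |inner ℝ (stdOrthonormalBasis ℝ V i) (M (stdOrthonormalBasis ℝ V i))| :=
        Finset.abs_sum_le_sum_abs _ _
    _ ≤ ∑ _ : Fin (Module.finrank ℝ V), ‖M‖ := Finset.sum_le_sum fun i _ ↦ by
        refine (abs_real_inner_le_norm _ _).trans ?_
        simpa using M.le_opNorm (stdOrthonormalBasis ℝ V i)
    _ = _ := by simp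

lemma trace_fderiv_smul {h : V → ℝ} {w x : V} {X : V → V} (hh : HasFDerivAt h (innerSL ℝ w) x)
    (hX : DifferentiableAt ℝ X x) :
    LinearMap.trace ℝ V (fderiv ℝ (fun y ↦ h y • X y) x) =
      inner ℝ w (X x) + h x * LinearMap.trace ℝ V (fderiv ℝ X x) := by
  rw [(hh.fun_smul hX.hasFDerivAt).fderiv, ContinuousLinearMap.toLinearMap_add, map_add, add_comm]
  congr 1
  · exact LinearMap.trace_smulRight _ _
  · exact map_smul _ _ _

lemma trace_fderiv_smoothNormGrad (x : V) :
    LinearMap.trace ℝ V (fderiv ℝ smoothNormGrad x) =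
      Module.finrank ℝ V / smoothNorm x - ‖x‖ ^ 2 / smoothNorm x ^ 3 := by
  have hinv := hasFDerivAt_innerSL_comp (h' := fun s ↦ -(s ^ 2)⁻¹)
    (hasDerivAt_inv (smoothNorm_pos x).ne') (hasFDerivAt_smoothNorm x)
  have hid : LinearMap.trace ℝ V (fderiv ℝ (fun y : V ↦ y) x) = Module.finrank ℝ V := by
    rw [fderiv_fun_id]
    exact LinearMap.trace_id ℝ V
  refine (trace_fderiv_smul hinv differentiableAt_fun_id).trans ?_
  rw [hid, smoothNormGrad, smul_smul, real_inner_smul_left, real_inner_self_eq_norm_sq]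
  have := smoothNorm_pos x
  field_simp
  ring

lemma trace_fderiv_smoothNormGrad_nonneg [Nontrivial V] (x : V) :
    0 ≤ LinearMap.trace ℝ V (fderiv ℝ smoothNormGrad x) := by
  have hdim : (1 : ℝ) ≤ Module.finrank ℝ V := by exact_mod_cast Module.finrank_pos (R := ℝ) (M := V)
  have hr := smoothNorm_pos x
  rw [trace_fderiv_smoothNormGrad, sub_nonneg, div_le_div_iff₀ (by positivity) hr]
  have : 0 ≤ smoothNorm x ^ 3 := by positivity
  nlinarith [smoothNorm_sq x]

lemma trace_fderiv_smoothNormGrad_le (x : V) :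
    LinearMap.trace ℝ V (fderiv ℝ smoothNormGrad x) ≤ Module.finrank ℝ V := by
  have hr := smoothNorm_pos x
  rw [trace_fderiv_smoothNormGrad]
  calc _ ≤ (Module.finrank ℝ V : ℝ) / smoothNorm x := sub_le_self _ (by positivity)
    _ ≤ _ := div_le_self (by positivity) (one_le_smoothNorm x)

end SmoothNorm

section ConformalExponent

variable {V : Type*} [NormedAddCommGroup V] [InnerProductSpace ℝ V]

/-- The function `φ` is `C²` with gradient `f`, which is large outside the ball of radius `R`. -/
structure IsExpandingPotential (φ : V → ℝ) (f : V → V) (R : ℝ) : Prop where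
  hasFDerivAt : ∀ x, HasFDerivAt φ (innerSL ℝ (f x)) x
  contDiff_grad : ContDiff ℝ 1 f
  radius_pos : 0 < R
  ten_le_norm : ∀ x, R ≤ ‖x‖ → 10 ≤ ‖f x‖

/-- The exponent `u` of the metric `exp (2 * u) |dx|²`, symmetric under `φ ↦ -φ` and built from a
convex profile `G`. -/
def conformalExponent (G : ℝ → ℝ) (φ : V → ℝ) (x : V) : ℝ :=
  G (smoothNorm x + φ x) + G (smoothNorm x - φ x) - 2 * G (smoothNorm x)

/-- The gradient of `conformalExponent`, where `G'` is the derivative of `G` and `f` is the gradient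
of `φ`. -/
def conformalExponentGrad (G' : ℝ → ℝ) (φ : V → ℝ) (f : V → V) (x : V) : V :=
  G' (smoothNorm x + φ x) • (smoothNormGrad x + f x) +
    G' (smoothNorm x - φ x) • (smoothNormGrad x - f x) -
    (2 * G' (smoothNorm x)) • smoothNormGrad x

/-- A convex profile which vanishes on the values taken by `smoothNorm ± φ` on the ball of radius
`R` and whose growth rate dominates the derivative of `f`. -/
structure IsAdaptedProfile (φ : V → ℝ) (f : V → V) (R : ℝ) (κ : ℝ → ℝ) (s₀ : ℝ)
    (G G' G'' : ℝ → ℝ) : Prop extends IsConvexProfile κ s₀ G G' G'' where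
  smoothNorm_add_abs_le : ∀ x, ‖x‖ ≤ R → smoothNorm x + |φ x| ≤ s₀
  radius_le : R ≤ s₀
  le_rate : ∀ x s, ‖x‖ ≤ s → 100 * (1 + ‖fderiv ℝ f x‖) ^ 3 ≤ κ s

variable {φ : V → ℝ} {f : V → V} {R s₀ : ℝ} {κ G G' G'' : ℝ → ℝ} {x : V}

namespace IsExpandingPotential

lemma continuous (h : IsExpandingPotential φ f R) : Continuous φ :=
  continuous_iff_continuousAt.2 fun x ↦ (h.hasFDerivAt x).continuousAt

lemma contDiff (h : IsExpandingPotential φ f R) : ContDiff ℝ 1 φ := by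
  rw [contDiff_one_iff_fderiv, funext fun x ↦ (h.hasFDerivAt x).fderiv]
  exact ⟨fun x ↦ (h.hasFDerivAt x).differentiableAt,
    (innerSL ℝ).continuous.comp h.contDiff_grad.continuous⟩

lemma neg (h : IsExpandingPotential φ f R) : IsExpandingPotential (-φ) (-f) R where
  hasFDerivAt x := (h.hasFDerivAt x).neg.congr_fderiv (by simp)
  contDiff_grad := h.contDiff_grad.neg
  radius_pos := h.radius_pos
  ten_le_norm x hx := by simpa using h.ten_le_norm x hx

lemma hasFDerivAt_smoothNorm_add (h : IsExpandingPotential φ f R) (x : V) :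
    HasFDerivAt (fun y ↦ smoothNorm y + φ y) (innerSL ℝ (smoothNormGrad x + f x)) x :=
  ((hasFDerivAt_smoothNorm x).add (h.hasFDerivAt x)).congr_fderiv (by simp)

lemma hasFDerivAt_smoothNorm_sub (h : IsExpandingPotential φ f R) (x : V) :
    HasFDerivAt (fun y ↦ smoothNorm y - φ y) (innerSL ℝ (smoothNormGrad x - f x)) x :=
  ((hasFDerivAt_smoothNorm x).sub (h.hasFDerivAt x)).congr_fderiv (by simp)

lemma exists_isAdaptedProfile [ProperSpace V] (h : IsExpandingPotential φ f R) :
    ∃ κ s₀ G G' G'', IsAdaptedProfile φ f R κ s₀ G G' G'' := by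
  have hφ := h.continuous
  have hr : Continuous (smoothNorm : V → ℝ) := contDiff_smoothNorm.continuous
  have hf' : Continuous (fderiv ℝ f) := h.contDiff_grad.continuous_fderiv one_ne_zero
  obtain ⟨s₁, hs₁⟩ := (isCompact_closedBall (0 : V) R).bddAbove_image
    (f := fun x ↦ smoothNorm x + |φ x|) (by fun_prop)
  obtain ⟨κ, hκ, hκm, hκ0, hκf⟩ := exists_continuous_monotone_radial_majorant
    (B := fun x ↦ 100 * (1 + ‖fderiv ℝ f x‖) ^ 3) (by fun_prop) (fun x ↦ by positivity)
  obtain ⟨G, G', G'', hG⟩ := exists_isConvexProfile hκ hκm hκ0 (max s₁ R)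
  exact ⟨κ, max s₁ R, G, G', G'', hG, fun x hx ↦ (hs₁ ⟨x, by simpa using hx, rfl⟩).trans
    (le_max_left _ _), le_max_right _ _, hκf⟩

lemma eighty_one_le_norm_add_sq (h : IsExpandingPotential φ f R) (hx : R ≤ ‖x‖) :
    81 ≤ ‖smoothNormGrad x + f x‖ ^ 2 := by
  have := norm_le_add_norm_add (f x) (smoothNormGrad x)
  rw [add_comm (f x)] at this
  nlinarith [h.ten_le_norm x hx, norm_smoothNormGrad_le x]

end IsExpandingPotential

omit [InnerProductSpace ℝ V] in
lemma conformalExponent_neg (G : ℝ → ℝ) (φ : V → ℝ) :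
    conformalExponent G (-φ) = conformalExponent G φ := by
  ext1 x
  simp only [conformalExponent, Pi.neg_apply, sub_neg_eq_add, ← sub_eq_add_neg]
  ring

lemma conformalExponentGrad_neg (G' : ℝ → ℝ) (φ : V → ℝ) (f : V → V) :
    conformalExponentGrad G' (-φ) (-f) = conformalExponentGrad G' φ f := by
  ext1 x
  simp only [conformalExponentGrad, Pi.neg_apply, sub_neg_eq_add, ← sub_eq_add_neg]
  abel

namespace IsAdaptedProfile

lemma neg (h : IsAdaptedProfile φ f R κ s₀ G G' G'') :
    IsAdaptedProfile (-φ) (-f) R κ s₀ G G' G'' where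
  __ := h
  smoothNorm_add_abs_le x hx := by simpa using h.smoothNorm_add_abs_le x hx
  le_rate x s hx := by simpa [fderiv_neg] using h.le_rate x s hx

lemma smoothNorm_le (h : IsAdaptedProfile φ f R κ s₀ G G' G'') (hx : ‖x‖ ≤ R) :
    smoothNorm x ≤ s₀ := by
  linarith [h.smoothNorm_add_abs_le x hx, abs_nonneg (φ x)]

lemma smoothNorm_add_le (h : IsAdaptedProfile φ f R κ s₀ G G' G'') (hx : ‖x‖ ≤ R) :
    smoothNorm x + φ x ≤ s₀ := by
  linarith [h.smoothNorm_add_abs_le x hx, le_abs_self (φ x)]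

lemma smoothNorm_sub_le (h : IsAdaptedProfile φ f R κ s₀ G G' G'') (hx : ‖x‖ ≤ R) :
    smoothNorm x - φ x ≤ s₀ := by
  linarith [h.smoothNorm_add_abs_le x hx, neg_abs_le (φ x)]

lemma isConformalFactor (h : IsAdaptedProfile φ f R κ s₀ G G' G'')
    (hφ : IsExpandingPotential φ f R) :
    IsConformalFactor (conformalExponent G φ) (conformalExponentGrad G' φ f) R where
  hasFDerivAt x := by
    refine (((hasFDerivAt_innerSL_comp (h.hasDerivAt _) (hφ.hasFDerivAt_smoothNorm_add x)).add
      (hasFDerivAt_innerSL_comp (h.hasDerivAt _) (hφ.hasFDerivAt_smoothNorm_sub x))).sub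
      ((hasFDerivAt_innerSL_comp (h.hasDerivAt _) (hasFDerivAt_smoothNorm x)).const_mul
        2)).congr_fderiv ?_
    simp only [conformalExponentGrad, map_add, map_sub, map_smul, smul_smul]
  contDiff_grad :=
    have hr : ContDiff ℝ 1 (smoothNorm : V → ℝ) := contDiff_smoothNorm
    have hr' : ContDiff ℝ 1 (smoothNormGrad : V → V) := contDiff_smoothNormGrad
    have hG' := h.contDiff_deriv
    (((hG'.comp (hr.add hφ.contDiff)).smul (hr'.add hφ.contDiff_grad)).add
      ((hG'.comp (hr.sub hφ.contDiff)).smul (hr'.sub hφ.contDiff_grad))).sub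
      ((contDiff_const.mul (hG'.comp hr)).smul hr')
  nonneg x := sub_nonneg.2 (h.two_mul_le_add_sub _ _)
  radius_pos := hφ.radius_pos
  eq_zero x hx := by
    simp [conformalExponent, h.eq_zero _ (h.smoothNorm_le hx.le),
      h.eq_zero _ (h.smoothNorm_add_le hx.le), h.eq_zero _ (h.smoothNorm_sub_le hx.le)]

lemma mul_deriv_le_second (h : IsAdaptedProfile φ f R κ s₀ G G' G'') {s : ℝ} (hx : ‖x‖ ≤ s) :
    100 * (1 + ‖fderiv ℝ f x‖) ^ 3 * G' s ≤ G'' s :=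
  (mul_le_mul_of_nonneg_right (h.le_rate x s hx) (h.deriv_nonneg s)).trans (h.mul_deriv_le s)

lemma le_second_smoothNorm (h : IsAdaptedProfile φ f R κ s₀ G G' G'') (hx : s₀ + 1 ≤ ‖x‖) :
    100 * (1 + ‖fderiv ℝ f x‖) ^ 3 ≤ G'' (smoothNorm x) :=
  (h.le_rate x _ (norm_le_smoothNorm x)).trans (h.le_second _ (hx.trans (norm_le_smoothNorm x)))

lemma trace_fderiv_conformalExponentGrad [FiniteDimensional ℝ V]
    (h : IsAdaptedProfile φ f R κ s₀ G G' G'') (hφ : IsExpandingPotential φ f R) (x : V) :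
    LinearMap.trace ℝ V (fderiv ℝ (conformalExponentGrad G' φ f) x) =
      (G'' (smoothNorm x + φ x) * ‖smoothNormGrad x + f x‖ ^ 2 + G' (smoothNorm x + φ x) *
        (LinearMap.trace ℝ V (fderiv ℝ smoothNormGrad x) + LinearMap.trace ℝ V (fderiv ℝ f x))) +
      (G'' (smoothNorm x - φ x) * ‖smoothNormGrad x - f x‖ ^ 2 + G' (smoothNorm x - φ x) *
        (LinearMap.trace ℝ V (fderiv ℝ smoothNormGrad x) - LinearMap.trace ℝ V (fderiv ℝ f x))) -
      (2 * G'' (smoothNorm x) * ‖smoothNormGrad x‖ ^ 2 + 2 * G' (smoothNorm x) *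
        LinearMap.trace ℝ V (fderiv ℝ smoothNormGrad x)) := by
  have hf : DifferentiableAt ℝ f x := hφ.contDiff_grad.differentiable one_ne_zero x
  have hr : DifferentiableAt ℝ (smoothNormGrad : V → V) x :=
    contDiff_smoothNormGrad.differentiable one_ne_zero x
  have hadd := hasFDerivAt_innerSL_comp (h.hasDerivAt_deriv _) (hφ.hasFDerivAt_smoothNorm_add x)
  have hsub := hasFDerivAt_innerSL_comp (h.hasDerivAt_deriv _) (hφ.hasFDerivAt_smoothNorm_sub x)
  have hmid : HasFDerivAt (fun y ↦ 2 * G' (smoothNorm y))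
      (innerSL ℝ ((2 * G'' (smoothNorm x)) • smoothNormGrad x)) x :=
    ((hasFDerivAt_innerSL_comp (h.hasDerivAt_deriv _) (hasFDerivAt_smoothNorm x)).const_mul
      2).congr_fderiv (by rw [map_smul, map_smul, smul_smul])
  have hsum := (((hadd.differentiableAt.fun_smul (hr.add hf)).hasFDerivAt.add
    (hsub.differentiableAt.fun_smul (hr.sub hf)).hasFDerivAt).sub
    (hmid.differentiableAt.fun_smul hr).hasFDerivAt).fderiv
  refine (congrArg (fun M : V →L[ℝ] V ↦ LinearMap.trace ℝ V M) hsum).trans ?_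
  rw [ContinuousLinearMap.toLinearMap_sub, ContinuousLinearMap.toLinearMap_add, map_sub, map_add,
    trace_fderiv_smul hadd (hr.add hf), trace_fderiv_smul hsub (hr.sub hf),
    trace_fderiv_smul hmid hr, fderiv_add hr hf, fderiv_sub hr hf]
  simp only [ContinuousLinearMap.toLinearMap_add, ContinuousLinearMap.toLinearMap_sub, map_add,
    map_sub, Pi.add_apply, Pi.sub_apply, real_inner_smul_left, real_inner_self_eq_norm_sq]

end IsAdaptedProfile

end ConformalExponent

section PlanarTrace

variable {φ : ℂ → ℝ} {f : ℂ → ℂ} {R s₀ : ℝ} {κ G G' G'' : ℝ → ℝ} {x : ℂ}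

namespace IsAdaptedProfile

lemma trace_eq_zero_of_norm_le (h : IsAdaptedProfile φ f R κ s₀ G G' G'')
    (hφ : IsExpandingPotential φ f R) (hx : ‖x‖ ≤ R) :
    LinearMap.trace ℝ ℂ (fderiv ℝ (conformalExponentGrad G' φ f) x) = 0 := by
  simp [h.trace_fderiv_conformalExponentGrad hφ, h.deriv_eq_zero _ (h.smoothNorm_le hx),
    h.deriv_eq_zero _ (h.smoothNorm_add_le hx), h.deriv_eq_zero _ (h.smoothNorm_sub_le hx),
    h.second_eq_zero _ (h.smoothNorm_le hx), h.second_eq_zero _ (h.smoothNorm_add_le hx),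
    h.second_eq_zero _ (h.smoothNorm_sub_le hx)]

/-- The term `G'' (r + φ) * |∇r + f|²` dominates all the negative ones. -/
lemma trace_nonneg_of_nonneg (h : IsAdaptedProfile φ f R κ s₀ G G' G'')
    (hφ : IsExpandingPotential φ f R) (hx : R ≤ ‖x‖) (hφx : 0 ≤ φ x) :
    0 ≤ LinearMap.trace ℝ ℂ (fderiv ℝ (conformalExponentGrad G' φ f) x) := by
  rw [h.trace_fderiv_conformalExponentGrad hφ]
  set r := smoothNorm x
  set t := LinearMap.trace ℝ ℂ (fderiv ℝ smoothNormGrad x)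
  set τ := LinearMap.trace ℝ ℂ (fderiv ℝ f x)
  set K := ‖fderiv ℝ f x‖
  have ht0 : 0 ≤ t := trace_fderiv_smoothNormGrad_nonneg x
  have ht2 : t ≤ 2 := by simpa using trace_fderiv_smoothNormGrad_le x
  have hτ : |τ| ≤ 2 * K := by simpa using abs_trace_le_finrank_mul_norm (fderiv ℝ f x)
  have hK : 0 ≤ K := norm_nonneg _
  have hc : 0 ≤ G' (r - φ x) := h.deriv_nonneg _
  have hcb : G' (r - φ x) ≤ G' r := h.monotone_deriv (by linarith)
  have hba : G' r ≤ G' (r + φ x) := h.monotone_deriv (by linarith)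
  have hB : 0 ≤ G'' r := h.second_nonneg _
  have hBA : G'' r ≤ G'' (r + φ x) := h.monotone_second (by linarith)
  have hKA : 100 * (1 + K) * G' (r + φ x) ≤ G'' (r + φ x) := by
    refine le_trans ?_ (h.mul_deriv_le_second (x := x) (by linarith [norm_le_smoothNorm x]))
    have := h.deriv_nonneg (r + φ x)
    gcongr
    exact le_self_pow₀ (by linarith) three_ne_zero
  have hmain : 81 * G'' (r + φ x) ≤ G'' (r + φ x) * ‖smoothNormGrad x + f x‖ ^ 2 := by
    nlinarith [hφ.eighty_one_le_norm_add_sq hx]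
  have hmid : G'' r * ‖smoothNormGrad x‖ ^ 2 ≤ G'' (r + φ x) :=
    (mul_le_of_le_one_right hB (pow_le_one₀ (norm_nonneg _) (norm_smoothNormGrad_le x))).trans hBA
  have hminus : 0 ≤ G'' (r - φ x) * ‖smoothNormGrad x - f x‖ ^ 2 :=
    mul_nonneg (h.second_nonneg _) (sq_nonneg _)
  obtain ⟨hτ1, hτ2⟩ := abs_le.1 hτ
  have hta : -(G' (r + φ x) * (2 * K)) ≤ G' (r + φ x) * (t + τ) := by nlinarith
  have htc : -(G' (r + φ x) * (2 * K)) ≤ G' (r - φ x) * (t - τ) := by nlinarith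
  have htb : G' r * t ≤ G' (r + φ x) * 2 := by nlinarith
  nlinarith [mul_nonneg hK (hc.trans (hcb.trans hba))]

lemma trace_nonneg (h : IsAdaptedProfile φ f R κ s₀ G G' G'') (hφ : IsExpandingPotential φ f R)
    (x : ℂ) : 0 ≤ LinearMap.trace ℝ ℂ (fderiv ℝ (conformalExponentGrad G' φ f) x) := by
  rcases le_total ‖x‖ R with hx | hx
  · exact (h.trace_eq_zero_of_norm_le hφ hx).ge
  rcases le_total 0 (φ x) with hφx | hφx
  · exact h.trace_nonneg_of_nonneg hφ hx hφx
  · rw [← conformalExponentGrad_neg]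
    exact h.neg.trace_nonneg_of_nonneg hφ.neg hx (neg_nonneg.2 hφx)

end IsAdaptedProfile

end PlanarTrace

section BackwardContinuation

lemma eventually_lt_left_of_hasDerivAt_neg {h : ℝ → ℝ} {h' t : ℝ} (hd : HasDerivAt h h' t)
    (hneg : h' < 0) : ∀ᶠ s in 𝓝[<] t, h t < h s := by
  have hslope : ∀ᶠ s in 𝓝[<] t, slope h t s < 0 :=
    (hasDerivWithinAt_iff_tendsto_slope' self_notMem_Iio).1 hd.hasDerivWithinAt
      |>.eventually_lt_const hneg
  filter_upwards [hslope, self_mem_nhdsWithin] with s hs hst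
  rw [slope_def_field, div_lt_iff_of_neg (sub_neg.2 hst), zero_mul] at hs
  exact sub_pos.1 hs

lemma forall_le_and_le_of_hasDerivAt_neg {H ρ : ℝ → ℝ} {a b c d : ℝ}
    (hH : ContinuousOn H (Icc a b)) (hρ : ContinuousOn ρ (Icc a b)) (hHb : c ≤ H b) (hρb : d ≤ ρ b)
    (hstepH : ∀ t ∈ Icc a b, H t = c → d ≤ ρ t → ∃ m < 0, HasDerivAt H m t)
    (hstepρ : ∀ t ∈ Icc a b, c ≤ H t → d ≤ ρ t → ∃ m < 0, HasDerivAt ρ m t) :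
    ∀ t ∈ Icc a b, c ≤ H t ∧ d ≤ ρ t := by
  suffices hsub : Icc a b ⊆ {t ∈ Icc a b | c ≤ H t ∧ d ≤ ρ t} from fun t ht ↦ (hsub ht).2
  rcases lt_or_ge b a with hba | hab
  · simp [Icc_eq_empty hba.not_ge]
  refine IsClosed.Icc_subset_of_forall_exists_lt ?_ ⟨right_mem_Icc.2 hab, hHb, hρb⟩ ?_
  · rw [inter_eq_left.2 (sep_subset _ _), sep_and]
    exact (isClosed_Icc.isClosed_le continuousOn_const hH).inter
      (isClosed_Icc.isClosed_le continuousOn_const hρ)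
  · rintro t ⟨⟨ht, hHt, hρt⟩, hta⟩ y hyt
    have hevρ : ∀ᶠ s in 𝓝[<] t, d ≤ ρ s := by
      obtain ⟨m, hm, hd⟩ := hstepρ t ht hHt hρt
      filter_upwards [eventually_lt_left_of_hasDerivAt_neg hd hm] with s hs using hρt.trans hs.le
    have hevH : ∀ᶠ s in 𝓝[<] t, c ≤ H s := by
      rcases hHt.eq_or_lt' with hHt | hHt
      · obtain ⟨m, hm, hd⟩ := hstepH t ht hHt hρt
        filter_upwards [eventually_lt_left_of_hasDerivAt_neg hd hm] with s hs
        exact hHt.ge.trans hs.le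
      · have hcont : Tendsto H (𝓝[Ioc a t] t) (𝓝 (H t)) :=
          (hH t ht).mono (Ioc_subset_Icc_self.trans (Icc_subset_Icc_right ht.2))
        have hle : 𝓝[<] t ≤ 𝓝[Ioc a t] t :=
          nhdsWithin_le_of_mem (mem_of_superset (Ioo_mem_nhdsLT hta.1) Ioo_subset_Ioc_self)
        filter_upwards [hle (hcont.eventually_const_lt hHt)] with s hs using hs.le
    have hIco := Ico_mem_nhdsLT (max_lt (mem_Iio.1 hyt) hta.1)
    obtain ⟨s, hHs, hρs, hs⟩ := (hevH.and (hevρ.and hIco)).exists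
    exact ⟨s, ⟨⟨(le_max_right _ _).trans hs.1, hs.2.le.trans ht.2⟩, hHs, hρs⟩,
      (le_max_left _ _).trans hs.1, hs.2⟩

lemma exists_last_le {h : ℝ → ℝ} {a b y : ℝ} (hab : a ≤ b) (hh : ContinuousOn h (Icc a b))
    (ha : h a ≤ y) (hb : y < h b) : ∃ c ∈ Ico a b, h c ≤ y ∧ ∀ t ∈ Icc c b, y ≤ h t := by
  have hcomp : IsCompact {t ∈ Icc a b | h t ≤ y} :=
    isCompact_Icc.of_isClosed_subset (isClosed_Icc.isClosed_le hh continuousOn_const)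
      (sep_subset _ _)
  obtain ⟨c, ⟨hc, hcy⟩, hmax⟩ := hcomp.exists_isGreatest ⟨a, left_mem_Icc.2 hab, ha⟩
  have hcb : c < b := lt_of_le_of_ne hc.2 (by rintro rfl; exact hcy.not_gt hb)
  have hlt : ∀ t ∈ Ioc c b, y < h t := fun t ht ↦ by
    by_contra! hle
    exact (hmax ⟨⟨hc.1.trans ht.1.le, ht.2⟩, hle⟩).not_gt ht.1
  refine ⟨c, ⟨hc.1, hcb⟩, hcy, fun t ht ↦ ?_⟩
  rcases ht.1.eq_or_lt with rfl | hct
  · have hcont : Tendsto h (𝓝[Ioc c b] c) (𝓝 (h c)) :=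
      (hh c hc).mono (Ioc_subset_Icc_self.trans (Icc_subset_Icc_left hc.1))
    rw [nhdsWithin_Ioc_eq_nhdsGT hcb] at hcont
    refine ge_of_tendsto hcont ?_
    filter_upwards [Ioc_mem_nhdsGT hcb] with s hs using (hlt s hs).le
  · exact (hlt t ⟨hct, ht.2⟩).le

end BackwardContinuation

section GeodesicArc

variable {V : Type*} [NormedAddCommGroup V] [InnerProductSpace ℝ V]

/-- The curve `x` moves with Euclidean speed `σ` in the Euclidean unit direction `T` along a
geodesic of the metric `exp (2 * u) |dx|²`, where `g` is the gradient of `u`. -/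
structure IsGeodesicArc (g : V → V) (x T : ℝ → V) (σ : ℝ → ℝ) (I : Set ℝ) : Prop where
  norm_direction : ∀ t ∈ I, ‖T t‖ = 1
  speed_pos : ∀ t ∈ I, 0 < σ t
  hasDerivAt : ∀ t ∈ I, HasDerivAt x (σ t • T t) t
  hasDerivAt_direction : ∀ t ∈ I,
    HasDerivAt T (σ t • (g (x t) - inner ℝ (g (x t)) (T t) • T t)) t

namespace IsGeodesicArc

variable {g : V → V} {x T : ℝ → V} {σ : ℝ → ℝ} {I J : Set ℝ} {t : ℝ}

lemma mono (h : IsGeodesicArc g x T σ I) (hJ : J ⊆ I) : IsGeodesicArc g x T σ J where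
  norm_direction t ht := h.norm_direction t (hJ ht)
  speed_pos t ht := h.speed_pos t (hJ ht)
  hasDerivAt t ht := h.hasDerivAt t (hJ ht)
  hasDerivAt_direction t ht := h.hasDerivAt_direction t (hJ ht)

lemma continuousOn (h : IsGeodesicArc g x T σ I) : ContinuousOn x I :=
  fun t ht ↦ (h.hasDerivAt t ht).continuousAt.continuousWithinAt

lemma hasDerivAt_comp (h : IsGeodesicArc g x T σ I) (ht : t ∈ I) {ρ : V → ℝ} {w : V}
    (hρ : HasFDerivAt ρ (innerSL ℝ w) (x t)) :
    HasDerivAt (fun s ↦ ρ (x s)) (σ t * inner ℝ w (T t)) t :=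
  (hρ.comp_hasDerivAt t (h.hasDerivAt t ht)).congr_deriv (by
    rw [innerSL_apply_apply, real_inner_smul_right])

end IsGeodesicArc

/-- In the coordinates `(x, p)` of the cotangent bundle, the unit direction is `p / |p|`. -/
lemma IsConformalFactor.isGeodesicArc {u : V → ℝ} {g : V → V} {R c : ℝ}
    (h : IsConformalFactor u g R) (hc : 0 < c) {Y : ℝ → V × V} {I : Set ℝ}
    (hY : ∀ t ∈ I, HasDerivAt Y (geodesicField u g (Y t)) t)
    (hnorm : ∀ t ∈ I, ‖(Y t).2‖ = Real.exp (u (Y t).1) * c) :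
    IsGeodesicArc g (fun t ↦ (Y t).1) (fun t ↦ (Real.exp (-u (Y t).1) / c) • (Y t).2)
      (fun t ↦ Real.exp (-u (Y t).1) * c) I := by
  have hexp (t : ℝ) :
      Real.exp (-2 * u (Y t).1) = Real.exp (-u (Y t).1) * Real.exp (-u (Y t).1) := by
    rw [← Real.exp_add]
    ring_nf
  have hx (t : ℝ) (ht : t ∈ I) : HasDerivAt (fun t ↦ (Y t).1)
      ((Real.exp (-u (Y t).1) * c) • (Real.exp (-u (Y t).1) / c) • (Y t).2) t := by
    refine (hasDerivAt_fst_comp (hY t ht)).congr_deriv ?_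
    rw [geodesicField, smul_smul, hexp]
    field_simp
  refine ⟨fun t ht ↦ ?_, fun t _ ↦ by positivity, hx, fun t ht ↦ ?_⟩
  · rw [norm_smul, hnorm t ht, Real.norm_of_nonneg (by positivity), Real.exp_neg]
    field_simp
  · have hu := ((h.hasFDerivAt (Y t).1).comp_hasDerivAt t (hx t ht)).neg.exp.div_const c
    refine (hu.smul (hasDerivAt_snd_comp (hY t ht))).congr_deriv ?_
    simp only [geodesicField, hnorm t ht, hexp, Pi.neg_apply, Function.comp_apply,
      innerSL_apply_apply, real_inner_smul_right, smul_sub, smul_smul, Real.exp_neg]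
    rw [sub_eq_add_neg, ← neg_smul]
    congr 2 <;> field_simp

end GeodesicArc

section Cosine

variable {V : Type*} [NormedAddCommGroup V] [InnerProductSpace ℝ V]

lemma norm_sub_inner_smul_sq {a b : V} (ha : ‖a‖ = 1) (hb : ‖b‖ = 1) :
    ‖a - inner ℝ a b • b‖ ^ 2 = 1 - inner ℝ a b ^ 2 := by
  rw [norm_sub_sq_real, norm_smul, real_inner_smul_right, ha, hb, Real.norm_eq_abs, mul_one, sq_abs]
  ring

lemma norm_sub_inner_smul_le_one {a b : V} (ha : ‖a‖ = 1) (hb : ‖b‖ = 1) :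
    ‖a - inner ℝ a b • b‖ ≤ 1 := by
  refine (sq_le_one_iff₀ (norm_nonneg _)).1 ?_
  rw [norm_sub_inner_smul_sq ha hb]
  linarith [sq_nonneg (inner ℝ a b)]

lemma hasDerivAt_norm_comp {F : ℝ → V} {F' : V} {t : ℝ} (hF : HasDerivAt F F' t) (h0 : F t ≠ 0) :
    HasDerivAt (fun s ↦ ‖F s‖) (inner ℝ (F t) F' / ‖F t‖) t := by
  have hsqrt := hF.norm_sq.sqrt (pow_ne_zero 2 (norm_ne_zero_iff.2 h0))
  simp only [Real.sqrt_sq (norm_nonneg _)] at hsqrt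
  exact hsqrt.congr_deriv (mul_div_mul_left _ _ two_ne_zero)

lemma hasDerivAt_normalize_comp {F : ℝ → V} {F' : V} {t : ℝ} (hF : HasDerivAt F F' t)
    (h0 : F t ≠ 0) : HasDerivAt (fun s ↦ ‖F s‖⁻¹ • F s)
      (‖F t‖⁻¹ • (F' - inner ℝ (‖F t‖⁻¹ • F t) F' • ‖F t‖⁻¹ • F t)) t := by
  have hN := norm_ne_zero_iff.2 h0
  refine (((hasDerivAt_norm_comp hF h0).fun_inv hN).fun_smul hF).congr_deriv ?_
  rw [real_inner_smul_left, smul_sub, sub_eq_add_neg, ← smul_neg, ← neg_smul, smul_smul, smul_smul]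
  congr 2
  field_simp

end Cosine

section Barrier

variable {V : Type*} [NormedAddCommGroup V] [InnerProductSpace ℝ V] {φ : V → ℝ} {f : V → V}
  {R s₀ : ℝ} {κ G G' G'' : ℝ → ℝ} {x T : ℝ → V} {σ : ℝ → ℝ} {I : Set ℝ} {t : ℝ}

lemma IsAdaptedProfile.mul_le_inner_conformalExponentGrad
    (h : IsAdaptedProfile φ f R κ s₀ G G' G'') {y : V} (hφy : 0 ≤ φ y) (n : V) :
    (G' (smoothNorm y + φ y) - G' (smoothNorm y - φ y)) * (inner ℝ (f y) n - ‖n‖) ≤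
      inner ℝ (conformalExponentGrad G' φ f y) n := by
  have hcb : G' (smoothNorm y - φ y) ≤ G' (smoothNorm y) := h.monotone_deriv (by linarith)
  have hba : G' (smoothNorm y) ≤ G' (smoothNorm y + φ y) := h.monotone_deriv (by linarith)
  have hn : |inner ℝ (smoothNormGrad y) n| ≤ ‖n‖ := (abs_real_inner_le_norm _ _).trans
    (mul_le_of_le_one_left (norm_nonneg _) (norm_smoothNormGrad_le y))
  set a := G' (smoothNorm y + φ y)
  set b := G' (smoothNorm y)
  set c := G' (smoothNorm y - φ y)
  have hcoef : |a + c - 2 * b| ≤ a - c := abs_le.2 ⟨by linarith, by linarith⟩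
  have hmul : |(a + c - 2 * b) * inner ℝ (smoothNormGrad y) n| ≤ (a - c) * ‖n‖ := by
    rw [abs_mul]
    exact mul_le_mul hcoef hn (abs_nonneg _) (sub_nonneg.2 (hcb.trans hba))
  rw [conformalExponentGrad, inner_sub_left, inner_add_left, real_inner_smul_left,
    real_inner_smul_left, real_inner_smul_left, inner_add_left, inner_sub_left]
  linarith [(abs_le.1 hmul).1]

/-- The cosine of the angle between the gradient `f` and the direction of the arc. -/
def gradientCosine (f : V → V) (x T : ℝ → V) (t : ℝ) : ℝ := inner ℝ (‖f (x t)‖⁻¹ • f (x t)) (T t)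

/-- The function `G' (r + φ) - G' r` along the arc. -/
def profileGap (G' : ℝ → ℝ) (φ : V → ℝ) (x : ℝ → V) (t : ℝ) : ℝ :=
  G' (smoothNorm (x t) + φ (x t)) - G' (smoothNorm (x t))

/-- Large exactly where the arc runs against the gradient. The second term is bounded, so that it
barely affects the meaning of the first, but its derivative makes up for the error terms in the
derivative of the first. -/
def angleBarrier (G' : ℝ → ℝ) (φ : V → ℝ) (f : V → V) (x T : ℝ → V) (t : ℝ) : ℝ :=
  -gradientCosine f x T t + 0.05 * Real.arctan (profileGap G' φ x t)

lemma norm_mul_gradientCosine (h0 : f (x t) ≠ 0) :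
    ‖f (x t)‖ * gradientCosine f x T t = inner ℝ (f (x t)) (T t) := by
  rw [gradientCosine, real_inner_smul_left, mul_inv_cancel_left₀ (norm_ne_zero_iff.2 h0)]

lemma gradientCosine_le_of_inner_le {s c : ℝ} {p : V} (h0 : f (x t) ≠ 0) (hs : 0 ≤ s)
    (hT : ‖s • p‖ = 1) (hp : inner ℝ (f (x t)) p ≤ c * (‖f (x t)‖ * ‖p‖)) (hTp : T t = s • p) :
    gradientCosine f x T t ≤ c := by
  refine le_of_mul_le_mul_left ?_ (norm_pos_iff.2 h0)
  rw [norm_mul_gradientCosine h0, hTp, real_inner_smul_right]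
  rw [norm_smul, Real.norm_of_nonneg hs] at hT
  calc s * inner ℝ (f (x t)) p ≤ s * (c * (‖f (x t)‖ * ‖p‖)) := by gcongr
    _ = ‖f (x t)‖ * c * (s * ‖p‖) := by ring
    _ = ‖f (x t)‖ * c := by rw [hT, mul_one]

lemma IsExpandingPotential.ne_zero (hφ : IsExpandingPotential φ f R) {y : V} (hy : R ≤ ‖y‖) :
    f y ≠ 0 :=
  norm_pos_iff.1 (by linarith [hφ.ten_le_norm y hy])

lemma gradientCosine_le_of_le_angleBarrier (h : 0.65 ≤ angleBarrier G' φ f x T t) :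
    gradientCosine f x T t ≤ -0.57 := by
  rw [angleBarrier] at h
  linarith [Real.arctan_lt_pi_div_two (profileGap G' φ x t), Real.pi_lt_d2]

namespace IsGeodesicArc

lemma abs_inner_smoothNormGrad_le {g : V → V} (hx : IsGeodesicArc g x T σ I) (ht : t ∈ I) :
    |inner ℝ (smoothNormGrad (x t)) (T t)| ≤ 1 :=
  (abs_real_inner_le_norm _ _).trans
    (mul_le_one₀ (norm_smoothNormGrad_le _) (norm_nonneg _) (hx.norm_direction t ht).le)

lemma hasDerivAt_gradientCosine {g : V → V} (hx : IsGeodesicArc g x T σ I) (ht : t ∈ I)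
    (hf : DifferentiableAt ℝ f (x t)) (h0 : f (x t) ≠ 0) :
    HasDerivAt (gradientCosine f x T)
      (σ t * (inner ℝ (g (x t)) (‖f (x t)‖⁻¹ • f (x t) - gradientCosine f x T t • T t) +
        ‖f (x t)‖⁻¹ * inner ℝ (fderiv ℝ f (x t) (T t))
          (T t - inner ℝ (T t) (‖f (x t)‖⁻¹ • f (x t)) • ‖f (x t)‖⁻¹ • f (x t)))) t := by
  have hF := hf.hasFDerivAt.comp_hasDerivAt t (hx.hasDerivAt t ht)
  refine ((hasDerivAt_normalize_comp hF h0).inner ℝ (hx.hasDerivAt_direction t ht)).congr_deriv ?_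
  simp only [Function.comp_apply, gradientCosine, map_smul, inner_sub_left, inner_sub_right,
    real_inner_smul_left, real_inner_smul_right, real_inner_comm (T t) (f (x t)),
    real_inner_comm (f (x t)) (g (x t)), real_inner_comm (f (x t)) (fderiv ℝ f (x t) (T t))]
  ring

lemma exists_hasDerivAt_gradientCosine
    (hx : IsGeodesicArc (conformalExponentGrad G' φ f) x T σ I)
    (h : IsAdaptedProfile φ f R κ s₀ G G' G'') (hφ : IsExpandingPotential φ f R) (ht : t ∈ I)
    (hxt : R ≤ ‖x t‖) (hφt : 0 ≤ φ (x t)) :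
    ∃ m, HasDerivAt (gradientCosine f x T) m t ∧
      σ t * ((G' (smoothNorm (x t) + φ (x t)) - G' (smoothNorm (x t) - φ (x t))) * ‖f (x t)‖ *
        (0.9 - gradientCosine f x T t ^ 2) - ‖fderiv ℝ f (x t)‖) ≤ m := by
  have hf0 := hφ.ne_zero hxt
  refine ⟨_, hx.hasDerivAt_gradientCosine ht
    (hφ.contDiff_grad.differentiable one_ne_zero _) hf0, ?_⟩
  refine mul_le_mul_of_nonneg_left ?_ (hx.speed_pos t ht).le
  set N := ‖f (x t)‖
  set q := gradientCosine f x T t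
  set e := N⁻¹ • f (x t)
  set D := fderiv ℝ f (x t)
  have hN : 10 ≤ N := hφ.ten_le_norm _ hxt
  have hT := hx.norm_direction t ht
  have he : ‖e‖ = 1 := norm_smul_inv_norm (𝕜 := ℝ) hf0
  set n := e - q • T t
  have hn : ‖n‖ ≤ 1 := norm_sub_inner_smul_le_one he hT
  have hfn : inner ℝ (f (x t)) n = N * (1 - q ^ 2) := by
    have hfe : f (x t) = N • e := (smul_inv_smul₀ (by positivity) _).symm
    have heT : inner ℝ e (T t) = q := rfl
    clear_value e q
    rw [hfe, real_inner_smul_left, inner_sub_right, real_inner_smul_right,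
      real_inner_self_eq_norm_sq, he, heT]
    ring
  have hgap : 0 ≤ G' (smoothNorm (x t) + φ (x t)) - G' (smoothNorm (x t) - φ (x t)) :=
    sub_nonneg.2 (h.monotone_deriv (by linarith))
  have hgn := h.mul_le_inner_conformalExponentGrad hφt n
  have hDm : |inner ℝ (D (T t)) (T t - inner ℝ (T t) e • e)| ≤ ‖D‖ := by
    refine (abs_real_inner_le_norm _ _).trans ?_
    have hD : ‖D (T t)‖ ≤ ‖D‖ := by simpa [hT] using D.le_opNorm (T t)
    exact (mul_le_of_le_one_right (norm_nonneg _) (norm_sub_inner_smul_le_one hT he)).trans hD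
  have hDN : -‖D‖ ≤ N⁻¹ * inner ℝ (D (T t)) (T t - inner ℝ (T t) e • e) := by
    refine neg_le_of_abs_le ?_
    rw [abs_mul, abs_of_pos (by positivity)]
    exact (mul_le_of_le_one_left (abs_nonneg _) (inv_le_one_of_one_le₀ (by linarith))).trans hDm
  have hgap' : _ ≤ _ := mul_le_mul_of_nonneg_left
    (show N * (0.9 - q ^ 2) ≤ inner ℝ (f (x t)) n - ‖n‖ by rw [hfn]; linarith) hgap
  linarith

lemma exists_hasDerivAt_profileGap (hx : IsGeodesicArc (conformalExponentGrad G' φ f) x T σ I)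
    (h : IsAdaptedProfile φ f R κ s₀ G G' G'') (hφ : IsExpandingPotential φ f R) (ht : t ∈ I)
    (hφt : 0 ≤ φ (x t)) (hfT : inner ℝ (f (x t)) (T t) ≤ -5) :
    ∃ m ≤ -(σ t * (3 * G'' (smoothNorm (x t)))), HasDerivAt (profileGap G' φ x) m t := by
  have hadd := hx.hasDerivAt_comp ht (hφ.hasFDerivAt_smoothNorm_add (x t))
  have hr := hx.hasDerivAt_comp ht (hasFDerivAt_smoothNorm (x t))
  refine ⟨_, ?_, ((h.hasDerivAt_deriv _).comp t hadd).sub ((h.hasDerivAt_deriv _).comp t hr)⟩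
  have hrT := abs_le.1 (hx.abs_inner_smoothNormGrad_le ht)
  have hmono : G'' (smoothNorm (x t)) ≤ G'' (smoothNorm (x t) + φ (x t)) :=
    h.monotone_second (by linarith)
  have hnonneg := h.second_nonneg (smoothNorm (x t))
  rw [inner_add_left]
  have hbound : G'' (smoothNorm (x t) + φ (x t)) *
      (inner ℝ (smoothNormGrad (x t)) (T t) + inner ℝ (f (x t)) (T t)) -
      G'' (smoothNorm (x t)) * inner ℝ (smoothNormGrad (x t)) (T t) ≤
      -(3 * G'' (smoothNorm (x t))) := by
    nlinarith
  nlinarith [mul_le_mul_of_nonneg_left hbound (hx.speed_pos t ht).le]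

end IsGeodesicArc

/-- If `w ≤ K` the last term beats `K`, and otherwise the first one does. -/
lemma neg_sub_sub_arctan_term_neg {w K c q m : ℝ} (hw : 0 ≤ w) (hK : 0 ≤ K)
    (hc : 100 * (1 + K) ^ 3 ≤ c) (hq : q ^ 2 ≤ 0.43) (hm : 10 * w ≤ m) :
    -(m * (0.9 - q ^ 2) - K) - 0.05 * (1 / (1 + w ^ 2) * (3 * c)) < 0 := by
  have hfirst : 4.7 * w ≤ m * (0.9 - q ^ 2) := by nlinarith
  have hc0 : 0 < c := lt_of_lt_of_le (by positivity) hc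
  have hlast : 0 < 0.05 * (1 / (1 + w ^ 2) * (3 * c)) := by positivity
  rcases le_total K w with hKw | hwK
  · linarith
  · have hKlt : K < 0.05 * (1 / (1 + w ^ 2) * (3 * c)) := by
      rw [one_div_mul_eq_div, ← mul_div_assoc, lt_div_iff₀ (by positivity)]
      have hKw : K * (1 + w ^ 2) ≤ K * (1 + K ^ 2) := by gcongr
      nlinarith [pow_nonneg hK 2, pow_nonneg hK 3]
    linarith

namespace IsGeodesicArc

lemma inner_le_neg_five (hφ : IsExpandingPotential φ f R) (hxt : R ≤ ‖x t‖)
    (hH : 0.65 ≤ angleBarrier G' φ f x T t) : inner ℝ (f (x t)) (T t) ≤ -5 := by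
  rw [← norm_mul_gradientCosine (hφ.ne_zero hxt)]
  nlinarith [gradientCosine_le_of_le_angleBarrier hH, hφ.ten_le_norm _ hxt]

lemma continuousOn_angleBarrier (hx : IsGeodesicArc (conformalExponentGrad G' φ f) x T σ I)
    (h : IsAdaptedProfile φ f R κ s₀ G G' G'') (hφ : IsExpandingPotential φ f R)
    (hRx : ∀ t ∈ I, R ≤ ‖x t‖) : ContinuousOn (angleBarrier G' φ f x T) I := by
  intro t ht
  have hq := hx.hasDerivAt_gradientCosine ht (hφ.contDiff_grad.differentiable one_ne_zero _)
    (hφ.ne_zero (hRx t ht))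
  have hadd := hx.hasDerivAt_comp ht (hφ.hasFDerivAt_smoothNorm_add (x t))
  have hr := hx.hasDerivAt_comp ht (hasFDerivAt_smoothNorm (x t))
  have hw := ((h.hasDerivAt_deriv _).comp t hadd).sub ((h.hasDerivAt_deriv _).comp t hr)
  exact (hq.neg.add (hw.arctan.const_mul 0.05)).continuousAt.continuousWithinAt

lemma exists_hasDerivAt_angleBarrier_neg
    (hx : IsGeodesicArc (conformalExponentGrad G' φ f) x T σ I)
    (h : IsAdaptedProfile φ f R κ s₀ G G' G'') (hφ : IsExpandingPotential φ f R) (ht : t ∈ I)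
    (hxt : s₀ + 1 ≤ ‖x t‖) (hφt : 0 ≤ φ (x t)) (hH : angleBarrier G' φ f x T t = 0.65) :
    ∃ m < 0, HasDerivAt (angleBarrier G' φ f x T) m t := by
  have hRx : R ≤ ‖x t‖ := by linarith [h.radius_le]
  obtain ⟨q', hq', hq'le⟩ := hx.exists_hasDerivAt_gradientCosine h hφ ht hRx hφt
  obtain ⟨w', hw'le, hw'⟩ :=
    hx.exists_hasDerivAt_profileGap h hφ ht hφt (inner_le_neg_five hφ hRx hH.ge)
  refine ⟨_, ?_, hq'.neg.add (hw'.arctan.const_mul 0.05)⟩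
  have hq57 := gradientCosine_le_of_le_angleBarrier hH.ge
  have hw : 0 ≤ profileGap G' φ x t := sub_nonneg.2 (h.monotone_deriv (by linarith))
  have hcb : G' (smoothNorm (x t) - φ (x t)) ≤ G' (smoothNorm (x t)) :=
    h.monotone_deriv (by linarith)
  have hq65 : -0.65 ≤ gradientCosine f x T t := by
    rw [angleBarrier] at hH
    linarith [Real.arctan_nonneg.2 hw]
  have hN := hφ.ten_le_norm _ hRx
  have hgap : 10 * profileGap G' φ x t ≤
      (G' (smoothNorm (x t) + φ (x t)) - G' (smoothNorm (x t) - φ (x t))) * ‖f (x t)‖ := by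
    rw [profileGap] at hw ⊢
    nlinarith
  have hq2 : gradientCosine f x T t ^ 2 ≤ 0.43 := by nlinarith
  have hneg := mul_neg_of_pos_of_neg (hx.speed_pos t ht) (neg_sub_sub_arctan_term_neg hw
    (norm_nonneg (fderiv ℝ f (x t))) (h.le_second_smoothNorm hxt) hq2 hgap)
  have hw'div := mul_le_mul_of_nonneg_left hw'le
    (by positivity : (0 : ℝ) ≤ 1 / (1 + profileGap G' φ x t ^ 2))
  linarith

/-- Once the arc runs nearly against the gradient, it must have done so ever since it left the ball
of radius `s₀ + 1`, so that `φ` has decreased along it at a definite rate. -/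
lemma potential_add_smoothNorm_le {a b : ℝ} (hab : a ≤ b)
    (hx : IsGeodesicArc (conformalExponentGrad G' φ f) x T σ (Icc a b))
    (h : IsAdaptedProfile φ f R κ s₀ G G' G'') (hφ : IsExpandingPotential φ f R)
    (hout : ∀ t ∈ Icc a b, s₀ + 1 ≤ ‖x t‖) (hφb : 0 ≤ φ (x b))
    (hqb : gradientCosine f x T b ≤ -0.7) :
    φ (x b) + 5 * smoothNorm (x b) ≤ φ (x a) + 5 * smoothNorm (x a) := by
  have hRx (t : ℝ) (ht : t ∈ Icc a b) : R ≤ ‖x t‖ := by linarith [hout t ht, h.radius_le]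
  have hφ' (t : ℝ) (ht : t ∈ Icc a b) := hx.hasDerivAt_comp ht (hφ.hasFDerivAt (x t))
  have hr' (t : ℝ) (ht : t ∈ Icc a b) := hx.hasDerivAt_comp ht (hasFDerivAt_smoothNorm (x t))
  have hHb : 0.65 ≤ angleBarrier G' φ f x T b := by
    have hw : 0 ≤ profileGap G' φ x b := sub_nonneg.2 (h.monotone_deriv (by linarith))
    rw [angleBarrier]
    linarith [Real.arctan_nonneg.2 hw]
  have hbarrier := forall_le_and_le_of_hasDerivAt_neg (hx.continuousOn_angleBarrier h hφ hRx)
    (hφ.continuous.comp_continuousOn hx.continuousOn) hHb hφb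
    (fun t ht hH hφt ↦ hx.exists_hasDerivAt_angleBarrier_neg h hφ ht (hout t ht) hφt hH)
    (fun t ht hH _ ↦ ⟨_, mul_neg_of_pos_of_neg (hx.speed_pos t ht) (by
      linarith [inner_le_neg_five hφ (hRx t ht) hH]), hφ' t ht⟩)
  have hsum (t : ℝ) (ht : t ∈ Icc a b) := (hφ' t ht).add ((hr' t ht).const_mul 5)
  refine antitoneOn_of_hasDerivWithinAt_nonpos (convex_Icc a b)
    (fun t ht ↦ (hsum t ht).continuousAt.continuousWithinAt)
    (fun t ht ↦ (hsum t (interior_subset ht)).hasDerivWithinAt) (fun t ht ↦ ?_)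
    (left_mem_Icc.2 hab) (right_mem_Icc.2 hab) hab
  have ht := interior_subset ht
  have hfT := inner_le_neg_five hφ (hRx t ht) (hbarrier t ht).1
  have hrT := (abs_le.1 (hx.abs_inner_smoothNormGrad_le ht)).2
  nlinarith [hx.speed_pos t ht]

end IsGeodesicArc

end Barrier

section Escape

variable {φ : ℂ → ℝ} {f : ℂ → ℂ} {R s₀ : ℝ} {κ G G' G'' : ℝ → ℝ} {E P : ℂ → ℂ} {L : ℂ → ℂ →L[ℝ] ℂ}

namespace IsExponentialMap

lemma exists_radius_neg_mul_lt_inner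
    (hE : IsExponentialMap (conformalExponent G φ) (conformalExponentGrad G' φ f) R E P L)
    (h : IsAdaptedProfile φ f R κ s₀ G G' G'') (hφ : IsExpandingPotential φ f R) :
    ∃ r, ∀ z, r ≤ ‖E z‖ → 0 ≤ φ (E z) →
      -0.7 * (‖f (E z)‖ * ‖P z‖) < inner ℝ (f (E z)) (P z) := by
  have hs₀ : 0 ≤ s₀ := hφ.radius_pos.le.trans h.radius_le
  have hr : Continuous (smoothNorm : ℂ → ℝ) := contDiff_smoothNorm.continuous
  have hφc := hφ.continuous
  obtain ⟨M, hM⟩ := (isCompact_closedBall (0 : ℂ) (s₀ + 1)).bddAbove_image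
    (f := fun x ↦ φ x + 5 * smoothNorm x) (by fun_prop)
  refine ⟨max (s₀ + 1) (M / 5) + 1, fun z hz hφz ↦ ?_⟩
  by_contra! hcon
  have hzs := le_max_left (s₀ + 1) (M / 5)
  have hz0 : 0 < ‖z‖ := by linarith [hE.norm_le z]
  obtain ⟨Y, hY0, hY1, hY, hnorm⟩ := hE.exists_geodesic z
  have harc := (h.isConformalFactor hφ).isGeodesicArc hz0 hY hnorm
  obtain ⟨a, ha, hxa, hout⟩ := exists_last_le zero_le_one harc.continuousOn.norm
    (y := s₀ + 1) (by simp only [hY0, norm_zero]; linarith) (by simp only [hY1]; linarith)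
  have hsub := harc.mono (Icc_subset_Icc_left ha.1)
  have hcos := gradientCosine_le_of_inner_le (x := fun t ↦ (Y t).1)
    (T := fun t ↦ (Real.exp (-conformalExponent G φ (Y t).1) / ‖z‖) • (Y t).2)
    (hφ.ne_zero (by linarith [hout 1 ⟨ha.2.le, le_rfl⟩, h.radius_le])) (by positivity)
    (harc.norm_direction 1 ⟨zero_le_one, le_rfl⟩) (by simpa only [hY1] using hcon) rfl
  have hle := hsub.potential_add_smoothNorm_le ha.2.le h hφ hout (by simpa only [hY1]) hcos
  have hMa := hM ⟨(Y a).1, by simpa using hxa, rfl⟩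
  simp only [hY1] at hle
  linarith [norm_le_smoothNorm (E z), le_max_right (s₀ + 1) (M / 5)]

lemma exists_radius_inner_lt_mul
    (hE : IsExponentialMap (conformalExponent G φ) (conformalExponentGrad G' φ f) R E P L)
    (h : IsAdaptedProfile φ f R κ s₀ G G' G'') (hφ : IsExpandingPotential φ f R) :
    ∃ r, ∀ z, r ≤ ‖E z‖ → φ (E z) ≤ 0 →
      inner ℝ (f (E z)) (P z) < 0.7 * (‖f (E z)‖ * ‖P z‖) := by
  rw [← conformalExponent_neg, ← conformalExponentGrad_neg] at hE
  obtain ⟨r, hr⟩ := hE.exists_radius_neg_mul_lt_inner h.neg hφ.neg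
  refine ⟨r, fun z hz hφz ↦ ?_⟩
  have := hr z hz (neg_nonneg.2 hφz)
  rw [Pi.neg_apply, norm_neg, inner_neg_left] at this
  linarith

end IsExponentialMap

end Escape

section Degree

variable {E F : Type*} [NormedAddCommGroup E] [NormedAddCommGroup F]

/-- The axioms of `DegreeTheory` in an arbitrary normed group, so that a degree can be transported
from `ℝ²` to `ℂ`. -/
structure IsBrouwerDegree (deg : (E → E) → Set E → ℤ) : Prop where
  normalized : ∀ Ω : Set E, IsOpen Ω → Bornology.IsBounded Ω → (0 : E) ∈ Ω → deg id Ω = 1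
  additive : ∀ (f : E → E) (Ω Ω₁ Ω₂ : Set E), IsOpen Ω → Bornology.IsBounded Ω → IsOpen Ω₁ →
    IsOpen Ω₂ → Ω₁ ⊆ Ω → Ω₂ ⊆ Ω → Disjoint Ω₁ Ω₂ → ContinuousOn f (closure Ω) →
    (∀ x ∈ closure Ω \ (Ω₁ ∪ Ω₂), f x ≠ 0) → deg f Ω = deg f Ω₁ + deg f Ω₂
  homotopyInv : ∀ (h : ℝ → E → E) (Ω : Set E), IsOpen Ω → Bornology.IsBounded Ω →
    ContinuousOn (fun p : ℝ × E ↦ h p.1 p.2) (Icc 0 1 ×ˢ closure Ω) →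
    (∀ t ∈ Icc (0 : ℝ) 1, ∀ x ∈ frontier Ω, h t x ≠ 0) → deg (h 0) Ω = deg (h 1) Ω

lemma DegreeTheory.isBrouwerDegree {n : ℕ} (D : DegreeTheory n) : IsBrouwerDegree D.deg :=
  ⟨D.normalized, D.additive, D.homotopyInv⟩

namespace IsBrouwerDegree

variable {deg : (E → E) → Set E → ℤ}

lemma conj [NormedSpace ℝ E] [NormedSpace ℝ F] (h : IsBrouwerDegree deg) (e : F ≃ₗᵢ[ℝ] E) :
    IsBrouwerDegree fun f Ω ↦ deg (fun x ↦ e (f (e.symm x))) (e '' Ω) := by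
  have hopen {Ω : Set F} (hΩ : IsOpen Ω) : IsOpen (e '' Ω) := e.toHomeomorph.isOpenMap _ hΩ
  have hbdd {Ω : Set F} (hΩ : Bornology.IsBounded Ω) : Bornology.IsBounded (e '' Ω) :=
    e.isometry.lipschitz.isBounded_image hΩ
  have hclosure (Ω : Set F) : closure (e '' Ω) = e '' closure Ω :=
    (e.toHomeomorph.image_closure Ω).symm
  have hfrontier (Ω : Set F) : frontier (e '' Ω) = e '' frontier Ω :=
    (e.toHomeomorph.image_frontier Ω).symm
  refine ⟨fun Ω ho hb h0 ↦ ?_, fun f Ω Ω₁ Ω₂ ho hb ho₁ ho₂ hs₁ hs₂ hd hf hne ↦ ?_,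
    fun H Ω ho hb hH hne ↦ ?_⟩
  · simpa [Function.id_def] using h.normalized _ (hopen ho) (hbdd hb) ⟨0, h0, map_zero e⟩
  · refine h.additive _ _ _ _ (hopen ho) (hbdd hb) (hopen ho₁) (hopen ho₂) (image_mono hs₁)
      (image_mono hs₂) ((disjoint_image_iff e.injective).2 hd) ?_ ?_
    · rw [hclosure]
      refine e.continuous.comp_continuousOn (hf.comp e.symm.continuous.continuousOn ?_)
      rintro _ ⟨z, hz, rfl⟩
      simpa using hz
    · rw [hclosure, ← image_union, ← image_sdiff e.injective]
      rintro _ ⟨z, hz, rfl⟩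
      simpa using hne z hz
  · refine h.homotopyInv (fun t x ↦ e (H t (e.symm x))) _ (hopen ho) (hbdd hb) ?_ ?_
    · rw [hclosure]
      refine e.continuous.comp_continuousOn
        (hH.comp (f := fun p : ℝ × E ↦ (p.1, e.symm p.2)) (by fun_prop) ?_)
      rintro ⟨t, _⟩ ⟨ht, z, hz, rfl⟩
      exact ⟨ht, by simpa using hz⟩
    · rw [hfrontier]
      rintro t ht _ ⟨z, hz, rfl⟩
      simpa using hne t ht z hz

lemma deg_empty (h : IsBrouwerDegree deg) (f : E → E) : deg f ∅ = 0 := by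
  simpa using h.additive f ∅ ∅ ∅ isOpen_empty Bornology.isBounded_empty isOpen_empty isOpen_empty

lemma deg_eq_of_subset (h : IsBrouwerDegree deg) {f : E → E} {Ω Ω₁ : Set E} (hΩ : IsOpen Ω)
    (hb : Bornology.IsBounded Ω) (hΩ₁ : IsOpen Ω₁) (hsub : Ω₁ ⊆ Ω) (hf : ContinuousOn f (closure Ω))
    (hne : ∀ x ∈ closure Ω \ Ω₁, f x ≠ 0) : deg f Ω = deg f Ω₁ := by
  rw [h.additive f Ω Ω₁ ∅ hΩ hb hΩ₁ isOpen_empty hsub (empty_subset Ω) (disjoint_empty Ω₁) hf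
    (by rwa [union_empty]), h.deg_empty, add_zero]

variable {c : E} {S : ℝ}

lemma deg_ball_eq_of_homotopy (h : IsBrouwerDegree deg) {H : ℝ → E → E}
    (hH : Continuous fun p : ℝ × E ↦ H p.1 p.2)
    (hne : ∀ t ∈ Icc (0 : ℝ) 1, ∀ x ∈ sphere c S, H t x ≠ 0) :
    deg (H 0) (ball c S) = deg (H 1) (ball c S) :=
  h.homotopyInv H _ isOpen_ball isBounded_ball hH.continuousOn
    fun t ht x hx ↦ hne t ht x (frontier_ball_subset_sphere hx)

lemma deg_ball_congr [NormedSpace ℝ E] (h : IsBrouwerDegree deg) {f g : E → E} (hf : Continuous f)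
    (hg : Continuous g) (hfg : EqOn f g (sphere c S)) (hne : ∀ x ∈ sphere c S, f x ≠ 0) :
    deg f (ball c S) = deg g (ball c S) := by
  have hhom := h.deg_ball_eq_of_homotopy (H := fun t x ↦ (1 - t) • f x + t • g x) (c := c) (S := S)
    (by fun_prop) (fun t _ x hx ↦ by
      rw [← hfg hx, ← add_smul, sub_add_cancel, one_smul]
      exact hne x hx)
  simpa using hhom

end IsBrouwerDegree

lemma norm_one_sub_smul_le [NormedSpace ℝ E] {t : ℝ} (ht : t ∈ Icc (0 : ℝ) 1) (x : E) :
    ‖(1 - t) • x‖ ≤ ‖x‖ := by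
  rw [norm_smul, Real.norm_of_nonneg (sub_nonneg.2 ht.2)]
  exact mul_le_of_le_one_left (norm_nonneg x) (by linarith [ht.1])

end Degree

section WindingNumber

/-- The map `r * exp (i * θ) ↦ r * exp (i * n * θ)`. -/
def angularPow (n : ℤ) (z : ℂ) : ℂ := ‖z‖ * (z / ‖z‖) ^ n

lemma angularPow_zero (n : ℤ) : angularPow n 0 = 0 := by simp [angularPow]

lemma norm_angularPow (n : ℤ) (z : ℂ) : ‖angularPow n z‖ = ‖z‖ := by
  rcases eq_or_ne z 0 with rfl | hz
  · rw [angularPow_zero]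
  · simp [angularPow, hz]

lemma angularPow_ne_zero {n : ℤ} {z : ℂ} (hz : z ≠ 0) : angularPow n z ≠ 0 := by
  rwa [← norm_ne_zero_iff, norm_angularPow, norm_ne_zero_iff]

lemma continuous_angularPow (n : ℤ) : Continuous (angularPow n) := by
  refine continuous_iff_continuousAt.2 fun z ↦ ?_
  rcases eq_or_ne z 0 with rfl | hz
  · rw [ContinuousAt, angularPow_zero, tendsto_zero_iff_norm_tendsto_zero]
    simpa only [norm_angularPow, norm_zero] using continuous_norm.tendsto (0 : ℂ)
  · have hz' : (‖z‖ : ℂ) ≠ 0 := by simpa using hz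
    have hnorm : ContinuousAt (fun z : ℂ ↦ (‖z‖ : ℂ)) z := by fun_prop
    exact hnorm.mul ((continuousAt_id.div hnorm hz').zpow₀ n (Or.inl (div_ne_zero hz hz')))

lemma angularPow_one : angularPow 1 = id := by
  ext1 z
  rcases eq_or_ne z 0 with rfl | hz
  · exact angularPow_zero 1
  · rw [angularPow, zpow_one, mul_div_cancel₀ _ (by simpa using hz), id]

lemma angularPow_mul_angularPow (a b : ℤ) (z : ℂ) :
    angularPow a z * angularPow b z = ‖z‖ * angularPow (a + b) z := by
  rcases eq_or_ne z 0 with rfl | hz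
  · simp [angularPow_zero]
  · rw [angularPow, angularPow, angularPow, zpow_add₀ (div_ne_zero hz (by simpa using hz))]
    ring

lemma angularPow_mul_exp {S : ℝ} (hS : 0 < S) (n : ℤ) (θ : ℝ) :
    angularPow n (S * Complex.exp (θ * Complex.I)) = S * Complex.exp (n * (θ * Complex.I)) := by
  have hnorm : ‖(S : ℂ) * Complex.exp (θ * Complex.I)‖ = S := by
    rw [norm_mul, Complex.norm_exp_ofReal_mul_I, mul_one, Complex.norm_of_nonneg hS.le]
  rw [angularPow, hnorm, mul_div_cancel_left₀ _ (by simpa using hS.ne'), ← Complex.exp_int_mul]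

namespace IsBrouwerDegree

variable {deg : (ℂ → ℂ) → Set ℂ → ℤ} {J K : ℂ → ℂ} {S : ℝ}

lemma deg_ball_mul_eq_left (h : IsBrouwerDegree deg) {c : ℂ} (hJ : Continuous J) (hK : Continuous K)
    (hJ0 : ∀ z ∈ sphere c S, J z ≠ 0) (hK0 : ∀ z ∈ closedBall c S, K z ≠ 0) :
    deg (fun z ↦ J z * K z) (ball c S) = deg J (ball c S) := by
  rcases lt_or_ge S 0 with hS | hS
  · rw [ball_eq_empty.2 hS.le, h.deg_empty, h.deg_empty]
  have hfreeze := h.deg_ball_eq_of_homotopy (H := fun t z ↦ J z * K (c + (1 - t) • (z - c)))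
    (c := c) (S := S) (by fun_prop) (fun t ht z hz ↦ mul_ne_zero (hJ0 z hz) (hK0 _ (by
      rw [mem_closedBall_iff_norm, add_sub_cancel_left, ← mem_sphere_iff_norm.1 hz]
      exact norm_one_sub_smul_le ht _)))
  have hscale := h.deg_ball_eq_of_homotopy (c := c) (S := S)
    (H := fun t z ↦ J z * Complex.exp (t * Complex.log (K c))) (by fun_prop)
    (fun t _ z hz ↦ mul_ne_zero (hJ0 z hz) (Complex.exp_ne_zero _))
  simp only [sub_zero, one_smul, add_sub_cancel, sub_self, zero_smul, add_zero] at hfreeze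
  simp only [Complex.ofReal_zero, zero_mul, Complex.exp_zero, mul_one, Complex.ofReal_one, one_mul,
    Complex.exp_log (hK0 c (mem_closedBall_self hS))] at hscale
  rw [hfreeze, ← hscale]

lemma deg_ball_angularPow_sub (h : IsBrouwerDegree deg) (n : ℤ) {p : ℂ} (hS : 0 < S)
    (hp : ‖p‖ = S) :
    deg (fun z ↦ angularPow n (z - p)) (ball p S) = deg (angularPow n) (ball 0 (2 * S)) := by
  have hcont := continuous_angularPow n
  have hsub : ball p S ⊆ ball 0 (2 * S) :=
    ball_subset_ball' (by rw [dist_zero_right, hp, two_mul])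
  rw [← h.deg_eq_of_subset isOpen_ball isBounded_ball isOpen_ball hsub (by fun_prop)
    fun z hz ↦ angularPow_ne_zero (sub_ne_zero.2 ?_)]
  rotate_left
  · rintro rfl
    exact hz.2 (mem_ball_self hS)
  have hhom := h.deg_ball_eq_of_homotopy (c := 0) (S := 2 * S)
    (H := fun t z ↦ angularPow n (z - (1 - t) • p)) (by fun_prop) (fun t ht z hz ↦ by
      refine angularPow_ne_zero (sub_ne_zero.2 fun hzp ↦ ?_)
      have := norm_one_sub_smul_le ht p
      rw [← hzp, mem_sphere_zero_iff_norm.1 hz, hp] at this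
      linarith)
  simpa using hhom

/-- Near `p` the second factor has no zeros. -/
lemma deg_ball_angularPow_sub_mul (h : IsBrouwerDegree deg) (a b : ℤ) {p : ℂ} (hS : 0 < S)
    (hp : ‖p‖ = S) : deg (fun z ↦ angularPow a (z - p) * angularPow b (z + p)) (ball p S) =
      deg (angularPow a) (ball 0 (2 * S)) := by
  have ha := continuous_angularPow a
  have hb := continuous_angularPow b
  rw [h.deg_ball_mul_eq_left (by fun_prop) (by fun_prop)
    (fun z hz ↦ angularPow_ne_zero (sub_ne_zero.2 (ne_of_mem_sphere hz hS.ne')))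
    (fun z hz ↦ angularPow_ne_zero fun hzp ↦ ?_), h.deg_ball_angularPow_sub a hS hp]
  rw [mem_closedBall_iff_norm, eq_neg_of_add_eq_zero_left hzp, ← neg_add', norm_neg, ← two_mul,
    norm_mul, hp, Complex.norm_two] at hz
  linarith

lemma deg_ball_angularPow_mul (h : IsBrouwerDegree deg) (a b : ℤ) (hS : 0 < S) :
    deg (fun z ↦ angularPow a z * angularPow b z) (ball 0 S) =
      deg (angularPow (a + b)) (ball 0 S) := by
  have ha := continuous_angularPow a
  have hb := continuous_angularPow b
  have hab := continuous_angularPow (a + b)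
  have hne (z : ℂ) (hz : z ∈ sphere 0 S) : z ≠ 0 := ne_of_mem_sphere hz hS.ne'
  rw [← h.deg_ball_mul_eq_left (K := fun _ ↦ (S : ℂ)) hab continuous_const
    (fun z hz ↦ angularPow_ne_zero (hne z hz)) (fun _ _ ↦ by simpa using hS.ne')]
  refine h.deg_ball_congr (by fun_prop) (by fun_prop) (fun z hz ↦ ?_) (fun z hz ↦
    mul_ne_zero (angularPow_ne_zero (hne z hz)) (angularPow_ne_zero (hne z hz)))
  simp only [angularPow_mul_angularPow, mem_sphere_zero_iff_norm.1 hz, mul_comm]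

lemma deg_ball_angularPow_add (h : IsBrouwerDegree deg) (a b : ℤ) (hS : 0 < S) :
    deg (angularPow (a + b)) (ball 0 (2 * S)) =
      deg (angularPow a) (ball 0 (2 * S)) + deg (angularPow b) (ball 0 (2 * S)) := by
  have hS2 : 0 < 2 * S := by positivity
  have ha := continuous_angularPow a
  have hb := continuous_angularPow b
  obtain ⟨p, hp⟩ : ∃ p : ℂ, ‖p‖ = S := ⟨S, Complex.norm_of_nonneg hS.le⟩
  have hneg : deg (fun z ↦ angularPow a (z - p) * angularPow b (z + p)) (ball (-p) S) =
      deg (angularPow b) (ball 0 (2 * S)) := by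
    simpa only [mul_comm, sub_neg_eq_add, ← sub_eq_add_neg] using
      h.deg_ball_angularPow_sub_mul b a hS ((norm_neg p).trans hp)
  have hball {q : ℂ} (hq : ‖q‖ = S) : ball q S ⊆ ball 0 (2 * S) :=
    ball_subset_ball' (by rw [dist_zero_right, hq, two_mul])
  have hdisj : Disjoint (ball p S) (ball (-p) S) := ball_disjoint_ball (by
    rw [dist_eq_norm, sub_neg_eq_add, ← two_mul p, norm_mul, hp, Complex.norm_two, two_mul])
  rw [← h.deg_ball_angularPow_mul a b hS2, ← h.deg_ball_angularPow_sub_mul a b hS hp, ← hneg,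
    ← h.additive _ _ _ _ isOpen_ball isBounded_ball isOpen_ball isOpen_ball (hball hp)
      (hball ((norm_neg p).trans hp)) hdisj (by fun_prop) ?_]
  · have hhom := h.deg_ball_eq_of_homotopy (c := 0) (S := 2 * S) (H := fun t z ↦
      angularPow a (z - (1 - t) • p) * angularPow b (z + (1 - t) • p)) (by fun_prop) ?_
    · simpa using hhom.symm
    rintro t ht z hz
    have hlt := norm_one_sub_smul_le ht p
    rw [hp] at hlt
    rw [mem_sphere_zero_iff_norm] at hz
    refine mul_ne_zero (angularPow_ne_zero fun hzp ↦ ?_) (angularPow_ne_zero fun hzp ↦ ?_)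
    · rw [sub_eq_zero.1 hzp] at hz
      linarith
    · rw [eq_neg_of_add_eq_zero_left hzp, norm_neg] at hz
      linarith
  · rintro z ⟨-, hz⟩
    refine mul_ne_zero (angularPow_ne_zero fun hzp ↦ hz (Or.inl ?_))
      (angularPow_ne_zero fun hzp ↦ hz (Or.inr ?_))
    · exact sub_eq_zero.1 hzp ▸ mem_ball_self hS
    · exact eq_neg_of_add_eq_zero_left hzp ▸ mem_ball_self hS

lemma deg_ball_angularPow (h : IsBrouwerDegree deg) (n : ℤ) (hS : 0 < S) :
    deg (angularPow n) (ball 0 S) = n := by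
  have hadd (a b : ℤ) := h.deg_ball_angularPow_add a b (half_pos hS)
  rw [mul_div_cancel₀ S two_ne_zero] at hadd
  let A : ℤ →+ ℤ := AddMonoidHom.mk' (fun n ↦ deg (angularPow n) (ball 0 S)) hadd
  have hone : deg (angularPow 1) (ball 0 S) = 1 := by
    rw [angularPow_one]
    exact h.normalized _ isOpen_ball isBounded_ball (mem_ball_self hS)
  exact DFunLike.congr_fun (AddMonoidHom.ext_int (f := A) (g := AddMonoidHom.id ℤ) hone) n

end IsBrouwerDegree

lemma exists_continuous_exp_eq {r : ℝ → ℂ} (hr : Continuous r) (hr0 : ∀ θ, r θ ≠ 0) :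
    ∃ F : ℝ → ℂ, Continuous F ∧ ∀ θ, Complex.exp (F θ) = r θ := by
  obtain ⟨F, ⟨-, hF⟩, -⟩ := Complex.isCoveringMapOn_exp.existsUnique_continuousMap_lifts ⟨r, hr⟩
    (a₀ := 0) (e₀ := Complex.log (r 0)) (Complex.exp_log (hr0 0)) hr0
  exact ⟨F, F.continuous, congrFun hF⟩

lemma exists_int_forall_add_two_pi_eq {F : ℝ → ℂ} (hF : Continuous F)
    (hper : Function.Periodic (fun θ ↦ Complex.exp (F θ)) (2 * Real.pi)) :
    ∃ n : ℤ, ∀ θ, F (θ + 2 * Real.pi) = F θ + n * (2 * Real.pi * Complex.I) := by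
  choose N hN using fun θ ↦ Complex.exp_eq_exp_iff_exists_int.1 (hper θ)
  have hNre (θ : ℝ) : (N θ : ℝ) = (F (θ + 2 * Real.pi) - F θ).im / (2 * Real.pi) := by
    simp [hN θ, Real.pi_ne_zero]
  have hNcont : Continuous N := by
    refine Int.isClosedEmbedding_coe_real.isInducing.continuous_iff.2 ?_
    simp only [Function.comp_def, hNre]
    fun_prop
  exact ⟨N 0, fun θ ↦ by rw [hN θ, PreconnectedSpace.constant inferInstance hNcont]⟩

lemma exists_int_periodic_log {r : ℝ → ℂ} (hr : Continuous r) (hr0 : ∀ θ, r θ ≠ 0)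
    (hper : Function.Periodic r (2 * Real.pi)) :
    ∃ (n : ℤ) (C : ℝ → ℂ), Continuous C ∧ Function.Periodic C (2 * Real.pi) ∧
      ∀ θ, r θ = Complex.exp (C θ) * Complex.exp (n * (θ * Complex.I)) := by
  obtain ⟨F, hF, hFr⟩ := exists_continuous_exp_eq hr hr0
  obtain ⟨n, hn⟩ := exists_int_forall_add_two_pi_eq hF (by simpa only [hFr] using hper)
  refine ⟨n, fun θ ↦ F θ - n * (θ * Complex.I), by fun_prop, fun θ ↦ ?_, fun θ ↦ ?_⟩
  · push_cast [hn]
    ring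
  · rw [← Complex.exp_add, sub_add_cancel, hFr]

lemma exists_continuous_eq_of_periodic {C : ℝ → ℂ} (hC : Continuous C)
    (hper : Function.Periodic C (2 * Real.pi)) {S : ℝ} (hS : 0 < S) :
    ∃ c : ℂ → ℂ, Continuous c ∧ ∀ θ : ℝ, c (S * Complex.exp (θ * Complex.I)) = C θ := by
  have hlift : Continuous (hper.lift : Real.Angle → ℂ) := continuous_quot_lift _ hC
  have hcont : Continuous fun z : sphere (0 : ℂ) S ↦ hper.lift ((z : ℂ).arg : Real.Angle) :=
    continuous_iff_continuousAt.2 fun z ↦ hlift.continuousAt.comp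
      ((Complex.continuousAt_arg_coe_angle (ne_of_mem_sphere z.2 hS.ne')).comp
        continuousAt_subtype_val)
  obtain ⟨c, hc⟩ := ContinuousMap.exists_restrict_eq isClosed_sphere ⟨_, hcont⟩
  refine ⟨c, c.continuous, fun θ ↦ ?_⟩
  have hmem : (S : ℂ) * Complex.exp (θ * Complex.I) ∈ sphere 0 S := by
    rw [mem_sphere_zero_iff_norm, norm_mul, Complex.norm_exp_ofReal_mul_I, mul_one,
      Complex.norm_of_nonneg hS.le]
  calc c (S * Complex.exp (θ * Complex.I))
      = hper.lift ((S * Complex.exp (θ * Complex.I) : ℂ).arg : Real.Angle) :=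
        DFunLike.congr_fun hc ⟨_, hmem⟩
    _ = C θ := by
        rw [Complex.exp_mul_I, ← Complex.ofReal_cos, ← Complex.ofReal_sin, ← Real.Angle.cos_coe,
          ← Real.Angle.sin_coe, Complex.arg_mul_cos_add_sin_mul_I_coe_angle hS]
        exact hper.lift_coe θ

namespace IsBrouwerDegree

variable {deg : (ℂ → ℂ) → Set ℂ → ℤ} {K : ℂ → ℂ} {S : ℝ}

lemma deg_ball_eq_of_log (h : IsBrouwerDegree deg) (hK : Continuous K) (hS : 0 < S) {n : ℤ}
    {C : ℝ → ℂ} (hC : Continuous C) (hper : Function.Periodic C (2 * Real.pi))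
    (hKC : ∀ θ : ℝ, K (S * Complex.exp (θ * Complex.I)) =
      Complex.exp (C θ) * Complex.exp (n * (θ * Complex.I))) : deg K (ball 0 S) = n := by
  have hSne : (S : ℂ) ≠ 0 := by simpa using hS.ne'
  obtain ⟨c, hc, hcC⟩ := exists_continuous_eq_of_periodic hC hper hS
  have hn := continuous_angularPow n
  have hn0 (z : ℂ) (hz : z ∈ sphere 0 S) : angularPow n z ≠ 0 :=
    angularPow_ne_zero (ne_of_mem_sphere hz hS.ne')
  rw [← h.deg_ball_angularPow n hS, ← h.deg_ball_mul_eq_left (K := fun z ↦ Complex.exp (c z) / S)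
    hn (by fun_prop) hn0 fun z _ ↦ div_ne_zero (Complex.exp_ne_zero _) hSne]
  refine (h.deg_ball_congr (by fun_prop) hK (fun z hz ↦ ?_) fun z hz ↦
    mul_ne_zero (hn0 z hz) (div_ne_zero (Complex.exp_ne_zero _) hSne)).symm
  rw [mem_sphere_zero_iff_norm] at hz
  rw [← Complex.norm_mul_exp_arg_mul_I z, hz, angularPow_mul_exp hS, hcC, hKC]
  field_simp

lemma exists_periodic_log (h : IsBrouwerDegree deg) (hK : Continuous K) (hS : 0 < S)
    (hK0 : ∀ z ∈ sphere 0 S, K z ≠ 0) :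
    ∃ C : ℝ → ℂ, Continuous C ∧ Function.Periodic C (2 * Real.pi) ∧
      ∀ θ : ℝ, K (S * Complex.exp (θ * Complex.I)) =
        Complex.exp (C θ) * Complex.exp (deg K (ball 0 S) * (θ * Complex.I)) := by
  obtain ⟨n, C, hC, hper, hKC⟩ := exists_int_periodic_log
    (r := fun θ : ℝ ↦ K (S * Complex.exp (θ * Complex.I))) (by fun_prop)
    (fun θ ↦ hK0 _ (by rw [mem_sphere_zero_iff_norm, norm_mul, Complex.norm_exp_ofReal_mul_I,
      mul_one, Complex.norm_of_nonneg hS.le]))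
    (fun θ ↦ by simp only [Complex.ofReal_add, Complex.ofReal_mul, Complex.ofReal_ofNat, add_mul,
      Complex.exp_add, Complex.exp_two_pi_mul_I, mul_one])
  exact ⟨C, hC, hper, by rwa [h.deg_ball_eq_of_log hK hS hC hper hKC]⟩

end IsBrouwerDegree

end WindingNumber

section AngularPotential

lemma nonneg_of_hasDerivAt_of_forall_le {h : ℝ → ℝ} {h' a b : ℝ} (hd : HasDerivAt h h' a)
    (hab : a < b) (hle : ∀ t ∈ Icc a b, h a ≤ h t) : 0 ≤ h' := by
  refine ge_of_tendsto
    ((hasDerivWithinAt_iff_tendsto_slope' self_notMem_Ioi).1 hd.hasDerivWithinAt) ?_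
  filter_upwards [Ioo_mem_nhdsGT hab] with t ht
  rw [slope_def_field]
  exact div_nonneg (sub_nonneg.2 (hle t (Ioo_subset_Icc_self ht))) (sub_nonneg.2 ht.1.le)

lemma exists_cos_eq_one {a b : ℝ} (hab : a ≤ b) (ha : Real.sin a < 0) (hb : 0 < Real.sin b) :
    ∃ c ∈ Icc a b, Real.cos c = 1 := by
  obtain ⟨c, hc, hle, hge⟩ := exists_last_le hab Real.continuous_sin.continuousOn ha.le hb
  have hsin : Real.sin c = 0 := hle.antisymm (hge c ⟨le_rfl, hc.2.le⟩)
  have hcos : 0 ≤ Real.cos c :=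
    nonneg_of_hasDerivAt_of_forall_le (Real.hasDerivAt_sin c) hc.2 fun t ht ↦ by
      rw [hsin]
      exact hge t ht
  refine ⟨c, Ico_subset_Icc_self hc, ?_⟩
  rcases Real.sin_eq_zero_iff_cos_eq.1 hsin with h | h <;> linarith

lemma exists_previous_zero {ψ : ℝ → ℝ} {T θ₀ ψ' : ℝ} (hψ : Continuous ψ)
    (hper : Function.Periodic ψ T) (hT : 0 < T) (hd : HasDerivAt ψ ψ' θ₀) (hpos : 0 < ψ')
    (hzero : ψ θ₀ = 0) : ∃ θ₁ < θ₀, ψ θ₁ = 0 ∧ ∀ θ ∈ Icc θ₁ θ₀, ψ θ ≤ 0 := by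
  have hleft : ∀ᶠ s in 𝓝[<] θ₀, ψ s < 0 :=
    (eventually_lt_left_of_hasDerivAt_neg hd.neg (neg_lt_zero.2 hpos)).mono fun s hs ↦ by
      rwa [Pi.neg_apply, Pi.neg_apply, hzero, neg_lt_neg_iff] at hs
  obtain ⟨l, hl, hneg⟩ :=
    (mem_nhdsLT_iff_exists_mem_Ico_Ioo_subset (sub_lt_self θ₀ hT)).1 hleft
  obtain ⟨s, hls, hsθ⟩ := exists_between hl.2
  have hper₀ : ψ (θ₀ - T) = 0 := by rw [hper.sub_eq, hzero]
  obtain ⟨θ₁, hθ₁, hle, hge⟩ := exists_last_le (y := 0) (hl.1.trans hls.le) hψ.neg.continuousOn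
    (by rw [Pi.neg_apply, hper₀, neg_zero]) (neg_pos.2 (hneg ⟨hls, hsθ⟩))
  have hnonpos (θ : ℝ) (hθ : θ ∈ Icc θ₁ θ₀) : ψ θ ≤ 0 := by
    rcases le_or_gt θ s with hs | hs
    · exact neg_nonneg.1 (hge θ ⟨hθ.1, hs⟩)
    · rcases hθ.2.eq_or_lt with rfl | hθ₀
      · exact hzero.le
      · exact (hneg ⟨hls.trans hs, hθ₀⟩).le
  have hlt : θ₁ < θ₀ := hθ₁.2.trans hsθ
  exact ⟨θ₁, hlt, (hnonpos θ₁ ⟨le_rfl, hlt.le⟩).antisymm (neg_nonpos.1 hle), hnonpos⟩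

/-- A potential `ψ` along a closed curve parametrized by the angle `θ`. In the application the
curve is a geodesic circle and `ω` is the angle from the outward radial direction to the gradient
of the potential, so that `ω` avoids `0` where `ψ ≤ 0` and `π` where `0 ≤ ψ` (modulo `2π`). -/
structure IsAngularPotential (ψ ω d : ℝ → ℝ) : Prop where
  hasDerivAt : ∀ θ, HasDerivAt ψ (d θ * Real.sin (ω θ)) θ
  pos : ∀ θ, 0 < d θ
  continuous_angle : Continuous ω
  cos_lt_one : ∀ θ, ψ θ ≤ 0 → Real.cos (ω θ) < 1
  neg_one_lt_cos : ∀ θ, 0 ≤ ψ θ → -1 < Real.cos (ω θ)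
  periodic : Function.Periodic ψ (2 * Real.pi)
  periodic_angle : Function.Periodic ω (2 * Real.pi)

namespace IsAngularPotential

variable {ψ ω d : ℝ → ℝ}

lemma neg (h : IsAngularPotential ψ ω d) :
    IsAngularPotential (fun θ ↦ -ψ θ) (fun θ ↦ ω θ + Real.pi) d where
  hasDerivAt θ := (h.hasDerivAt θ).neg.congr_deriv (by rw [Real.sin_add_pi, mul_neg])
  pos := h.pos
  continuous_angle := h.continuous_angle.add_const _
  cos_lt_one θ hθ := by
    rw [Real.cos_add_pi, neg_lt]
    exact h.neg_one_lt_cos θ (neg_nonpos.1 hθ)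
  neg_one_lt_cos θ hθ := by
    rw [Real.cos_add_pi, neg_lt_neg_iff]
    exact h.cos_lt_one θ (neg_nonneg.1 hθ)
  periodic θ := by simp only [h.periodic θ]
  periodic_angle θ := by simp only [h.periodic_angle θ]

lemma continuous (h : IsAngularPotential ψ ω d) : Continuous ψ :=
  continuous_iff_continuousAt.2 fun θ ↦ (h.hasDerivAt θ).continuousAt

lemma sin_ne_zero (h : IsAngularPotential ψ ω d) {θ : ℝ} (hθ : ψ θ = 0) :
    Real.sin (ω θ) ≠ 0 := fun hsin ↦ by
  rcases Real.sin_eq_zero_iff_cos_eq.1 hsin with hcos | hcos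
  · exact (h.cos_lt_one θ hθ.le).ne hcos
  · exact (h.neg_one_lt_cos θ hθ.ge).ne' hcos

lemma exists_zero_angle_lt (h : IsAngularPotential ψ ω d) {θ₀ : ℝ} (hzero : ψ θ₀ = 0)
    (hsin : 0 < Real.sin (ω θ₀)) : ∃ θ₁, ψ θ₁ = 0 ∧ ω θ₀ < ω θ₁ := by
  obtain ⟨θ₁, hlt, hzero₁, hnonpos⟩ := exists_previous_zero h.continuous h.periodic
    Real.two_pi_pos (h.hasDerivAt θ₀) (mul_pos (h.pos θ₀) hsin) hzero
  have hderiv : 0 ≤ -(d θ₁ * Real.sin (ω θ₁)) :=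
    nonneg_of_hasDerivAt_of_forall_le (h.hasDerivAt θ₁).neg hlt fun t ht ↦
      neg_le_neg (by simpa only [hzero₁] using hnonpos t ht)
  have hsin₁ : Real.sin (ω θ₁) < 0 :=
    (nonpos_of_mul_nonpos_right (neg_nonneg.1 hderiv) (h.pos θ₁)).lt_of_ne (h.sin_ne_zero hzero₁)
  refine ⟨θ₁, hzero₁, not_le.1 fun hle ↦ ?_⟩
  obtain ⟨c, hc, hcos⟩ := exists_cos_eq_one hle hsin₁ hsin
  obtain ⟨θ, hθ, rfl⟩ := intermediate_value_Icc hlt.le h.continuous_angle.continuousOn hc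
  exact (h.cos_lt_one θ (hnonpos θ hθ)).ne hcos

-- At a zero where `ω` is maximal, `exists_zero_angle_lt` applies to `ψ` or to `-ψ`.
lemma ne_zero (h : IsAngularPotential ψ ω d) (θ : ℝ) : ψ θ ≠ 0 := fun hθ ↦ by
  have hreduce (θ : ℝ) (hθ : ψ θ = 0) : ∃ η ∈ Icc 0 (2 * Real.pi) ∩ ψ ⁻¹' {0}, ω θ = ω η := by
    obtain ⟨η, hη, hψω⟩ := Function.Periodic.exists_mem_Ico₀ (f := fun θ ↦ (ψ θ, ω θ))
      (fun θ ↦ by simp only [h.periodic θ, h.periodic_angle θ]) Real.two_pi_pos θ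
    obtain ⟨hψ, hω⟩ := Prod.ext_iff.1 hψω
    exact ⟨η, ⟨Ico_subset_Icc_self hη, hψ.symm.trans hθ⟩, hω⟩
  obtain ⟨η, hη, -⟩ := hreduce θ hθ
  obtain ⟨θ₀, hθ₀, hmax⟩ := (isCompact_Icc.inter_right
    (isClosed_singleton.preimage h.continuous)).exists_isMaxOn ⟨η, hη⟩
    h.continuous_angle.continuousOn
  have hle (θ : ℝ) (hθ : ψ θ = 0) : ω θ ≤ ω θ₀ := by
    obtain ⟨η, hη, hω⟩ := hreduce θ hθ
    exact hω.trans_le (hmax hη)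
  rcases (h.sin_ne_zero hθ₀.2).lt_or_gt with hsin | hsin
  · obtain ⟨θ₁, hzero, hlt⟩ := h.neg.exists_zero_angle_lt (neg_eq_zero.2 hθ₀.2)
      (by rwa [Real.sin_add_pi, neg_pos])
    exact (hle θ₁ (neg_eq_zero.1 hzero)).not_gt ((add_lt_add_iff_right _).1 hlt)
  · obtain ⟨θ₁, hzero, hlt⟩ := h.exists_zero_angle_lt hθ₀.2 hsin
    exact (hle θ₁ hzero).not_gt hlt

end IsAngularPotential

end AngularPotential

section SignAtInfinity

open Bornology (cobounded)

lemma tendsto_cobounded_of_leftInverse {X Y : Type*} [PseudoMetricSpace X] [PseudoMetricSpace Y]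
    [ProperSpace Y] {E : X → Y} {S : Y → X} (hS : Continuous S) (hSE : Function.LeftInverse S E) :
    Tendsto E (cobounded X) (cobounded Y) := by
  refine tendsto_def.2 fun s hs ↦ Bornology.isBounded_compl_iff.1 ?_
  rw [← preimage_compl]
  exact ((Bornology.isBounded_compl_iff.2 hs).isCompact_closure.image hS).isBounded.subset
    fun z hz ↦ ⟨E z, subset_closure hz, hSE z⟩

lemma eventually_forall_mem_sphere {V : Type*} [SeminormedAddCommGroup V] {p : V → Prop}
    (h : ∀ᶠ x in cobounded V, p x) : ∀ᶠ S in atTop, ∀ x ∈ sphere 0 S, p x := by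
  obtain ⟨r, -, hr⟩ := hasBasis_cobounded_norm.eventually_iff.1 h
  filter_upwards [eventually_ge_atTop r] with S hS x hx
  exact hr (hS.trans_eq (mem_sphere_zero_iff_norm.1 hx).symm)

lemma isPreconnected_setOf_le_norm (r : ℝ) : IsPreconnected {z : ℂ | r ≤ ‖z‖} := by
  have himage : {z : ℂ | r ≤ ‖z‖} =
      (fun p : ℝ × ℝ ↦ p.1 * Complex.exp (p.2 * Complex.I)) '' Ici (max r 0) ×ˢ univ := by
    ext z
    constructor
    · exact fun hz ↦ ⟨(‖z‖, z.arg), ⟨max_le hz (norm_nonneg z), trivial⟩,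
        Complex.norm_mul_exp_arg_mul_I z⟩
    · rintro ⟨⟨ρ, θ⟩, ⟨hρ, -⟩, rfl⟩
      obtain ⟨hr, h0⟩ := max_le_iff.1 (mem_Ici.1 hρ)
      simpa only [mem_ofPred_eq, norm_mul, Complex.norm_exp_ofReal_mul_I, mul_one,
        Complex.norm_of_nonneg h0] using hr
  rw [himage]
  exact (isPreconnected_Ici.prod isPreconnected_univ).image _ (by fun_prop)

lemma eventually_pos_or_eventually_neg {m : ℂ → ℝ} (hm : Continuous m)
    (hne : ∀ᶠ z in cobounded ℂ, m z ≠ 0) :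
    (∀ᶠ z in cobounded ℂ, 0 < m z) ∨ ∀ᶠ z in cobounded ℂ, m z < 0 := by
  obtain ⟨r, -, hr⟩ := hasBasis_cobounded_norm.eventually_iff.1 hne
  have hconn := ((isPreconnected_setOf_le_norm r).image m hm.continuousOn).ordConnected
  by_cases hpos : ∀ z : ℂ, r ≤ ‖z‖ → 0 < m z
  · exact Or.inl ((eventually_cobounded_le_norm r).mono hpos)
  · push Not at hpos
    obtain ⟨w, hw, hmw⟩ := hpos
    refine Or.inr ((eventually_cobounded_le_norm r).mono fun z hz ↦ not_le.1 fun hmz ↦ ?_)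
    obtain ⟨v, hv, hmv⟩ := hconn.out ⟨w, hw, rfl⟩ ⟨z, hz, rfl⟩ ⟨hmw, hmz⟩
    exact hr hv hmv

lemma exists_continuous_eq_mul_of_eventuallyEq_id {Q : ℂ → ℂ} (hQ : Continuous Q)
    (hid : Q =ᶠ[𝓝 0] id) (hne : ∀ z ≠ 0, Q z ≠ 0) :
    ∃ κ : ℂ → ℂ, Continuous κ ∧ (∀ z, κ z ≠ 0) ∧ (∀ z, Q z = z * κ z) ∧ κ 0 = 1 := by
  have hderiv : HasDerivAt Q 1 0 := (hasDerivAt_id 0).congr_of_eventuallyEq hid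
  have hmul (z : ℂ) : Q z = z * dslope Q 0 z := by
    simpa [hid.eq_of_nhds] using (sub_smul_dslope Q 0 z).symm
  have hzero : dslope Q 0 0 = 1 := by rw [dslope_same, hderiv.deriv]
  refine ⟨dslope Q 0, ?_, fun z ↦ ?_, hmul, hzero⟩
  · rw [← continuousOn_univ, continuousOn_dslope univ_mem]
    exact ⟨hQ.continuousOn, hderiv.differentiableAt⟩
  · rcases eq_or_ne z 0 with rfl | hz
    · rw [hzero]
      exact one_ne_zero
    · exact right_ne_zero_of_mul (hmul z ▸ hne z hz)

lemma exists_min_le_norm_mul {Q κ : ℂ → ℂ} (hκ : Continuous κ) (hκ0 : ∀ z, κ z ≠ 0)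
    (hQκ : ∀ z, Q z = z * κ z) (hQ : Tendsto Q (cobounded ℂ) (cobounded ℂ)) (M : ℝ) :
    ∃ m > 0, ∀ z y, ‖z‖ ≤ ‖y‖ → min M (m * ‖y‖) ≤ ‖y * κ z‖ := by
  obtain ⟨r, -, hr⟩ := hasBasis_cobounded_norm.eventually_iff.1
    (hQ.eventually (eventually_cobounded_le_norm M))
  obtain ⟨w, -, hw⟩ := (isCompact_closedBall (0 : ℂ) |r|).exists_isMinOn
    (nonempty_closedBall.2 (abs_nonneg r)) hκ.norm.continuousOn
  refine ⟨‖κ w‖, norm_pos_iff.2 (hκ0 w), fun z y hzy ↦ ?_⟩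
  rw [norm_mul]
  rcases le_total ‖z‖ |r| with hz | hz
  · rw [mul_comm ‖y‖]
    exact min_le_of_right_le
      (mul_le_mul_of_nonneg_right (hw (mem_closedBall_zero_iff.2 hz)) (norm_nonneg y))
  · refine min_le_of_left_le ((hr ((le_abs_self r).trans hz)).trans ?_)
    rw [hQκ, norm_mul]
    exact mul_le_mul_of_nonneg_right hzy (norm_nonneg _)

lemma eventually_le_norm_mul_comp_smul {Q κ : ℂ → ℂ} (hκ : Continuous κ) (hκ0 : ∀ z, κ z ≠ 0)
    (hQκ : ∀ z, Q z = z * κ z) (hQ : Tendsto Q (cobounded ℂ) (cobounded ℂ)) (M : ℝ) :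
    ∀ᶠ y in cobounded ℂ, ∀ t ∈ Icc (0 : ℝ) 1, M ≤ ‖y * κ (t • y)‖ := by
  obtain ⟨m, hm, hle⟩ := exists_min_le_norm_mul hκ hκ0 hQκ hQ M
  filter_upwards [eventually_cobounded_le_norm (M / m)] with y hy t ht
  have hty : ‖t • y‖ ≤ ‖y‖ := by
    rw [norm_smul, Real.norm_of_nonneg ht.1]
    exact mul_le_of_le_one_left (norm_nonneg y) ht.2
  exact (le_min le_rfl ((div_le_iff₀' hm).1 hy)).trans (hle _ y hty)

namespace IsBrouwerDegree

variable {deg : (ℂ → ℂ) → Set ℂ → ℤ} {f K Q : ℂ → ℂ} {S : ℝ}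

lemma deg_ball_eq_one_of_eventuallyEq_id (h : IsBrouwerDegree deg) (hQ : Continuous Q)
    (hid : Q =ᶠ[𝓝 0] id) (hne : ∀ z ≠ 0, Q z ≠ 0) (hS : 0 < S) : deg Q (ball 0 S) = 1 := by
  obtain ⟨κ, hκ, hκ0, hQκ, -⟩ := exists_continuous_eq_mul_of_eventuallyEq_id hQ hid hne
  rw [funext hQκ, ← h.normalized (ball 0 S) isOpen_ball isBounded_ball (mem_ball_self hS)]
  exact h.deg_ball_mul_eq_left continuous_id hκ (fun z hz ↦ ne_of_mem_sphere hz hS.ne')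
    fun z _ ↦ hκ0 z

lemma eventually_deg_ball_comp_eq (h : IsBrouwerDegree deg) (hf : Continuous f)
    (hf0 : ∀ᶠ x in cobounded ℂ, f x ≠ 0) (hQ : Continuous Q) (hid : Q =ᶠ[𝓝 0] id)
    (hne : ∀ z ≠ 0, Q z ≠ 0) (hproper : Tendsto Q (cobounded ℂ) (cobounded ℂ)) :
    ∀ᶠ S in atTop, deg (fun z ↦ f (Q z)) (ball 0 S) = deg f (ball 0 S) := by
  obtain ⟨κ, hκ, hκ0, hQκ, hκ1⟩ := exists_continuous_eq_mul_of_eventuallyEq_id hQ hid hne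
  obtain ⟨r, -, hr⟩ := hasBasis_cobounded_norm.eventually_iff.1 hf0
  filter_upwards [eventually_forall_mem_sphere
    (eventually_le_norm_mul_comp_smul hκ hκ0 hQκ hproper r)]
    with S hS
  have hhom := h.deg_ball_eq_of_homotopy (H := fun t y ↦ f (y * κ (t • y))) (by fun_prop)
    fun t ht y hy ↦ hr (hS y hy t ht)
  simpa only [zero_smul, one_smul, hκ1, mul_one, ← hQκ] using hhom.symm

lemma exists_periodic_log_mul_conj (h : IsBrouwerDegree deg) (hK : Continuous K)
    (hQ : Continuous Q) (hS : 0 < S) (hK0 : ∀ z ∈ sphere 0 S, K z ≠ 0)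
    (hQ0 : ∀ z ∈ sphere 0 S, Q z ≠ 0) (hdeg : deg K (ball 0 S) = deg Q (ball 0 S)) :
    ∃ C : ℝ → ℂ, Continuous C ∧ Function.Periodic C (2 * Real.pi) ∧
      ∀ θ : ℝ, K (S * Complex.exp (θ * Complex.I)) *
        starRingEnd ℂ (Q (S * Complex.exp (θ * Complex.I))) = Complex.exp (C θ) := by
  obtain ⟨A, hA, hAper, hKA⟩ := h.exists_periodic_log hK hS hK0
  obtain ⟨B, hB, hBper, hQB⟩ := h.exists_periodic_log hQ hS hQ0
  refine ⟨fun θ ↦ A θ + starRingEnd ℂ (B θ), hA.add (Complex.continuous_conj.comp hB),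
    fun θ ↦ by simp only [hAper θ, hBper θ], fun θ ↦ ?_⟩
  simp only [hKA, hQB, hdeg, ← Complex.exp_conj, ← Complex.exp_add, map_add, map_mul, map_intCast,
    Complex.conj_ofReal, Complex.conj_I]
  ring_nf

end IsBrouwerDegree

lemma inner_eq_re_mul_conj (a b : ℂ) : inner ℝ a b = (a * starRingEnd ℂ b).re := by
  rw [inner_eq_re_mul_re_add_im_mul_im, Complex.mul_re, Complex.conj_re, Complex.conj_im]
  ring

lemma inner_I_mul_eq_im_mul_conj (a b : ℂ) :
    inner ℝ a (Complex.I * b) = (a * starRingEnd ℂ b).im := by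
  rw [inner_eq_re_mul_re_add_im_mul_im, Complex.I_mul_re, Complex.I_mul_im, Complex.mul_im,
    Complex.conj_re, Complex.conj_im]

namespace IsExponentialMap

variable {u : ℂ → ℝ} {g : ℂ → ℂ} {R : ℝ} {E P : ℂ → ℂ} {L : ℂ → ℂ →L[ℝ] ℂ} {f : ℂ → ℂ} {φ : ℂ → ℝ}
  {deg : (ℂ → ℂ) → Set ℂ → ℤ}

lemma eventuallyEq_id (h : IsExponentialMap u g R E P L) (hR : 0 < R) : E =ᶠ[𝓝 0] id :=
  eventually_of_mem (ball_mem_nhds 0 hR) fun _ hz ↦ h.eq_self _ (mem_ball_zero_iff.1 hz)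

lemma momentum_eventuallyEq_id (h : IsExponentialMap u g R E P L) (hR : 0 < R) : P =ᶠ[𝓝 0] id :=
  eventually_of_mem (ball_mem_nhds 0 hR) fun _ hz ↦ h.momentum_eq_self _ (mem_ball_zero_iff.1 hz)

lemma momentum_ne_zero (h : IsExponentialMap u g R E P L) {z : ℂ} (hz : z ≠ 0) : P z ≠ 0 := by
  rw [← norm_ne_zero_iff, h.norm_momentum]
  exact mul_ne_zero (Real.exp_ne_zero _) (norm_ne_zero_iff.2 hz)

lemma isAngularPotential_comp_circleMap (h : IsExponentialMap u g R E P L)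
    (hφ : ∀ x, HasFDerivAt φ (innerSL ℝ (f x)) x) {S : ℝ} (hS : 0 < S) {C : ℝ → ℂ}
    (hC : Continuous C) (hCper : Function.Periodic C (2 * Real.pi))
    (hfP : ∀ θ, f (E (circleMap 0 S θ)) * starRingEnd ℂ (P (circleMap 0 S θ)) = Complex.exp (C θ))
    (hlt : ∀ z ∈ sphere 0 S, φ (E z) ≤ 0 → inner ℝ (f (E z)) (P z) < ‖f (E z)‖ * ‖P z‖)
    (hgt : ∀ z ∈ sphere 0 S, 0 ≤ φ (E z) → -(‖f (E z)‖ * ‖P z‖) < inner ℝ (f (E z)) (P z)) :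
    ∃ d, IsAngularPotential (fun θ ↦ φ (E (circleMap 0 S θ))) (fun θ ↦ (C θ).im) d := by
  have hmem (θ : ℝ) : circleMap 0 S θ ∈ sphere 0 S := circleMap_mem_sphere 0 hS.le θ
  have hinner (θ : ℝ) : inner ℝ (f (E (circleMap 0 S θ))) (P (circleMap 0 S θ)) =
      Real.exp (C θ).re * Real.cos (C θ).im := by
    rw [inner_eq_re_mul_conj, hfP, Complex.exp_re]
  have hinner_I (θ : ℝ) : inner ℝ (f (E (circleMap 0 S θ))) (Complex.I * P (circleMap 0 S θ)) =
      Real.exp (C θ).re * Real.sin (C θ).im := by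
    rw [inner_I_mul_eq_im_mul_conj, hfP, Complex.exp_im]
  have hnorm (θ : ℝ) : ‖f (E (circleMap 0 S θ))‖ * ‖P (circleMap 0 S θ)‖ =
      Real.exp (C θ).re := by
    rw [← Complex.norm_exp, ← hfP, norm_mul, Complex.norm_conj]
  choose η hη hLη using fun θ ↦ h.deriv_I_mul _ (ne_of_mem_sphere (hmem θ) hS.ne')
  have hE (θ : ℝ) : HasDerivAt (fun θ ↦ E (circleMap 0 S θ))
      ((η θ : ℝ) • (Complex.I * P (circleMap 0 S θ))) θ :=
    ((h.hasStrictFDerivAt _).hasFDerivAt.comp_hasDerivAt θ (hasDerivAt_circleMap 0 S θ)).congr_deriv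
      (by rw [mul_comm, hLη])
  refine ⟨fun θ ↦ η θ * Real.exp (C θ).re, fun θ ↦ ?_, fun θ ↦ mul_pos (hη θ) (Real.exp_pos _),
    Complex.continuous_im.comp hC, fun θ hθ ↦ ?_, fun θ hθ ↦ ?_, fun θ ↦ ?_, fun θ ↦ ?_⟩
  · refine ((hφ _).comp_hasDerivAt θ (hE θ)).congr_deriv ?_
    rw [innerSL_apply_apply, inner_smul_right, hinner_I, mul_assoc]
  · have := hlt _ (hmem θ) hθ
    rwa [hinner, hnorm, mul_lt_iff_lt_one_right (Real.exp_pos _)] at this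
  · have := hgt _ (hmem θ) hθ
    rwa [hinner, hnorm, ← mul_neg_one, mul_lt_mul_iff_right₀ (Real.exp_pos _)] at this
  · simp only [periodic_circleMap 0 S θ]
  · simp only [hCper θ]

lemma potential_ne_zero_of_mem_sphere (h : IsExponentialMap u g R E P L) (hR : 0 < R)
    (hdeg : IsBrouwerDegree deg) (hf : Continuous f)
    (hφ : ∀ x, HasFDerivAt φ (innerSL ℝ (f x)) x) {S : ℝ} (hS : 0 < S)
    (hf0 : ∀ z ∈ sphere 0 S, f (E z) ≠ 0) (hdeg1 : deg (fun z ↦ f (E z)) (ball 0 S) = 1)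
    (hlt : ∀ z ∈ sphere 0 S, φ (E z) ≤ 0 → inner ℝ (f (E z)) (P z) < ‖f (E z)‖ * ‖P z‖)
    (hgt : ∀ z ∈ sphere 0 S, 0 ≤ φ (E z) → -(‖f (E z)‖ * ‖P z‖) < inner ℝ (f (E z)) (P z))
    {z : ℂ} (hz : z ∈ sphere 0 S) : φ (E z) ≠ 0 := by
  obtain ⟨C, hC, hCper, hfP⟩ := hdeg.exists_periodic_log_mul_conj (hf.comp h.continuous)
    h.continuous_momentum hS hf0 (fun z hz ↦ h.momentum_ne_zero (ne_of_mem_sphere hz hS.ne'))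
    (hdeg1.trans (hdeg.deg_ball_eq_one_of_eventuallyEq_id h.continuous_momentum
      (h.momentum_eventuallyEq_id hR) (fun _ ↦ h.momentum_ne_zero) hS).symm)
  obtain ⟨d, hd⟩ := h.isAngularPotential_comp_circleMap hφ hS hC hCper
    (fun θ ↦ by simpa only [circleMap_zero, Function.comp_apply] using hfP θ) hlt hgt
  rw [← Complex.norm_mul_exp_arg_mul_I z, mem_sphere_zero_iff_norm.1 hz, ← circleMap_zero]
  exact hd.ne_zero z.arg

end IsExponentialMap

theorem IsExponentialMap.potential_eventually_pos_or_eventually_neg {u : ℂ → ℝ} {g : ℂ → ℂ}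
    {R r : ℝ} {E P S f : ℂ → ℂ} {L : ℂ → ℂ →L[ℝ] ℂ} {φ : ℂ → ℝ} {deg : (ℂ → ℂ) → Set ℂ → ℤ}
    (h : IsExponentialMap u g R E P L) (hR : 0 < R) (hS : Continuous S)
    (hES : Function.RightInverse S E) (hSE : Function.LeftInverse S E)
    (hdeg : IsBrouwerDegree deg) (hf : Continuous f)
    (hφ : ∀ x, HasFDerivAt φ (innerSL ℝ (f x)) x) (hf0 : ∀ᶠ x in cobounded ℂ, f x ≠ 0)
    (hdeg1 : ∀ᶠ ρ in atTop, deg f (ball 0 ρ) = 1)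
    (hlt : ∀ z, r ≤ ‖E z‖ → φ (E z) ≤ 0 → inner ℝ (f (E z)) (P z) < ‖f (E z)‖ * ‖P z‖)
    (hgt : ∀ z, r ≤ ‖E z‖ → 0 ≤ φ (E z) → -(‖f (E z)‖ * ‖P z‖) < inner ℝ (f (E z)) (P z)) :
    (∀ᶠ x in cobounded ℂ, 0 < φ x) ∨ ∀ᶠ x in cobounded ℂ, φ x < 0 := by
  have hE0 : E 0 = 0 := (h.eventuallyEq_id hR).eq_of_nhds
  have hEproper : Tendsto E (cobounded ℂ) (cobounded ℂ) := tendsto_cobounded_of_leftInverse hS hSE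
  have hSproper : Tendsto S (cobounded ℂ) (cobounded ℂ) :=
    tendsto_cobounded_of_leftInverse h.continuous hES
  have hdegE := hdeg.eventually_deg_ball_comp_eq hf hf0 h.continuous (h.eventuallyEq_id hR)
    (fun z hz hEz ↦ hz (hSE.injective (hEz.trans hE0.symm))) hEproper
  have hne : ∀ᶠ z in cobounded ℂ, φ (E z) ≠ 0 := by
    suffices ∀ᶠ ρ in atTop, ∀ z ∈ sphere 0 ρ, φ (E z) ≠ 0 from
      (tendsto_norm_cobounded_atTop.eventually this).mono fun z hz ↦
        hz z (mem_sphere_zero_iff_norm.2 rfl)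
    filter_upwards [hdegE, hdeg1, eventually_forall_mem_sphere (hEproper.eventually hf0),
      eventually_forall_mem_sphere (hEproper.eventually (eventually_cobounded_le_norm r)),
      eventually_gt_atTop 0] with ρ hρdeg hρ1 hρ0 hρr hρ z hz
    exact h.potential_ne_zero_of_mem_sphere hR hdeg hf hφ hρ hρ0 (hρdeg.trans hρ1)
      (fun w hw ↦ hlt w (hρr w hw)) (fun w hw ↦ hgt w (hρr w hw)) hz
  refine eventually_pos_or_eventually_neg
    (continuous_iff_continuousAt.2 fun x ↦ (hφ x).continuousAt) ?_
  exact (hSproper.eventually hne).mono fun x hx ↦ by rwa [hES] at hx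

end SignAtInfinity

section CoerciveGradientHomotopy

open Bornology (cobounded)

variable {V W : Type*} [NormedAddCommGroup V] [InnerProductSpace ℝ V] [NormedAddCommGroup W]
  [InnerProductSpace ℝ W]

/-- `f` and `g` are proper gradient homotopic, in an arbitrary inner product space. Continuity is
required for all real times and properness is expressed by uniform coercivity, so that homotopies
are easy to reverse and to concatenate. -/
def CoerciveGradientHomotopic (f g : V → V) : Prop :=
  ∃ h : ℝ → V → V, (Continuous fun p : ℝ × V ↦ h p.1 p.2) ∧
    (∀ t ∈ Icc (0 : ℝ) 1, ∃ φ : V → ℝ, ∀ x, HasFDerivAt φ (innerSL ℝ (h t x)) x) ∧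
    (∀ M, ∀ᶠ x in cobounded V, ∀ t ∈ Icc (0 : ℝ) 1, M ≤ ‖h t x‖) ∧ h 0 = f ∧ h 1 = g

lemma tendsto_cobounded_of_norm_sub_le {α E : Type*} [SeminormedAddCommGroup E] {l : Filter α}
    {f g : α → E} (hf : Tendsto f l (cobounded E)) {C : ℝ} (hC : ∀ x, ‖f x - g x‖ ≤ C) :
    Tendsto g l (cobounded E) := by
  rw [← tendsto_norm_atTop_iff_cobounded] at hf ⊢
  refine tendsto_atTop_mono (fun x ↦ ?_) (tendsto_atTop_add_const_right l (-C) hf)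
  linarith [norm_sub_norm_le (f x) (g x), hC x]

lemma one_sub_div_two_mul_sq_le_norm_add_sq {c : ℝ} (hc : -1 ≤ c) {v w : V}
    (h : -c * (‖v‖ * ‖w‖) ≤ inner ℝ v w) : (1 - c) / 2 * (‖v‖ + ‖w‖) ^ 2 ≤ ‖v + w‖ ^ 2 := by
  rw [norm_add_sq_real]
  linarith [mul_nonneg (neg_le_iff_add_nonneg'.1 hc) (sq_nonneg (‖v‖ - ‖w‖))]

namespace CoerciveGradientHomotopic

variable {f g k : V → V} {φ ψ : V → ℝ}

lemma symm (H : CoerciveGradientHomotopic f g) : CoerciveGradientHomotopic g f := by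
  obtain ⟨h, hcont, hgrad, hcoer, h0, h1⟩ := H
  refine ⟨fun t ↦ h (1 - t),
    hcont.comp (by fun_prop : Continuous fun p : ℝ × V ↦ (1 - p.1, p.2)), fun t ht ↦
    hgrad _ (Icc.mem_iff_one_sub_mem.1 ht), fun M ↦ (hcoer M).mono fun x hx t ht ↦
    hx _ (Icc.mem_iff_one_sub_mem.1 ht), ?_, ?_⟩
  · simpa only [sub_zero] using h1
  · simpa only [sub_self] using h0

lemma trans (H : CoerciveGradientHomotopic f g) (H' : CoerciveGradientHomotopic g k) :
    CoerciveGradientHomotopic f k := by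
  obtain ⟨a, ha, hagrad, hacoer, ha0, ha1⟩ := H
  obtain ⟨b, hb, hbgrad, hbcoer, hb0, hb1⟩ := H'
  have hleft {t : ℝ} (ht : t ∈ Icc (0 : ℝ) 1) (h : t ≤ 1 / 2) : 2 * t ∈ Icc (0 : ℝ) 1 :=
    ⟨by linarith [ht.1], by linarith⟩
  have hright {t : ℝ} (ht : t ∈ Icc (0 : ℝ) 1) (h : ¬t ≤ 1 / 2) : 2 * t - 1 ∈ Icc (0 : ℝ) 1 :=
    ⟨by linarith, by linarith [ht.2]⟩
  refine ⟨fun t x ↦ if t ≤ 1 / 2 then a (2 * t) x else b (2 * t - 1) x, ?_, fun t ht ↦ ?_,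
    fun M ↦ ?_, ?_, ?_⟩
  · refine Continuous.if_le (ha.comp (by fun_prop : Continuous fun p : ℝ × V ↦ (2 * p.1, p.2)))
      (hb.comp (by fun_prop : Continuous fun p : ℝ × V ↦ (2 * p.1 - 1, p.2))) continuous_fst
      continuous_const fun p hp ↦ ?_
    norm_num [hp, ha1, hb0]
  · dsimp only
    split_ifs with h
    exacts [hagrad _ (hleft ht h), hbgrad _ (hright ht h)]
  · filter_upwards [hacoer M, hbcoer M] with x hax hbx t ht
    split_ifs with h
    exacts [hax _ (hleft ht h), hbx _ (hright ht h)]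
  · simp [ha0]
  · norm_num [hb1]

lemma neg (H : CoerciveGradientHomotopic f g) :
    CoerciveGradientHomotopic (fun x ↦ -f x) fun x ↦ -g x := by
  obtain ⟨h, hcont, hgrad, hcoer, rfl, rfl⟩ := H
  refine ⟨fun t x ↦ -h t x, hcont.neg, fun t ht ↦ ?_, by simpa only [norm_neg] using hcoer,
    rfl, rfl⟩
  obtain ⟨φ, hφ⟩ := hgrad t ht
  exact ⟨fun x ↦ -φ x, fun x ↦ by rw [map_neg]; exact (hφ x).fun_neg⟩

lemma of_neg_mul_le_inner (hf : Continuous f) (hg : Continuous g)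
    (hφ : ∀ x, HasFDerivAt φ (innerSL ℝ (f x)) x) (hψ : ∀ x, HasFDerivAt ψ (innerSL ℝ (g x)) x)
    (hfcoer : Tendsto f (cobounded V) (cobounded V))
    (hgcoer : Tendsto g (cobounded V) (cobounded V)) {c : ℝ} (hc0 : -1 ≤ c) (hc1 : c < 1)
    (hinner : ∀ᶠ x in cobounded V, -c * (‖f x‖ * ‖g x‖) ≤ inner ℝ (f x) (g x)) :
    CoerciveGradientHomotopic f g := by
  refine ⟨fun t x ↦ (1 - t) • f x + t • g x, by fun_prop, fun t _ ↦
    ⟨fun x ↦ (1 - t) • φ x + t • ψ x, fun x ↦ ?_⟩, fun M ↦ ?_, by simp, by simp⟩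
  · rw [map_add, map_smul, map_smul]
    exact ((hφ x).fun_const_smul (1 - t)).fun_add ((hψ x).fun_const_smul t)
  set δ := √((1 - c) / 2)
  have hδ : 0 < δ := Real.sqrt_pos.2 (half_pos (sub_pos.2 hc1))
  filter_upwards [hinner, hfcoer.eventually (eventually_cobounded_le_norm (M / δ)),
    hgcoer.eventually (eventually_cobounded_le_norm (M / δ))] with x hx hfx hgx t ht
  have ht' : 0 ≤ 1 - t := sub_nonneg.2 ht.2
  have hsq := one_sub_div_two_mul_sq_le_norm_add_sq hc0 (v := (1 - t) • f x) (w := t • g x) (by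
    rw [norm_smul_of_nonneg ht', norm_smul_of_nonneg ht.1, real_inner_smul_left,
      real_inner_smul_right]
    calc _ = (1 - t) * (t * (-c * (‖f x‖ * ‖g x‖))) := by ring
      _ ≤ _ := by gcongr; exact ht.1)
  have hle : δ * (‖(1 - t) • f x‖ + ‖t • g x‖) ≤ ‖(1 - t) • f x + t • g x‖ := by
    refine abs_le_of_sq_le_sq' ?_ (norm_nonneg _) |>.2
    rwa [mul_pow, Real.sq_sqrt (by linarith)]
  refine le_trans ?_ hle
  rw [norm_smul_of_nonneg ht', norm_smul_of_nonneg ht.1, ← div_le_iff₀' hδ]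
  calc M / δ = (1 - t) * (M / δ) + t * (M / δ) := by ring
    _ ≤ (1 - t) * ‖f x‖ + t * ‖g x‖ := by gcongr; exact ht.1

lemma of_norm_sub_le (hf : Continuous f) (hg : Continuous g)
    (hφ : ∀ x, HasFDerivAt φ (innerSL ℝ (f x)) x) (hψ : ∀ x, HasFDerivAt ψ (innerSL ℝ (g x)) x)
    (hfcoer : Tendsto f (cobounded V) (cobounded V)) {C : ℝ} (hC : ∀ x, ‖f x - g x‖ ≤ C) :
    CoerciveGradientHomotopic f g := by
  refine of_neg_mul_le_inner hf hg hφ hψ hfcoer (tendsto_cobounded_of_norm_sub_le hfcoer hC)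
    neg_one_lt_zero.le one_pos ?_
  filter_upwards [hfcoer.eventually (eventually_cobounded_le_norm C)] with x hx
  have hle : inner ℝ (f x) (f x - g x) ≤ ‖f x‖ ^ 2 := calc
    _ ≤ ‖f x‖ * ‖f x - g x‖ := real_inner_le_norm _ _
    _ ≤ ‖f x‖ ^ 2 := by rw [sq]; gcongr; exact (hC x).trans hx
  rw [inner_sub_right, real_inner_self_eq_norm_sq] at hle
  linarith

lemma eventually_deg_ball_eq {deg : (V → V) → Set V → ℤ} (hdeg : IsBrouwerDegree deg)
    (H : CoerciveGradientHomotopic f g) :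
    ∀ᶠ ρ in atTop, deg f (ball 0 ρ) = deg g (ball 0 ρ) := by
  obtain ⟨h, hcont, -, hcoer, rfl, rfl⟩ := H
  filter_upwards [eventually_forall_mem_sphere (hcoer 1)] with ρ hρ
  exact hdeg.deg_ball_eq_of_homotopy hcont fun t ht x hx ↦
    norm_pos_iff.1 (one_pos.trans_le (hρ x hx t ht))

end CoerciveGradientHomotopic

lemma hasFDerivAt_comp_linearIsometryEquiv {φ : V → ℝ} {v : V} {y : W} (e : W ≃ₗᵢ[ℝ] V)
    (hφ : HasFDerivAt φ (innerSL ℝ v) (e y)) :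
    HasFDerivAt (fun x ↦ φ (e x)) (innerSL ℝ (e.symm v)) y := by
  refine (hφ.comp y e.toContinuousLinearEquiv.hasFDerivAt).congr_fderiv
    (ContinuousLinearMap.ext fun w ↦ ?_)
  exact (e.symm_apply_apply w ▸ e.symm.inner_map_map v (e w)).symm

lemma isGradient_iff {n : ℕ} {f : Euc n → Euc n} :
    IsGradient f ↔ Continuous f ∧ ∃ φ : Euc n → ℝ, ∀ x, HasFDerivAt φ (innerSL ℝ (f x)) x := by
  constructor
  · rintro ⟨φ, hφ, hgrad⟩
    have hd (x : Euc n) : HasFDerivAt φ (innerSL ℝ (f x)) x :=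
      hgrad x ▸ (hφ.differentiable one_ne_zero x).hasGradientAt.hasFDerivAt
    refine ⟨?_, φ, hd⟩
    rw [funext fun x ↦ (hgrad x).symm]
    exact (InnerProductSpace.toDual ℝ (Euc n)).symm.continuous.comp
      (hφ.continuous_fderiv one_ne_zero)
  · rintro ⟨hf, φ, hφ⟩
    have hgrad (x : Euc n) : HasGradientAt φ (f x) x := hasGradientAt_iff_hasFDerivAt.2 (hφ x)
    refine ⟨φ, contDiff_one_iff_fderiv.2 ⟨fun x ↦ (hφ x).differentiableAt, ?_⟩,
      fun x ↦ (hgrad x).gradient⟩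
    rw [funext fun x ↦ (hφ x).fderiv]
    exact (innerSL ℝ).continuous.comp hf

lemma CoerciveGradientHomotopic.properGradientHomotopic_conj {n : ℕ} {f g : V → V}
    (H : CoerciveGradientHomotopic f g) (e : V ≃ₗᵢ[ℝ] Euc n) :
    ProperGradientHomotopic (fun x ↦ e (f (e.symm x))) fun x ↦ e (g (e.symm x)) := by
  obtain ⟨h, hcont, hgrad, hcoer, rfl, rfl⟩ := H
  have hcont' : Continuous fun p : ℝ × Euc n ↦ e (h p.1 (e.symm p.2)) := e.continuous.comp
    (hcont.comp (continuous_fst.prodMk (e.symm.continuous.comp continuous_snd)))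
  refine ⟨fun t x ↦ e (h t (e.symm x)), ⟨hcont'.continuousOn, fun t ht ↦ isGradient_iff.2
    ⟨hcont'.comp (Continuous.prodMk_right t), ?_⟩, fun K hK ↦ ?_⟩, rfl, rfl⟩
  · obtain ⟨φ, hφ⟩ := hgrad t ht
    exact ⟨fun x ↦ φ (e.symm x), fun x ↦ hasFDerivAt_comp_linearIsometryEquiv e.symm (hφ _)⟩
  · obtain ⟨M, hM⟩ := hK.isBounded.exists_norm_le
    obtain ⟨r, -, hr⟩ := hasBasis_cobounded_norm.eventually_iff.1 (hcoer (M + 1))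
    have hcpt := (isCompact_Icc (a := (0 : ℝ)) (b := 1)).prod (isCompact_closedBall (0 : Euc n) r)
    refine hcpt.of_isClosed_subset
      ((isClosed_Icc.preimage continuous_fst).inter (hK.isClosed.preimage hcont')) ?_
    rintro ⟨t, x⟩ ⟨ht, hx⟩
    refine ⟨ht, mem_closedBall_zero_iff.2 (not_lt.1 fun hlt ↦ ?_)⟩
    have hle : M + 1 ≤ ‖h t (e.symm x)‖ :=
      hr (by simpa only [mem_ofPred_eq, e.symm.norm_map] using hlt.le) t ht
    have hge := hM _ hx
    rw [e.norm_map] at hge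
    linarith

lemma CoerciveGradientHomotopic.id_of_eventuallyEq_id {Q : ℂ → ℂ} {ψ : ℂ → ℝ} (hQ : Continuous Q)
    (hid : Q =ᶠ[𝓝 0] id) (hne : ∀ z ≠ 0, Q z ≠ 0)
    (hcoer : Tendsto Q (cobounded ℂ) (cobounded ℂ))
    (hψ : ∀ x, HasFDerivAt ψ (innerSL ℝ (Q x)) x) :
    CoerciveGradientHomotopic (fun x ↦ x) Q := by
  obtain ⟨κ, hκ, hκ0, hQκ, hκ1⟩ := exists_continuous_eq_mul_of_eventuallyEq_id hQ hid hne
  refine ⟨fun t x ↦ x * κ (t • x), by fun_prop, fun t _ ↦ ?_,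
    eventually_le_norm_mul_comp_smul hκ hκ0 hQκ hcoer, ?_, ?_⟩
  · rcases eq_or_ne t 0 with rfl | ht
    · refine ⟨fun x ↦ 2⁻¹ * ‖x‖ ^ 2, fun x ↦ ?_⟩
      refine ((hasStrictFDerivAt_norm_sq x).hasFDerivAt.const_mul _).congr_fderiv ?_
      simp only [zero_smul, hκ1, mul_one]
      module
    · refine ⟨fun x ↦ (t ^ 2)⁻¹ * ψ (t • x), fun x ↦ ?_⟩
      refine (((hψ (t • x)).comp x ((hasFDerivAt_id x).const_smul t)).const_mul _).congr_fderiv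
        (ContinuousLinearMap.ext fun v ↦ ?_)
      change (t ^ 2)⁻¹ * inner ℝ (Q (t • x)) (t • v) = inner ℝ (x * κ (t • x)) v
      rw [hQκ, smul_mul_assoc, real_inner_smul_left, real_inner_smul_right]
      field_simp
  · ext x
    simp only [zero_smul, hκ1, mul_one]
  · ext x
    simp only [one_smul, hQκ]

lemma IsExponentialMap.norm_le_norm_momentum {u : ℂ → ℝ} {g : ℂ → ℂ} {R : ℝ} {E P : ℂ → ℂ}
    {L : ℂ → ℂ →L[ℝ] ℂ} (h : IsExponentialMap u g R E P L) (hu : ∀ x, 0 ≤ u x) (z : ℂ) :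
    ‖E z‖ ≤ ‖P z‖ := calc
  ‖E z‖ ≤ ‖z‖ := h.norm_le z
  _ ≤ Real.exp (u (E z)) * ‖z‖ :=
    le_mul_of_one_le_left (norm_nonneg z) (Real.one_le_exp (hu (E z)))
  _ = ‖P z‖ := (h.norm_momentum z).symm

lemma IsExpandingPotential.exists_radial_gradient {deg : (ℂ → ℂ) → Set ℂ → ℤ} {f : ℂ → ℂ}
    {φ : ℂ → ℝ} {R : ℝ} (hφ : IsExpandingPotential φ f R) (hdeg : IsBrouwerDegree deg)
    (hdeg1 : ∀ᶠ ρ in atTop, deg f (ball 0 ρ) = 1) :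
    ∃ (V : ℂ → ℂ) (ψ : ℂ → ℝ), Continuous V ∧ V =ᶠ[𝓝 0] id ∧ (∀ x, ‖x‖ ≤ ‖V x‖) ∧
      (∀ x, HasFDerivAt ψ (innerSL ℝ (V x)) x) ∧
      ((∀ᶠ x in cobounded ℂ, -0.7 * (‖f x‖ * ‖V x‖) ≤ inner ℝ (f x) (V x)) ∨
        ∀ᶠ x in cobounded ℂ, inner ℝ (f x) (V x) ≤ 0.7 * (‖f x‖ * ‖V x‖)) := by
  obtain ⟨κ, s₀, G, G', G'', hG⟩ := hφ.exists_isAdaptedProfile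
  have hu := hG.isConformalFactor hφ
  obtain ⟨E, P, L, hE⟩ := hu.exists_isExponentialMap (hG.trace_nonneg hφ)
  obtain ⟨S, hS, hES, hSE⟩ := hE.exists_continuous_inverse hu.contDiff.continuous hφ.radius_pos
  obtain ⟨r₁, hgt⟩ := hE.exists_radius_neg_mul_lt_inner hG hφ
  obtain ⟨r₂, hlt⟩ := hE.exists_radius_inner_lt_mul hG hφ
  have hpos {c : ℝ} (hc : 0 ≤ c) : 0.7 * c ≤ c := by linarith
  have hsign := hE.potential_eventually_pos_or_eventually_neg (r := max r₁ r₂) hφ.radius_pos hS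
    hES hSE hdeg hφ.contDiff_grad.continuous hφ.hasFDerivAt
    ((eventually_cobounded_le_norm R).mono fun _ ↦ hφ.ne_zero) hdeg1
    (fun z hz hz' ↦ (hlt z ((le_max_right _ _).trans hz) hz').trans_le (hpos (by positivity)))
    (fun z hz hz' ↦ (neg_le_neg (hpos (by positivity))).trans_lt <| by
      simpa only [neg_mul] using hgt z ((le_max_left _ _).trans hz) hz')
  refine ⟨fun x ↦ P (S x), fun x ↦ ‖S x‖ ^ 2 / 2, hE.continuous_momentum.comp hS, ?_, fun x ↦ ?_,
    hE.hasFDerivAt_half_norm_sq_inverse hS hES, hsign.imp (fun h ↦ ?_) fun h ↦ ?_⟩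
  · filter_upwards [hE.eventuallyEq_id hφ.radius_pos,
      hE.momentum_eventuallyEq_id hφ.radius_pos] with x hEx hPx
    have hSx : S x = x := by simpa only [hEx, id] using hSE x
    rw [hSx, hPx]
  · simpa only [hES x] using hE.norm_le_norm_momentum hu.nonneg (S x)
  · filter_upwards [h, eventually_cobounded_le_norm r₁] with x hx hr
    simpa only [hES x] using (hgt (S x) (by rwa [hES]) (by rw [hES]; exact hx.le)).le
  · filter_upwards [h, eventually_cobounded_le_norm r₂] with x hx hr
    simpa only [hES x] using (hlt (S x) (by rwa [hES]) (by rw [hES]; exact hx.le)).le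

theorem coerciveGradientHomotopic_id_or_neg_of_contDiff {deg : (ℂ → ℂ) → Set ℂ → ℤ} {f : ℂ → ℂ}
    {φ : ℂ → ℝ} (hdeg : IsBrouwerDegree deg) (hφ : ∀ x, HasFDerivAt φ (innerSL ℝ (f x)) x)
    (hf : ContDiff ℝ 1 f) (hfcoer : Tendsto f (cobounded ℂ) (cobounded ℂ))
    (hdeg1 : ∀ᶠ ρ in atTop, deg f (ball 0 ρ) = 1) :
    CoerciveGradientHomotopic f (fun x ↦ x) ∨ CoerciveGradientHomotopic f fun x ↦ -x := by
  obtain ⟨r, -, hr⟩ := hasBasis_cobounded_norm.eventually_iff.1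
    (hfcoer.eventually (eventually_cobounded_le_norm 10))
  have hexp : IsExpandingPotential φ f (max r 1) :=
    ⟨hφ, hf, lt_max_of_lt_right one_pos, fun _ hx ↦ hr ((le_max_left _ _).trans hx)⟩
  obtain ⟨V, ψ, hV, hid, hle, hψ, hinner⟩ := hexp.exists_radial_gradient hdeg hdeg1
  have hVcoer : Tendsto V (cobounded ℂ) (cobounded ℂ) :=
    tendsto_norm_atTop_iff_cobounded.1 (tendsto_atTop_mono hle tendsto_norm_cobounded_atTop)
  have hVid := CoerciveGradientHomotopic.id_of_eventuallyEq_id hV hid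
    (fun z hz ↦ norm_pos_iff.1 ((norm_pos_iff.2 hz).trans_le (hle z))) hVcoer hψ
  refine hinner.imp (fun h ↦ ?_) fun h ↦ ?_
  · exact (CoerciveGradientHomotopic.of_neg_mul_le_inner hf.continuous hV hφ hψ hfcoer hVcoer
      (by norm_num) (by norm_num) h).trans hVid.symm
  · refine (CoerciveGradientHomotopic.of_neg_mul_le_inner (c := 0.7) (g := fun x ↦ -V x)
      (ψ := fun x ↦ -ψ x) hf.continuous hV.neg hφ (fun x ↦ by rw [map_neg]; exact (hψ x).fun_neg)
      hfcoer (tendsto_neg_cobounded.comp hVcoer) (by norm_num) (by norm_num) ?_).trans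
      hVid.symm.neg
    simpa only [norm_neg, inner_neg_right, neg_mul, neg_le_neg_iff] using h

end CoerciveGradientHomotopy

section Smoothing

open MeasureTheory ContinuousLinearMap

variable {V : Type*} [NormedAddCommGroup V]

/-- A cutoff of `φ` that agrees with `φ` where `‖x‖ ^ 2 + 1 ≤ n` and vanishes where
`n ≤ ‖x‖ ^ 2`. -/
def smoothTruncation (φ : V → ℝ) (n : ℕ) (x : V) : ℝ :=
  Real.smoothTransition (n - ‖x‖ ^ 2) * φ x

lemma smoothTruncation_eq_self {φ : V → ℝ} {n : ℕ} {x : V} (h : ‖x‖ ^ 2 + 1 ≤ n) :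
    smoothTruncation φ n x = φ x := by
  rw [smoothTruncation, Real.smoothTransition.one_of_one_le (by linarith), one_mul]

lemma smoothTruncation_eq_zero {φ : V → ℝ} {n : ℕ} {x : V} (h : n ≤ ‖x‖ ^ 2) :
    smoothTruncation φ n x = 0 := by
  rw [smoothTruncation, Real.smoothTransition.zero_of_nonpos (by linarith), zero_mul]

lemma hasCompactSupport_smoothTruncation [ProperSpace V] (φ : V → ℝ) (n : ℕ) :
    HasCompactSupport (smoothTruncation φ n) := by
  refine HasCompactSupport.intro (isCompact_closedBall (0 : V) √n) fun x hx ↦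
    smoothTruncation_eq_zero ?_
  rw [mem_closedBall_zero_iff, not_le] at hx
  exact (Real.sqrt_le_left (norm_nonneg x)).1 hx.le

lemma exists_eventually_smoothTruncation_eq_self (φ : V → ℝ) (x : V) :
    ∃ M : ℕ, ∀ᶠ y in 𝓝 x, ∀ z ∈ ball y 1, ∀ n ≥ M, smoothTruncation φ n z = φ z := by
  obtain ⟨M, hM⟩ := exists_nat_ge ((‖x‖ + 2) ^ 2 + 1)
  refine ⟨M, ?_⟩
  filter_upwards [ball_mem_nhds x one_pos] with y hy z hz n hn
  have hzx : dist z x < 2 := (dist_triangle z y x).trans_lt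
    (by linarith [mem_ball.1 hy, mem_ball.1 hz])
  have hz' : ‖z‖ ≤ ‖x‖ + 2 := by
    linarith [dist_eq_norm z x ▸ hzx, norm_le_norm_add_norm_sub' z x]
  refine smoothTruncation_eq_self ?_
  calc ‖z‖ ^ 2 + (1 : ℝ)
    _ ≤ (‖x‖ + 2) ^ 2 + 1 := by gcongr
    _ ≤ n := hM.trans (by exact_mod_cast hn)

lemma contDiff_smoothTruncation [InnerProductSpace ℝ V] {φ : V → ℝ} {k : ℕ∞}
    (hφ : ContDiff ℝ k φ) (n : ℕ) : ContDiff ℝ k (smoothTruncation φ n) :=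
  (Real.smoothTransition.contDiff.comp (contDiff_const.sub (contDiff_norm_sq ℝ))).mul hφ

variable [InnerProductSpace ℝ V] [FiniteDimensional ℝ V]

lemma exists_contDiff_norm_fderiv_sub_le {p : V → ℝ} (hp : ContDiff ℝ 1 p)
    (hsupp : HasCompactSupport p) {ε : ℝ} (hε : 0 < ε) :
    ∃ q : V → ℝ, ContDiff ℝ 2 q ∧ (∀ x, ‖fderiv ℝ q x - fderiv ℝ p x‖ ≤ ε) ∧
      ∀ x, (∀ y ∈ ball x 1, p y = 0) → q x = 0 := by
  borelize V
  have hcont : Continuous (fderiv ℝ p) := hp.continuous_fderiv one_ne_zero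
  obtain ⟨δ, hδ, hclose⟩ := Metric.uniformContinuous_iff.1
    ((hsupp.fderiv ℝ).uniformContinuous_of_continuous hcont) ε hε
  have hδ1 : 0 < min δ 1 := lt_min hδ one_pos
  let ψ : ContDiffBump (0 : V) := ⟨min δ 1 / 2, min δ 1, half_pos hδ1, half_lt_self hδ1⟩
  refine ⟨convolution (ψ.normed volume) p (lsmul ℝ ℝ) volume,
    ψ.hasCompactSupport_normed.contDiff_convolution_left _ ψ.contDiff_normed
      hp.continuous.locallyIntegrable, fun x ↦ ?_, fun x hx ↦ ?_⟩
  · rw [(hsupp.hasFDerivAt_convolution_right (lsmul ℝ ℝ)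
      ψ.continuous_normed.locallyIntegrable hp x).fderiv, ← dist_eq_norm]
    exact ψ.dist_normed_convolution_le hcont.aestronglyMeasurable fun y hy ↦
      (hclose (hy.trans_le (min_le_left _ _))).le
  · have hxx := hx x (mem_ball_self one_pos)
    have hdist := ψ.dist_normed_convolution_le (μ := volume) (x₀ := x) (ε := 0)
      hp.continuous.aestronglyMeasurable fun y hy ↦ by
        rw [hx y (ball_subset_ball (min_le_right _ _) hy), hxx, dist_self]
    rw [dist_le_zero.1 hdist, hxx]

lemma exists_contDiff_two_norm_fderiv_sub_le {φ : V → ℝ} (hφ : ContDiff ℝ 1 φ) {ε : ℝ}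
    (hε : 0 < ε) : ∃ ψ : V → ℝ, ContDiff ℝ 2 ψ ∧ ∀ x, ‖fderiv ℝ ψ x - fderiv ℝ φ x‖ ≤ ε := by
  set p : ℕ → V → ℝ := fun n x ↦ smoothTruncation φ (n + 1) x - smoothTruncation φ n x with hp
  have hpC (n : ℕ) : ContDiff ℝ 1 (p n) :=
    (contDiff_smoothTruncation hφ (n + 1)).sub (contDiff_smoothTruncation hφ n)
  choose q hqC hqp hq0 using fun n ↦ exists_contDiff_norm_fderiv_sub_le (hpC n)
    ((hasCompactSupport_smoothTruncation φ (n + 1)).sub (hasCompactSupport_smoothTruncation φ n))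
    (ε := ε / 2 / 2 ^ n) (by positivity)
  have hlocal (x : V) : ∃ M, (fun y ↦ ∑' n, q n y) =ᶠ[𝓝 x] (fun y ↦ ∑ n ∈ Finset.range M, q n y) ∧
      φ =ᶠ[𝓝 x] fun y ↦ ∑ n ∈ Finset.range M, p n y := by
    obtain ⟨M, hM⟩ := exists_eventually_smoothTruncation_eq_self φ x
    refine ⟨M, hM.mono fun y hy ↦ tsum_eq_sum fun n hn ↦ hq0 n y fun z hz ↦ ?_,
      hM.mono fun y hy ↦ ?_⟩
    · have hn' : M ≤ n := by simpa using hn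
      simp only [hp, hy z hz n hn', hy z hz (n + 1) (by lia), sub_self]
    · simp only [hp, Finset.sum_range_sub (fun n ↦ smoothTruncation φ n y),
        hy y (mem_ball_self one_pos) M le_rfl,
        smoothTruncation_eq_zero (n := 0) (x := y) (by simp), sub_zero]
  refine ⟨fun y ↦ ∑' n, q n y, contDiff_iff_contDiffAt.2 fun x ↦ ?_, fun x ↦ ?_⟩
  · obtain ⟨M, hM, -⟩ := hlocal x
    exact (ContDiff.sum fun n _ ↦ hqC n).contDiffAt.congr_of_eventuallyEq hM
  · obtain ⟨M, hM, hMφ⟩ := hlocal x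
    rw [hM.fderiv_eq, hMφ.fderiv_eq,
      fderiv_fun_sum fun n _ ↦ (hqC n).differentiable two_ne_zero x,
      fderiv_fun_sum fun n _ ↦ (hpC n).differentiable one_ne_zero x, ← Finset.sum_sub_distrib]
    exact (norm_sum_le_of_le _ fun n _ ↦ hqp n x).trans
      (sum_le_hasSum _ (fun n _ ↦ by positivity) (hasSum_geometric_two' ε))

lemma exists_contDiff_hasFDerivAt_norm_sub_le {φ : V → ℝ} {f : V → V} (hf : Continuous f)
    (hφ : ∀ x, HasFDerivAt φ (innerSL ℝ (f x)) x) {ε : ℝ} (hε : 0 < ε) :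
    ∃ (g : V → V) (ψ : V → ℝ), ContDiff ℝ 1 g ∧ (∀ x, HasFDerivAt ψ (innerSL ℝ (g x)) x) ∧
      ∀ x, ‖f x - g x‖ ≤ ε := by
  have hφ1 : ContDiff ℝ 1 φ := contDiff_one_iff_fderiv.2 ⟨fun x ↦ (hφ x).differentiableAt, by
    rw [funext fun x ↦ (hφ x).fderiv]
    exact (innerSL ℝ).continuous.comp hf⟩
  obtain ⟨ψ, hψ, hψφ⟩ := exists_contDiff_two_norm_fderiv_sub_le hφ1 hε
  set J := InnerProductSpace.toDual ℝ V
  have hJ (x : V) : innerSL ℝ (J.symm (fderiv ℝ ψ x)) = fderiv ℝ ψ x := J.apply_symm_apply _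
  refine ⟨fun x ↦ J.symm (fderiv ℝ ψ x), ψ,
    J.symm.contDiff.comp (hψ.fderiv_right (by norm_num)), fun x ↦ ?_, fun x ↦ ?_⟩
  · rw [hJ]
    exact (hψ.differentiable two_ne_zero x).hasFDerivAt
  · rw [norm_sub_rev, ← innerSL_apply_norm (𝕜 := ℝ), map_sub, hJ, ← (hφ x).fderiv]
    exact hψφ x

end Smoothing

open Bornology (cobounded)

theorem coerciveGradientHomotopic_id_or_neg {deg : (ℂ → ℂ) → Set ℂ → ℤ} {f : ℂ → ℂ} {φ : ℂ → ℝ}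
    (hdeg : IsBrouwerDegree deg) (hf : Continuous f) (hφ : ∀ x, HasFDerivAt φ (innerSL ℝ (f x)) x)
    (hfcoer : Tendsto f (cobounded ℂ) (cobounded ℂ))
    (hdeg1 : ∀ᶠ ρ in atTop, deg f (ball 0 ρ) = 1) :
    CoerciveGradientHomotopic f (fun x ↦ x) ∨ CoerciveGradientHomotopic f fun x ↦ -x := by
  obtain ⟨g, ψ, hg, hψ, hfg⟩ := exists_contDiff_hasFDerivAt_norm_sub_le hf hφ one_pos
  have hhom : CoerciveGradientHomotopic f g :=
    .of_norm_sub_le hf hg.continuous hφ hψ hfcoer hfg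
  have hdegg : ∀ᶠ ρ in atTop, deg g (ball 0 ρ) = 1 := by
    filter_upwards [hhom.eventually_deg_ball_eq hdeg, hdeg1] with ρ hρ hρ1
    exact hρ.symm.trans hρ1
  exact (coerciveGradientHomotopic_id_or_neg_of_contDiff hdeg hψ hg
    (tendsto_cobounded_of_norm_sub_le hfcoer hfg) hdegg).imp hhom.trans hhom.trans

section Transport

open Bornology (cobounded)

lemma IsProper.tendsto_cobounded {n : ℕ} {f : Euc n → Euc n} (hf : IsProper f) :
    Tendsto f (cobounded (Euc n)) (cobounded (Euc n)) := by
  rw [Metric.cobounded_eq_cocompact]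
  exact hasBasis_cocompact.tendsto_right_iff.2 fun K hK ↦ (hf K hK).compl_mem_cocompact

lemma HasDeg.eventually_deg_ball_eq {n : ℕ} {D : DegreeTheory n} {f : Euc n → Euc n} {k : ℤ}
    (hdeg : HasDeg D f k) (hf : IsProper f) :
    ∀ᶠ ρ in atTop, D.deg f (ball 0 ρ) = k := by
  obtain ⟨r, hr⟩ := (hf {0} isCompact_singleton).isBounded.subset_ball 0
  filter_upwards [eventually_ge_atTop r, eventually_gt_atTop 0] with ρ hρ hρ0
  exact hdeg ρ hρ0 (hr.trans (ball_subset_ball hρ))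

end Transport

/-- every proper gradient map `f : ℝ² → ℝ²` of Brouwer degree `1` is proper
gradient homotopic to the identity or to the minus identity; hence the set of proper
gradient homotopy classes of degree `1` has at most two elements. -/
theorem proper_gradient_deg_one_id_or_neg_id (D : DegreeTheory 2) (f : Euc 2 → Euc 2)
    (hgrad : IsGradient f) (hprop : IsProper f) (hdeg : HasDeg D f 1) :
    ProperGradientHomotopic f (id : Euc 2 → Euc 2) ∨
      ProperGradientHomotopic f (fun x : Euc 2 => -x) := by
  obtain ⟨hf, φ, hφ⟩ := isGradient_iff.1 hgrad
  set e := Complex.orthonormalBasisOneI.repr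
  have hdeg1 : ∀ᶠ ρ in atTop,
      D.deg (fun x ↦ e (e.symm (f (e (e.symm x))))) (e '' ball 0 ρ) = 1 := by
    simpa only [LinearIsometryEquiv.apply_symm_apply, LinearIsometryEquiv.image_ball, map_zero]
      using hdeg.eventually_deg_ball_eq hprop
  have hhom := coerciveGradientHomotopic_id_or_neg (f := fun x ↦ e.symm (f (e x)))
    (D.isBrouwerDegree.conj e) (by fun_prop)
    (fun x ↦ hasFDerivAt_comp_linearIsometryEquiv e (hφ (e x)))
    (e.symm.antilipschitz.tendsto_cobounded.comp hprop.tendsto_cobounded |>.comp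
      e.antilipschitz.tendsto_cobounded) hdeg1
  refine hhom.imp (fun h ↦ ?_) fun h ↦ ?_ <;>
    simpa [Function.id_def] using h.properGradientHomotopic_conj e
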